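/- Suppose f is non-degenerate over ℝ and τ₀ is unstable with respect to some variable x_j. Then there is an open neighbourhood U of 0 in ℝⁿ such that for every C^∞ function φ : ℝⁿ → ℝ with compact support contained in U, the oscillating integral I(t) = ∫_{ℝⁿ} e^{i t f(x)} φ(x) dx satisfies I(t) = o(t^{s₀} (log t)^{ρ−1}) as t → +∞. -/

import Mathlib

/-!
Let `B` be the finite set of minimal exponents of `f` and `M(x) = ∑_{β ∈ B} |x^β|` (`MB`), which
bounds `f` and all its logarithmic derivatives near `0`.

If `f` is non-degenerate, the logarithmic gradient `(x_l ∂_l f)_l` has size comparable to `M`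
(`gradient_lower`, by passing to a limit of normalised monomials, `toric_limit`).  Integration by
parts along the fields `x_l ∂_l` would therefore bound the oscillating integral by
`∫ (1 + t M)^{-N}` for every `N`, and in the coordinates `-log |x|` this is seen to be
`O(t^{-1/t₀} (log t)^{ρ-1})` (`volume_main`): up to exponentially decaying weights, one integrates
over a set of dimension `ρ - 1` and size `log t`, since the gap `t₀ |y| - min_B ⟨y, β⟩` controls
the directions of the affine span of `τ₀`.

To gain over this bound, the field `x_j ∂_j` is replaced by `rr ∂_j`, where `rr` is a smooth
version of `max(|x_j|, rad)` and `rad` is independent of `x_j`.  At the scale `rad` the generators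
with `β_j ≥ 2` are dominated by those with `β_j = 1`, and `t` times the latter is of the order
`lam`, a large parameter.  The sum of the terms with `β_j = 1` is the part of `f` linear in `x_j`;
since the face polynomials in `{y_j = 1}` have no zeros, there is no cancellation in it
(`linear_lower`), so that `rr ∂_j f` is large wherever replacing `x_j` by `rr` makes `M`
substantially larger (`combined_lower`).  Integration by parts along the new frame
(`nonstationary`, `phase_bound`) then bounds the integral by `∫ (1 + t M(xh))^{-N}`, where `xh` is
`x` with `x_j` replaced by `rr`.

Now `t M(xh)` is at least a multiple of `lam`, which makes the previous bound smaller by a factor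
tending to `0` as `lam → ∞`, except on a set of points where `t M ≤ lam`, although at the scale of
`x_j` at which the linear part reaches `lam / t` either `x_j` is not small or some term with
`β_j ≥ 2` has `t |x^β|` bounded below.  Dilating `x_j` by powers of two moves such points to
`BadSet` (`exists_dilate`), and the dilations cost only a geometric series of volumes.  In `BadSet`
one more functional is bounded in logarithmic coordinates, one that is not controlled by the face
`τ₀`, because `τ₀` lies in `{0 ≤ y_j ≤ 1}` (`geo_of`).  This gains a factor `1 / log t`
(`volume_bad`).  Letting first `t → ∞` and then `lam → ∞` gives the theorem.
-/

open MeasureTheory Filter Topology Complex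

noncomputable section
open scoped Classical

/-- Inner product `⟨a, y⟩ = ∑ i, a i * y i` on `Fin n → ℝ`. -/
def dotR {n : ℕ} (a y : Fin n → ℝ) : ℝ := ∑ i, a i * y i

/-- The Newton polyhedron of a support set `S ⊆ ℕⁿ`: the convex hull of `S + [0,∞)ⁿ`. -/
def newtonPolyhedron {n : ℕ} (S : Set (Fin n → ℕ)) : Set (Fin n → ℝ) :=
  convexHull ℝ {x : Fin n → ℝ | ∃ α ∈ S, ∀ i, (α i : ℝ) ≤ x i}

/-- The face of `Γ` cut out by a nonnegative linear functional `u`: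
the set of minimizers of `⟨u, ·⟩` on `Γ`. -/
def traceFace {n : ℕ} (Γ : Set (Fin n → ℝ)) (u : Fin n → ℝ) : Set (Fin n → ℝ) :=
  {y ∈ Γ | ∀ z ∈ Γ, dotR u y ≤ dotR u z}

/-- `τ` is a face of `Γ`: the set of minimizers of some nonnegative linear functional. -/
def IsFaceOf {n : ℕ} (Γ τ : Set (Fin n → ℝ)) : Prop :=
  ∃ u : Fin n → ℝ, (∀ i, 0 ≤ u i) ∧ τ = traceFace Γ u

/-- The dimension of (the affine span of) a subset of `ℝⁿ`. -/
def faceDim {n : ℕ} (τ : Set (Fin n → ℝ)) : ℕ := Module.finrank ℝ (vectorSpan ℝ τ)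

/-- Given Taylor coefficients `a : ℕⁿ → ℝ` and a region `γ ⊆ ℝⁿ`, the polynomial
`f_γ(x) = ∑_{α ∈ γ ∩ ℕⁿ} a_α x^α`. -/
def facePoly {n : ℕ} (a : (Fin n → ℕ) → ℝ) (γ : Set (Fin n → ℝ)) (x : Fin n → ℝ) : ℝ :=
  ∑' α : Fin n → ℕ, if (fun i => (α i : ℝ)) ∈ γ then a α * ∏ i, x i ^ α i else 0

/-- `f` (with Taylor coefficients `a` and Newton polyhedron `Γ`) is non-degenerate over ℝ:
for every compact face `γ` of `Γ`, the polynomial `f_γ` has no critical point in `(ℝ∖{0})ⁿ`. -/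
def NonDegenerateR {n : ℕ} (a : (Fin n → ℕ) → ℝ) (Γ : Set (Fin n → ℝ)) : Prop :=
  ∀ γ : Set (Fin n → ℝ), IsFaceOf Γ γ → IsCompact γ →
    ∀ x : Fin n → ℝ, (∀ i, x i ≠ 0) → fderiv ℝ (facePoly a γ) x ≠ 0

/-- The positive open orthant `(0,∞)^m`. -/
def posOrthant (m : ℕ) : Set (Fin m → ℝ) := {y | ∀ i, 0 < y i}

/-- `pad ρ y = (1,…,1,y_{ρ+1},…,y_n)`: the first `ρ` coordinates are `1`,
the remaining ones come from `y`. -/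
def padR {n : ℕ} (ρ : ℕ) (y : Fin (n - ρ) → ℝ) : Fin n → ℝ :=
  fun i => if h : (i : ℕ) < ρ then 1 else y ⟨(i : ℕ) - ρ, by have := i.isLt; omega⟩

/-- `pPow u s = u^s` for `u > 0`, and `0` otherwise (so in particular `0^s = 0`). -/
def pPow (u s : ℝ) : ℝ := if 0 < u then u ^ s else 0

/-- `G` is a meromorphic continuation of `Z` (defined for `Re s > 0`) to a connected open
set containing the half-plane `{Re s > 0}` and the point `s₀`. -/
def IsMeroCont (Z : ℂ → ℂ) (s₀ : ℂ) (G : ℂ → ℂ) : Prop :=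
  ∃ U : Set ℂ, IsOpen U ∧ IsConnected U ∧ ({s : ℂ | 0 < s.re} ∪ {s₀}) ⊆ U ∧
    MeromorphicOn G U ∧ ∀ s : ℂ, 0 < s.re → G s = Z s

/-- The positive part `max (σ • f) 0`; for `σ = 1` this is `f₊`, for `σ = -1` it is `f₋`. -/
def sgnPart (σ : ℝ) (u : ℝ) : ℝ := max (σ * u) 0

/-! ### Geometry of the Newton polyhedron -/

section
/-- Farkas' lemma: a linear functional which is nonnegative wherever all `a i` are is a
nonnegative combination of them. -/
theorem farkas_dual {V ι : Type*} [AddCommGroup V] [Module ℝ V] (s : Finset ι) :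
    ∀ (a : ι → V →ₗ[ℝ] ℝ) (b : V →ₗ[ℝ] ℝ), (∀ x, (∀ i ∈ s, 0 ≤ a i x) → 0 ≤ b x) →
      ∃ c : ι → ℝ, (∀ i, 0 ≤ c i) ∧ b = ∑ i ∈ s, c i • a i := by
  induction s using Finset.induction_on with
  | empty =>
    intro a b h
    refine ⟨0, fun _ => le_rfl, ?_⟩
    ext x
    have h1 := h x (by simp)
    have h2 := h (-x) (by simp)
    simp only [map_neg] at h2
    simp; linarith
  | insert i s his ih =>
    intro a b h
    by_cases hA : ∀ x, (∀ j ∈ s, 0 ≤ a j x) → 0 ≤ b x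
    · obtain ⟨c, hc, hb⟩ := ih a b hA
      refine ⟨fun j => if j = i then 0 else c j, fun j => by dsimp only; split_ifs <;> simp [hc], ?_⟩
      rw [Finset.sum_insert his, hb]
      simp only [if_true, zero_smul, zero_add]
      refine Finset.sum_congr rfl fun j hj => ?_
      rw [if_neg (by rintro rfl; exact his hj)]
    · push Not at hA
      obtain ⟨x₁, hx₁, hbx₁⟩ := hA
      have hai : a i x₁ < 0 := by
        by_contra hcon
        push Not at hcon
        have := h x₁ (by
          intro j hj
          rcases Finset.mem_insert.1 hj with rfl | hj
          · exact hcon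
          · exact hx₁ j hj)
        linarith
      set x₀ : V := (-(a i x₁))⁻¹ • x₁ with hx₀
      have hpos : 0 < (-(a i x₁))⁻¹ := inv_pos.2 (by linarith)
      have h0i : a i x₀ = -1 := by
        simp only [hx₀, map_smul, smul_eq_mul]
        rw [neg_inv.symm, neg_mul, inv_mul_cancel₀ hai.ne]
      have h0j : ∀ j ∈ s, 0 ≤ a j x₀ := fun j hj => by
        simp only [hx₀, map_smul, smul_eq_mul]
        exact mul_nonneg hpos.le (hx₁ j hj)
      have h0b : b x₀ < 0 := by
        simp only [hx₀, map_smul, smul_eq_mul]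
        exact mul_neg_of_pos_of_neg hpos hbx₁
      obtain ⟨c, hc, hb⟩ := ih (fun j => a j + (a j x₀) • a i) (b + (b x₀) • a i) (by
        intro x hx
        have := h (x + (a i x) • x₀) (by
          intro j hj
          rcases Finset.mem_insert.1 hj with rfl | hj
          · simp [h0i]
          · have := hx j hj
            simp only [LinearMap.add_apply, LinearMap.smul_apply, smul_eq_mul] at this
            simp only [map_add, map_smul, smul_eq_mul]
            linarith)
        simp only [map_add, map_smul, smul_eq_mul] at this
        simp only [LinearMap.add_apply, LinearMap.smul_apply, smul_eq_mul]
        linarith)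
      refine ⟨fun j => if j = i then (∑ j ∈ s, c j * a j x₀) - b x₀ else c j, ?_, ?_⟩
      · intro j
        dsimp only
        split_ifs
        · have : 0 ≤ ∑ j ∈ s, c j * a j x₀ :=
            Finset.sum_nonneg fun j hj => mul_nonneg (hc j) (h0j j hj)
          linarith
        · exact hc j
      · rw [Finset.sum_insert his]
        simp only [if_true]
        have h1 : ∑ x ∈ s, (if x = i then (∑ j ∈ s, c j * a j x₀) - b x₀ else c x) • a x
            = ∑ x ∈ s, c x • a x :=
          Finset.sum_congr rfl fun j hj => by rw [if_neg (by rintro rfl; exact his hj)]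
        rw [h1]
        have h2 : b = ∑ j ∈ s, c j • (a j + (a j x₀) • a i) - (b x₀) • a i :=
          eq_sub_of_add_eq hb
        ext x
        have h3 := congrArg (fun l : V →ₗ[ℝ] ℝ => l x) h2
        simp only [LinearMap.sub_apply, LinearMap.add_apply, LinearMap.smul_apply,
          LinearMap.sum_apply, smul_eq_mul, mul_add, Finset.sum_add_distrib] at h3 ⊢
        rw [h3, sub_mul, Finset.sum_mul]
        simp only [mul_assoc]
        ring

variable {n : ℕ}

lemma dotR_add_right (u y z : Fin n → ℝ) : dotR u (y + z) = dotR u y + dotR u z := by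
  simp [dotR, mul_add, Finset.sum_add_distrib]

lemma dotR_sub_right (u y z : Fin n → ℝ) : dotR u (y - z) = dotR u y - dotR u z := by
  simp [dotR, mul_sub, Finset.sum_sub_distrib]

lemma dotR_smul_right (u : Fin n → ℝ) (c : ℝ) (y : Fin n → ℝ) :
    dotR u (c • y) = c * dotR u y := by
  simp only [dotR, Finset.mul_sum, Pi.smul_apply, smul_eq_mul]
  exact Finset.sum_congr rfl fun i _ => by ring

lemma dotR_comm (u y : Fin n → ℝ) : dotR u y = dotR y u := by
  simp [dotR, mul_comm]

lemma dotR_add_left (u y z : Fin n → ℝ) : dotR (y + z) u = dotR y u + dotR z u := by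
  simp [dotR, add_mul, Finset.sum_add_distrib]

lemma dotR_smul_left (u : Fin n → ℝ) (c : ℝ) (y : Fin n → ℝ) :
    dotR (c • y) u = c * dotR y u := by
  rw [dotR_comm, dotR_smul_right, dotR_comm]

lemma dotR_sum_right {ι : Type*} (s : Finset ι) (u : Fin n → ℝ) (v : ι → Fin n → ℝ) :
    dotR u (∑ i ∈ s, v i) = ∑ i ∈ s, dotR u (v i) := by
  simp only [dotR, Finset.sum_apply, Finset.mul_sum]
  exact Finset.sum_comm

lemma dotR_single (u : Fin n → ℝ) (i : Fin n) (c : ℝ) : dotR u (Pi.single i c) = u i * c := by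
  simp [dotR, Pi.single_apply]

lemma dotR_const (u : Fin n → ℝ) (c : ℝ) : dotR u (fun _ => c) = (∑ i, u i) * c := by
  simp [dotR, Finset.sum_mul]

lemma dotR_mono_right {u y z : Fin n → ℝ} (hu : ∀ i, 0 ≤ u i) (h : ∀ i, y i ≤ z i) :
    dotR u y ≤ dotR u z :=
  Finset.sum_le_sum fun i _ => mul_le_mul_of_nonneg_left (h i) (hu i)

/-- The functional `u ↦ ⟨u, y⟩`. -/
def dotL (y : Fin n → ℝ) : (Fin n → ℝ) →ₗ[ℝ] ℝ where
  toFun u := dotR u y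
  map_add' _ _ := dotR_add_left _ _ _
  map_smul' _ _ := dotR_smul_left _ _ _

/-- Farkas' lemma for vectors of `ℝⁿ`. -/
theorem farkas_dot {ι : Type*} (s : Finset ι) (v : ι → Fin n → ℝ) (b : Fin n → ℝ)
    (h : ∀ u : Fin n → ℝ, (∀ i ∈ s, 0 ≤ dotR u (v i)) → 0 ≤ dotR u b) :
    ∃ c : ι → ℝ, (∀ i, 0 ≤ c i) ∧ ∀ u, dotR u b = ∑ i ∈ s, c i * dotR u (v i) := by
  obtain ⟨c, hc, hb⟩ := farkas_dual s (fun i => dotL (v i)) (dotL b) h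
  refine ⟨c, hc, fun u => ?_⟩
  have := congrArg (fun l => l u) hb
  simpa [dotL] using this

/-- The exponent `α ∈ ℕⁿ` as a point of `ℝⁿ`. -/
def cv (α : Fin n → ℕ) : Fin n → ℝ := fun i => α i

/-- Dickson's lemma: a subset of `ℕⁿ` has finitely many minimal elements, and every element lies
above one of them. -/
theorem exists_finset_minimal (S : Set (Fin n → ℕ)) :
    ∃ B : Finset (Fin n → ℕ), (∀ β ∈ B, β ∈ S) ∧ (∀ α ∈ S, ∃ β ∈ B, β ≤ α) ∧
      ∀ β ∈ B, ∀ α ∈ S, α ≤ β → α = β := by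
  have hanti : IsAntichain (· ≤ ·) {β | Minimal (· ∈ S) β} := by
    intro x hx y hy hxy hle
    exact hxy (le_antisymm hle (hy.2 hx.1 hle))
  have hfin : {β | Minimal (· ∈ S) β}.Finite :=
    WellQuasiOrderedLE.finite_of_isAntichain hanti
  refine ⟨hfin.toFinset, ?_, ?_, ?_⟩
  · intro β hβ
    exact ((Set.Finite.mem_toFinset _).1 hβ).1
  · intro α hα
    obtain ⟨β, hle, hmin⟩ := exists_minimal_le_of_wellFoundedLT (· ∈ S) α hα
    exact ⟨β, (Set.Finite.mem_toFinset _).2 hmin, hle⟩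
  · intro β hβ α hα hle
    exact le_antisymm hle (((Set.Finite.mem_toFinset _).1 hβ).2 hα hle)

/-- `B` is the finite set of minimal elements of `S ⊆ ℕⁿ`. -/
structure IsMinGen (S : Set (Fin n → ℕ)) (B : Finset (Fin n → ℕ)) : Prop where
  mem : ∀ β ∈ B, β ∈ S
  le : ∀ α ∈ S, ∃ β ∈ B, β ≤ α
  eq : ∀ β ∈ B, ∀ α ∈ S, α ≤ β → α = β

lemma mem_newton {S : Set (Fin n → ℕ)} {α : Fin n → ℕ} (hα : α ∈ S) {y : Fin n → ℝ}
    (h : ∀ i, (α i : ℝ) ≤ y i) : y ∈ newtonPolyhedron S :=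
  subset_convexHull ℝ _ ⟨α, hα, h⟩

lemma newton_induction {S : Set (Fin n → ℕ)} {C : Set (Fin n → ℝ)} (hC : Convex ℝ C)
    (h : ∀ α ∈ S, ∀ x : Fin n → ℝ, (∀ i, (α i : ℝ) ≤ x i) → x ∈ C) {y : Fin n → ℝ}
    (hy : y ∈ newtonPolyhedron S) : y ∈ C :=
  convexHull_min (by rintro x ⟨α, hα, hx⟩; exact h α hα x hx) hC hy

lemma newton_upward {S : Set (Fin n → ℕ)} {y z : Fin n → ℝ}
    (hy : y ∈ newtonPolyhedron S) (h : ∀ i, y i ≤ z i) : z ∈ newtonPolyhedron S := by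
  obtain ⟨d, hz⟩ : ∃ d, d = z - y := ⟨_, rfl⟩
  have : y ∈ {y : Fin n → ℝ | y + d ∈ newtonPolyhedron S} := by
    have hd : ∀ i, 0 ≤ d i := fun i => by simp [hz, h i]
    clear hz
    refine newton_induction ?_ ?_ hy
    · intro p hp q hq s t hs ht hst
      have := (convex_convexHull ℝ {x : Fin n → ℝ | ∃ α ∈ S, ∀ i, (α i : ℝ) ≤ x i}) hp hq hs ht hst
      have e : s • p + t • q + d = s • (p + d) + t • (q + d) := by
        have : d = (s + t) • d := by rw [hst, one_smul]
        conv_lhs => rw [this]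
        module
      show s • p + t • q + d ∈ newtonPolyhedron S
      rw [e]; exact this
    · intro α hα x hx
      exact mem_newton hα fun i => by
        have := hx i; have := hd i; simp only [Pi.add_apply]; linarith
  simpa [hz] using this

lemma convex_le_dotR (u : Fin n → ℝ) (c : ℝ) : Convex ℝ {y : Fin n → ℝ | c ≤ dotR u y} := by
  intro p hp q hq s t hs ht hst
  simp only [Set.mem_ofPred_eq, dotR_add_right, dotR_smul_right] at *
  have : c = s * c + t * c := by rw [← add_mul, hst, one_mul]
  nlinarith [mul_le_mul_of_nonneg_left hp hs, mul_le_mul_of_nonneg_left hq ht]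

lemma newton_lower {S : Set (Fin n → ℕ)} {B : Finset (Fin n → ℕ)} (hB : IsMinGen S B)
    {u : Fin n → ℝ} (hu : ∀ i, 0 ≤ u i) {c : ℝ} (h : ∀ β ∈ B, c ≤ dotR u (cv β))
    {y : Fin n → ℝ} (hy : y ∈ newtonPolyhedron S) : c ≤ dotR u y := by
  refine newton_induction (convex_le_dotR u c) (fun α hα x hx => ?_) hy
  obtain ⟨β, hβ, hle⟩ := hB.le α hα
  refine (h β hβ).trans (dotR_mono_right hu fun i => ?_)
  exact (Nat.cast_le.2 (hle i)).trans (hx i)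

/-- For `u > 0` the face cut out by `u` lies in the convex hull of the minimising generators. -/
lemma traceFace_subset_hull {S : Set (Fin n → ℕ)} {B : Finset (Fin n → ℕ)} (hB : IsMinGen S B)
    {u : Fin n → ℝ} (hu : ∀ i, 0 < u i) {F : Finset (Fin n → ℕ)} {c : ℝ}
    (hF : ∀ β ∈ F, dotR u (cv β) = c) (hFB : F ⊆ B) (hF0 : F.Nonempty)
    (hFc : ∀ β ∈ B, β ∉ F → c < dotR u (cv β)) :
    traceFace (newtonPolyhedron S) u = convexHull ℝ (cv '' (F : Set (Fin n → ℕ))) := by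
  have hle : ∀ y ∈ newtonPolyhedron S, c ≤ dotR u y := fun y hy =>
    newton_lower hB (fun i => (hu i).le) (fun β hβ => by
      by_cases h : β ∈ F
      · exact (hF β h).ge
      · exact (hFc β hβ h).le) hy
  have hconvEq : ∀ y ∈ convexHull ℝ (cv '' (F : Set (Fin n → ℕ))), dotR u y = c := by
    intro y hy
    have : convexHull ℝ (cv '' (F : Set (Fin n → ℕ))) ⊆ {y | dotR u y = c} := by
      refine convexHull_min ?_ ?_
      · rintro _ ⟨β, hβ, rfl⟩; exact hF β hβ
      · intro p hp q hq s t hs ht hst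
        simp only [Set.mem_ofPred_eq, dotR_add_right, dotR_smul_right] at *
        rw [hp, hq, ← add_mul, hst, one_mul]
    exact this hy
  have hconvMem : convexHull ℝ (cv '' (F : Set (Fin n → ℕ))) ⊆ newtonPolyhedron S := by
    refine convexHull_mono ?_
    rintro _ ⟨β, hβ, rfl⟩
    exact ⟨β, hB.mem β (hFB hβ), fun i => le_rfl⟩
  have key : ∀ y ∈ newtonPolyhedron S,
      y ∈ {y | y ∈ convexHull ℝ (cv '' (F : Set (Fin n → ℕ))) ∨ c < dotR u y} := by
    intro y hy
    refine newton_induction ?_ ?_ hy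
    · intro p hp q hq s t hs ht hst
      rcases hs.eq_or_lt with rfl | hs
      · have : t = 1 := by linarith
        subst this; simpa using hq
      rcases ht.eq_or_lt with rfl | ht
      · have : s = 1 := by linarith
        subst this; simpa using hp
      have hc : c = s * c + t * c := by rw [← add_mul, hst, one_mul]
      have hp' : c ≤ dotR u p := by
        rcases hp with hp | hp
        · exact (hconvEq p hp).ge
        · exact hp.le
      have hq' : c ≤ dotR u q := by
        rcases hq with hq | hq
        · exact (hconvEq q hq).ge
        · exact hq.le
      simp only [Set.mem_ofPred_eq, dotR_add_right, dotR_smul_right]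
      rcases hp with hp | hp
      · rcases hq with hq | hq
        · exact Or.inl (convex_convexHull ℝ _ hp hq hs.le ht.le hst)
        · right
          nlinarith [mul_le_mul_of_nonneg_left hp' hs.le, mul_lt_mul_of_pos_left hq ht]
      · right
        nlinarith [mul_lt_mul_of_pos_left hp hs, mul_le_mul_of_nonneg_left hq' ht.le]
    · intro α hα x hx
      obtain ⟨β, hβ, hβα⟩ := hB.le α hα
      have hβx : ∀ i, cv β i ≤ x i := fun i => (Nat.cast_le.2 (hβα i)).trans (hx i)
      by_cases hxe : x = cv β
      · subst hxe
        by_cases h : β ∈ F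
        · exact Or.inl (subset_convexHull ℝ _ ⟨β, h, rfl⟩)
        · exact Or.inr (hFc β hβ h)
      · right
        obtain ⟨i, hi⟩ : ∃ i, x i ≠ cv β i := by
          by_contra hcon; push Not at hcon; exact hxe (funext hcon)
        have h1 : dotR u (cv β) < dotR u x :=
          Finset.sum_lt_sum (fun k _ => mul_le_mul_of_nonneg_left (hβx k) (hu k).le)
            ⟨i, Finset.mem_univ _, mul_lt_mul_of_pos_left (lt_of_le_of_ne (hβx i) hi.symm) (hu i)⟩
        have h2 : c ≤ dotR u (cv β) := hle _ (mem_newton (hB.mem β hβ) fun i => le_rfl)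
        linarith
  ext y
  constructor
  · rintro ⟨hy, hmin⟩
    rcases key y hy with h | h
    · exact h
    · obtain ⟨β, hβ⟩ := hF0
      have := hmin (cv β) (mem_newton (hB.mem β (hFB hβ)) fun i => le_rfl)
      rw [hF β hβ] at this
      linarith
  · intro hy
    refine ⟨hconvMem hy, fun z hz => ?_⟩
    rw [hconvEq y hy]
    exact hle z hz

lemma compact_traceFace {S : Set (Fin n → ℕ)} {B : Finset (Fin n → ℕ)} (hB : IsMinGen S B)
    {u : Fin n → ℝ} (hu : ∀ i, 0 < u i) {F : Finset (Fin n → ℕ)} {c : ℝ}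
    (hF : ∀ β ∈ F, dotR u (cv β) = c) (hFB : F ⊆ B) (hF0 : F.Nonempty)
    (hFc : ∀ β ∈ B, β ∉ F → c < dotR u (cv β)) :
    IsCompact (traceFace (newtonPolyhedron S) u) := by
  rw [traceFace_subset_hull hB hu hF hFB hF0 hFc]
  exact (F.finite_toSet.image cv).isCompact_convexHull ℝ

/-- The monomial `x^e`. -/
def mono (e : Fin n → ℕ) (x : Fin n → ℝ) : ℝ := ∏ i, x i ^ e i

/-- For `u > 0` the face polynomial is the sum over the minimising generators. -/
lemma facePoly_traceFace {a : (Fin n → ℕ) → ℝ} {B : Finset (Fin n → ℕ)}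
    (hB : IsMinGen {α | a α ≠ 0} B)
    {u : Fin n → ℝ} (hu : ∀ i, 0 < u i) {F : Finset (Fin n → ℕ)} {c : ℝ}
    (hF : ∀ β ∈ F, dotR u (cv β) = c) (hFB : F ⊆ B) (hF0 : F.Nonempty)
    (hFc : ∀ β ∈ B, β ∉ F → c < dotR u (cv β)) (x : Fin n → ℝ) :
    facePoly a (traceFace (newtonPolyhedron {α | a α ≠ 0}) u) x = ∑ β ∈ F, a β * mono β x := by
  have hle : ∀ y ∈ newtonPolyhedron {α | a α ≠ 0}, c ≤ dotR u y := fun y hy =>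
    newton_lower hB (fun i => (hu i).le) (fun β hβ => by
      by_cases h : β ∈ F
      · exact (hF β h).ge
      · exact (hFc β hβ h).le) hy
  have hmem : ∀ α : Fin n → ℕ, a α ≠ 0 →
      ((fun i => (α i : ℝ)) ∈ traceFace (newtonPolyhedron {α | a α ≠ 0}) u ↔ α ∈ F) := by
    intro α hα
    constructor
    · rintro ⟨-, hmin⟩
      have h1 : dotR u (cv α) ≤ c := by
        obtain ⟨β, hβ⟩ := hF0
        have := hmin (cv β) (mem_newton (hB.mem β (hFB hβ)) fun i => le_rfl)
        rwa [hF β hβ] at this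
      obtain ⟨β, hβ, hβα⟩ := hB.le α hα
      have h2 : c ≤ dotR u (cv β) := hle _ (mem_newton (hB.mem β hβ) fun i => le_rfl)
      have hcle : ∀ i, cv β i ≤ cv α i := fun i => Nat.cast_le.2 (hβα i)
      have h3 : β = α := by
        by_contra hne
        obtain ⟨i, hi⟩ : ∃ i, β i ≠ α i := by
          by_contra hcon; push Not at hcon; exact hne (funext hcon)
        have hi' : cv β i < cv α i := Nat.cast_lt.2 (lt_of_le_of_ne (hβα i) hi)
        have h1 : dotR u (cv β) < dotR u (cv α) :=
          Finset.sum_lt_sum (fun k _ => mul_le_mul_of_nonneg_left (hcle k) (hu k).le)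
            ⟨i, Finset.mem_univ _, mul_lt_mul_of_pos_left hi' (hu i)⟩
        linarith
      subst h3
      by_contra h
      have := hFc β hβ h
      linarith
    · intro h
      refine ⟨mem_newton hα fun i => le_rfl, fun z hz => ?_⟩
      have := hF α h
      have h2 := hle z hz
      exact (this.le.trans h2)
  unfold facePoly
  rw [tsum_eq_sum (s := F)]
  · refine Finset.sum_congr rfl fun β hβ => ?_
    rw [if_pos ((hmem β (hB.mem β (hFB hβ))).2 hβ)]
    rfl
  · intro α hα
    by_cases h : a α = 0
    · simp [h]
    · rw [if_neg (fun h' => hα ((hmem α h).1 h'))]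

end

section
variable {n : ℕ}

/-- The combinatorial data of the Newton polyhedron used by the analysis, where `V` is the
direction of the affine span of `τ₀`.  The fields `low` and `ctrl` say that the gap
`t₀ |k| - min_{β ∈ B} ⟨k, β⟩` is nonnegative on the orthant and dominates every functional
`⟨·, w⟩`, `w ∈ V`: the point `(t₀,…,t₀)` lies in the relative interior of `τ₀`.  The vector `u₀`
cuts out a face containing `τ₀`; since `τ₀` lies in `{0 ≤ y_j ≤ 1}`, its `j`-th entry is positive,
and generators with `β_j ≥ 2` lie strictly above that face. -/
structure Geo (n ρ : ℕ) (j : Fin n) (t₀ : ℝ) (B : Finset (Fin n → ℕ))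
    (V : Submodule ℝ (Fin n → ℝ)) (u₀ : Fin n → ℝ) : Prop where
  t₀pos : 0 < t₀
  rank : Module.finrank ℝ V + ρ = n
  one_not_mem : (fun _ => (1 : ℝ)) ∉ V
  ctrl : ∀ w ∈ V, ∃ C : ℝ, 0 ≤ C ∧ ∀ k : Fin n → ℝ, (∀ i, 0 ≤ k i) → ∀ m : ℝ,
    (∀ β ∈ B, m ≤ dotR k (cv β)) → |dotR k w| ≤ C * (t₀ * ∑ i, k i - m)
  low : ∀ k : Fin n → ℝ, (∀ i, 0 ≤ k i) → ∀ m : ℝ,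
    (∀ β ∈ B, m ≤ dotR k (cv β)) → m ≤ t₀ * ∑ i, k i
  u₀_nonneg : ∀ i, 0 ≤ u₀ i
  u₀_j : 0 < u₀ j
  u₀_perp : ∀ w ∈ V, dotR u₀ w = 0
  u₀_two : ∀ β ∈ B, 2 ≤ β j → 0 < dotR u₀ (cv β - fun _ => t₀)
  exists_one : ∃ β ∈ B, β j = 1

/-- The hypothesis `τ₀ ⊆ {0 ≤ y_j ≤ 1}` yields the data `Geo`. -/
theorem geo_of {ρ : ℕ} {S : Set (Fin n → ℕ)} {B : Finset (Fin n → ℕ)} (hB : IsMinGen S B)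
    {t₀ : ℝ} (ht₀pos : 0 < t₀) (ht₀mem : (fun _ => t₀) ∈ newtonPolyhedron S)
    (τ₀ : Set (Fin n → ℝ)) (hτface : IsFaceOf (newtonPolyhedron S) τ₀)
    (hτmem : (fun _ => t₀) ∈ τ₀)
    (hτmin : ∀ τ : Set (Fin n → ℝ), IsFaceOf (newtonPolyhedron S) τ → (fun _ => t₀) ∈ τ → τ₀ ⊆ τ)
    (hρ : ρ = n - faceDim τ₀) (j : Fin n) (hj : ∀ y ∈ τ₀, 0 ≤ y j ∧ y j ≤ 1) :
    ∃ u₀, Geo n ρ j t₀ B (vectorSpan ℝ τ₀) u₀ := by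
  obtain ⟨u, hu0, hτ⟩ := hτface
  have hT : (fun _ => t₀) ∈ traceFace (newtonPolyhedron S) u := hτ ▸ hτmem
  have hconst : ∀ y ∈ τ₀, dotR u y = dotR u (fun _ => t₀) := by
    intro y hy
    rw [hτ] at hy
    exact le_antisymm (hy.2 _ hT.1) (hT.2 _ hy.1)
  -- a face whose functional vanishes on `e_j` is unbounded in the direction `e_j`
  have huj : 0 < u j := by
    refine lt_of_le_of_ne (hu0 j) fun h0 => ?_
    have hmem : (fun _ => t₀) + Pi.single j 2 ∈ τ₀ := by
      rw [hτ]
      refine ⟨newton_upward ht₀mem fun i => ?_, fun z hz => ?_⟩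
      · have : (0 : ℝ) ≤ (Pi.single j 2 : Fin n → ℝ) i := by
          by_cases h : i = j
          · subst h; simp
          · simp [h]
        simp only [Pi.add_apply]; linarith
      · rw [dotR_add_right, dotR_single, ← h0]
        simpa using hT.2 z hz
    have := (hj _ hmem).2
    simp at this
    linarith
  have husum : 0 < ∑ i, u i := Finset.sum_pos' (fun i _ => hu0 i) ⟨j, Finset.mem_univ _, huj⟩
  have hperp : ∀ w ∈ vectorSpan ℝ τ₀, dotR u w = 0 := by
    intro w hw
    rw [vectorSpan_eq_span_vsub_set_right ℝ hτmem] at hw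
    induction hw using Submodule.span_induction with
    | mem x hx =>
      obtain ⟨p, hp, rfl⟩ := hx
      simp only [vsub_eq_sub, dotR_sub_right, hconst p hp, sub_self]
    | zero => simp [dotR]
    | add x y _ _ hx hy => rw [dotR_add_right, hx, hy, add_zero]
    | smul c x _ hx => rw [dotR_smul_right, hx, mul_zero]
  have hone : (fun _ => (1 : ℝ)) ∉ vectorSpan ℝ τ₀ := by
    intro h
    have := hperp _ h
    rw [dotR_const] at this
    linarith
  have hBge : ∀ β ∈ B, dotR u (fun _ => t₀) ≤ dotR u (cv β) := fun β hβ =>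
    hT.2 _ (mem_newton (hB.mem β hβ) fun i => le_rfl)
  have hBgt : ∀ β ∈ B, cv β ∉ τ₀ → dotR u (fun _ => t₀) < dotR u (cv β) := by
    intro β hβ hn
    refine lt_of_le_of_ne (hBge β hβ) fun heq => hn ?_
    rw [hτ]
    exact ⟨mem_newton (hB.mem β hβ) fun i => le_rfl, fun z hz => heq ▸ hT.2 z hz⟩
  have hlow : ∀ k : Fin n → ℝ, (∀ i, 0 ≤ k i) → ∀ m : ℝ,
      (∀ β ∈ B, m ≤ dotR k (cv β)) → m ≤ t₀ * ∑ i, k i := by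
    intro k hk m hm
    have := newton_lower hB hk hm ht₀mem
    rwa [dotR_const, mul_comm] at this
  refine ⟨u, ht₀pos, ?_, hone, ?_, hlow, hu0, huj, hperp, ?_, ?_⟩
  · have : Module.finrank ℝ (vectorSpan ℝ τ₀) ≤ n := by
      simpa using Submodule.finrank_le (vectorSpan ℝ τ₀)
    unfold faceDim at hρ
    omega
  · intro w hw
    rw [vectorSpan_eq_span_vsub_set_right ℝ hτmem] at hw
    induction hw using Submodule.span_induction with
    | mem x hx =>
      obtain ⟨p, hp, rfl⟩ := hx
      have hpΓ : p ∈ newtonPolyhedron S := by rw [hτ] at hp; exact hp.1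
      -- `t₀·1 - p` lies in the cone generated by the `β - t₀·1` and the `e_i`
      obtain ⟨c, hc, hcb⟩ := farkas_dot
        (B.disjSum (Finset.univ : Finset (Fin n)))
        (Sum.elim (fun β => cv β - fun _ => t₀) (fun i => Pi.single i 1))
        ((fun _ => t₀) - p) (by
          intro v hv
          have hv0 : ∀ i, 0 ≤ v i := fun i => by
            have := hv (Sum.inr i) (by simp)
            simpa [dotR_single] using this
          have hvB : ∀ β ∈ B, dotR v (fun _ => t₀) ≤ dotR v (cv β) := fun β hβ => by
            have := hv (Sum.inl β) (by simpa using hβ)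
            simp only [Sum.elim_inl, dotR_sub_right] at this
            linarith
          have hface : (fun _ => t₀) ∈ traceFace (newtonPolyhedron S) v :=
            ⟨ht₀mem, fun z hz => newton_lower hB hv0 hvB hz⟩
          have := hτmin _ ⟨v, hv0, rfl⟩ hface hp
          rw [dotR_sub_right]
          linarith [this.2 _ ht₀mem])
      refine ⟨1 + ∑ β ∈ B, c (Sum.inl β), by
        have := Finset.sum_nonneg fun β (_ : β ∈ B) => hc (Sum.inl β)
        linarith, fun k hk m hm => ?_⟩
      have hd := hlow k hk m hm
      have h1 : -(t₀ * ∑ i, k i - m) ≤ dotR k (p -ᵥ fun _ => t₀) := by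
        have := newton_lower hB hk hm hpΓ
        rw [vsub_eq_sub, dotR_sub_right, dotR_const]
        linarith
      have h2 := hcb k
      rw [Finset.sum_disjSum] at h2
      have h3 : 0 ≤ ∑ i, c (Sum.inr i) * dotR k (Sum.elim (fun β => cv β - fun _ => t₀)
          (fun i => Pi.single i (1 : ℝ)) (Sum.inr i : (Fin n → ℕ) ⊕ Fin n)) :=
        Finset.sum_nonneg fun i _ => mul_nonneg (hc _) (by simpa [dotR_single] using hk i)
      have h4 : (∑ β ∈ B, c (Sum.inl β)) * (m - t₀ * ∑ i, k i) ≤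
          ∑ β ∈ B, c (Sum.inl β) * dotR k (Sum.elim (fun β => cv β - fun _ => t₀)
          (fun i => Pi.single i (1 : ℝ)) (Sum.inl β : (Fin n → ℕ) ⊕ Fin n)) := by
        rw [Finset.sum_mul]
        refine Finset.sum_le_sum fun β hβ => mul_le_mul_of_nonneg_left ?_ (hc _)
        simp only [Sum.elim_inl, dotR_sub_right, dotR_const]
        linarith [hm β hβ]
      have h5 : dotR k ((fun _ => t₀) - p) = - dotR k (p -ᵥ fun _ => t₀) := by
        rw [vsub_eq_sub, dotR_sub_right, dotR_sub_right]; ring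
      have h6 := mul_nonneg (Finset.sum_nonneg fun β (_ : β ∈ B) => hc (Sum.inl β))
        (sub_nonneg.2 hd)
      rw [abs_le]
      constructor <;> nlinarith
    | zero => exact ⟨0, le_rfl, fun k hk m hm => by simp [dotR]⟩
    | add x y _ _ hx hy =>
      obtain ⟨C, hC, h⟩ := hx
      obtain ⟨C', hC', h'⟩ := hy
      refine ⟨C + C', add_nonneg hC hC', fun k hk m hm => ?_⟩
      rw [dotR_add_right, add_mul]
      exact (abs_add_le _ _).trans (add_le_add (h k hk m hm) (h' k hk m hm))
    | smul c x _ hx =>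
      obtain ⟨C, hC, h⟩ := hx
      refine ⟨|c| * C, mul_nonneg (abs_nonneg _) hC, fun k hk m hm => ?_⟩
      rw [dotR_smul_right, abs_mul, mul_assoc]
      exact mul_le_mul_of_nonneg_left (h k hk m hm) (abs_nonneg _)
  · intro β hβ h2
    rw [dotR_sub_right]
    refine sub_pos.2 (hBgt β hβ fun hmem => ?_)
    have := (hj _ hmem).2
    have h2' : (2 : ℝ) ≤ β j := by exact_mod_cast h2
    simp only [cv] at this
    linarith
  · by_contra hcon
    push Not at hcon
    -- without generators of `j`-degree one, `⟨u, ·⟩` could be tilted in the direction `-e_j`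
    obtain ⟨ε, hε, hεu, hεB⟩ : ∃ ε : ℝ, 0 < ε ∧ ε ≤ u j ∧ ∀ β ∈ B,
        dotR u (fun _ => t₀) ≤ dotR u (cv β) - ε * β j := by
      have : ∀ᶠ ε : ℝ in 𝓝[>] 0, ∀ β ∈ B, dotR u (fun _ => t₀) ≤ dotR u (cv β) - ε * β j := by
        rw [Filter.eventually_all_finset]
        intro β hβ
        by_cases hmem : cv β ∈ τ₀
        · have h1 := (hj _ hmem).2
          simp only [cv] at h1
          have h2 : β j ≤ 1 := by exact_mod_cast h1
          have h3 : β j = 0 := by have := hcon β hβ; omega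
          simp [h3, hBge β hβ]
        · have ht : Tendsto (fun ε : ℝ => dotR u (cv β) - ε * β j) (𝓝[>] 0)
              (𝓝 (dotR u (cv β) - 0 * β j)) := by
            refine Tendsto.mono_left ?_ nhdsWithin_le_nhds
            exact (Continuous.tendsto (by fun_prop) _)
          have := ht.eventually (lt_mem_nhds (by simpa using hBgt β hβ hmem))
          exact this.mono fun _ h => h.le
      have h2 : ∀ᶠ ε : ℝ in 𝓝[>] 0, 0 < ε := self_mem_nhdsWithin
      have h3 : ∀ᶠ ε : ℝ in 𝓝[>] 0, ε < u j := mem_nhdsWithin_of_mem_nhds (Iio_mem_nhds huj)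
      obtain ⟨ε, h1, h2, h3⟩ := (this.and (h2.and h3)).exists
      exact ⟨ε, h2, le_of_lt h3, h1⟩
    have hk : ∀ i, 0 ≤ (u - Pi.single j ε : Fin n → ℝ) i := fun i => by
      by_cases h : i = j
      · subst h; simpa using hεu
      · simpa [h] using hu0 i
    have hd : ∀ y, dotR (u - Pi.single j ε) y = dotR u y - ε * y j := fun y => by
      rw [dotR_comm, dotR_sub_right, dotR_single, dotR_comm]; ring
    have := newton_lower hB hk (c := dotR u (fun _ => t₀)) (fun β hβ => by
      rw [hd]; exact hεB β hβ) ht₀mem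
    rw [hd] at this
    nlinarith

end

/-! ### Logarithmic coordinates and a counting integral -/

/-- The open positive orthant of `ℝⁿ`, the range of the coordinates `y = -log |x|`. -/
def Yset (n : ℕ) : Set (Fin n → ℝ) := {y | ∀ i, 0 < y i}

/-- The punctured box `{0 < |x_l| < δ}`. -/
def PBox (n : ℕ) (δ : ℝ) : Set (Fin n → ℝ) := {x | ∀ i, x i ≠ 0 ∧ |x i| < δ}

/-- The parametrisation `y ↦ (σ_l e^{-y_l})` of one orthant; `σ : Fin n → Bool` encodes signs. -/
def sgnExp {n : ℕ} (σ : Fin n → Bool) (y : Fin n → ℝ) : Fin n → ℝ :=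
  fun i => (if σ i then 1 else -1) * Real.exp (-y i)

section
variable {n : ℕ}

lemma abs_sgnExp (σ : Fin n → Bool) (y : Fin n → ℝ) (i : Fin n) :
    |sgnExp σ y i| = Real.exp (-y i) := by
  unfold sgnExp
  rw [abs_mul, abs_of_pos (Real.exp_pos _)]
  split_ifs <;> simp

lemma isOpen_Yset : IsOpen (Yset n) := by
  have : Yset n = ⋂ i, {y : Fin n → ℝ | 0 < y i} := by
    ext; simp [Yset]
  rw [this]
  exact isOpen_iInter_of_finite fun i => isOpen_lt continuous_const (continuous_apply i)

lemma isOpen_PBox (δ : ℝ) : IsOpen (PBox n δ) := by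
  have : PBox n δ = ⋂ i, {y : Fin n → ℝ | y i ≠ 0 ∧ |y i| < δ} := by
    ext; simp [PBox]
  rw [this]
  refine isOpen_iInter_of_finite fun i => ?_
  exact (isOpen_ne_fun (continuous_apply i) continuous_const).inter
    (isOpen_lt (continuous_apply i).abs continuous_const)

lemma hasFDerivAt_sgnExp (σ : Fin n → Bool) (y : Fin n → ℝ) :
    HasFDerivAt (sgnExp σ) (ContinuousLinearMap.pi fun i =>
      ((-sgnExp σ y i) • (ContinuousLinearMap.id ℝ ℝ)).comp
        (ContinuousLinearMap.proj (R := ℝ) (φ := fun _ : Fin n => ℝ) i)) y := by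
  rw [hasFDerivAt_pi]
  intro i
  have h1 : HasDerivAt (fun s : ℝ => (if σ i then 1 else -1) * Real.exp (-s))
      (-sgnExp σ y i) (y i) := by
    have := ((hasDerivAt_neg (y i)).exp).const_mul (if σ i then (1 : ℝ) else -1)
    exact this.congr_deriv (by unfold sgnExp; ring)
  have h2 : HasFDerivAt (fun y : Fin n → ℝ => y i)
      (ContinuousLinearMap.proj (R := ℝ) (φ := fun _ : Fin n => ℝ) i) y := hasFDerivAt_apply i y
  have h3 := h1.hasFDerivAt.comp y h2
  refine (h3.congr_fderiv ?_).congr_of_eventuallyEq (Filter.Eventually.of_forall fun v => rfl)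
  ext v
  simp [mul_comm]

/-- Passage to the coordinates `y = -log |x|` in each of the `2 ^ n` orthants. -/
lemma lintegral_PBox_le (G : (Fin n → ℝ) → ENNReal) (H : (Fin n → ℝ) → ENNReal)
    (hGH : ∀ σ : Fin n → Bool, ∀ y ∈ Yset n, G (sgnExp σ y) ≤ H y) :
    ∫⁻ x in PBox n 1, G x ≤ 2 ^ n * ∫⁻ y in Yset n, ENNReal.ofReal (Real.exp (-∑ i, y i)) * H y := by
  have hcover : PBox n 1 ⊆ ⋃ σ : Fin n → Bool, sgnExp σ '' Yset n := by
    intro x hx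
    refine Set.mem_iUnion.2 ⟨fun i => decide (0 < x i), fun i => -Real.log |x i|, fun i => ?_, ?_⟩
    · exact neg_pos.2 (Real.log_neg (abs_pos.2 (hx i).1) (hx i).2)
    · funext i
      simp only [sgnExp, neg_neg, Real.exp_log (abs_pos.2 (hx i).1), decide_eq_true_eq]
      split_ifs with h
      · rw [abs_of_pos h, one_mul]
      · rw [abs_of_nonpos (not_lt.1 h)]; ring
  calc ∫⁻ x in PBox n 1, G x ≤ ∫⁻ x in ⋃ σ : Fin n → Bool, sgnExp σ '' Yset n, G x :=
        lintegral_mono_set hcover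
    _ ≤ ∑' σ : Fin n → Bool, ∫⁻ x in sgnExp σ '' Yset n, G x := lintegral_iUnion_le _ _
    _ ≤ ∑' σ : Fin n → Bool,
          ∫⁻ y in Yset n, ENNReal.ofReal (Real.exp (-∑ i, y i)) * H y := by
        refine ENNReal.tsum_le_tsum fun σ => ?_
        rw [lintegral_image_eq_lintegral_abs_det_fderiv_mul volume isOpen_Yset.measurableSet
          (fun y _ => (hasFDerivAt_sgnExp σ y).hasFDerivWithinAt)]
        · refine setLIntegral_mono' isOpen_Yset.measurableSet fun y hy => ?_
          refine mul_le_mul' (le_of_eq ?_) (hGH σ y hy)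
          congr 1
          rw [ContinuousLinearMap.det_pi, Finset.abs_prod, ← Finset.sum_neg_distrib, Real.exp_sum]
          refine Finset.prod_congr rfl fun i _ => ?_
          rw [← abs_sgnExp σ y i]
          simp [ContinuousLinearMap.det]
        · intro y _ z _ hyz
          funext i
          have := congrArg (fun v => |v i|) hyz
          simp only [abs_sgnExp] at this
          exact neg_injective (Real.exp_injective this)
    _ = 2 ^ n * ∫⁻ y in Yset n, ENNReal.ofReal (Real.exp (-∑ i, y i)) * H y := by
        rw [tsum_fintype, Finset.sum_const, Finset.card_univ]
        simp

lemma integrable_exp_neg_abs {c : ℝ} (hc : 0 < c) :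
    Integrable (fun y : ℝ => Real.exp (-(c * |y|))) := by
  have h1 : IntegrableOn (fun y : ℝ => Real.exp (-(c * |y|))) (Set.Ioi 0) := by
    refine (exp_neg_integrableOn_Ioi 0 hc).congr_fun (fun y hy => ?_) measurableSet_Ioi
    simp only [abs_of_pos (Set.mem_Ioi.1 hy), neg_mul]
  have h2 : IntegrableOn (fun y : ℝ => Real.exp (-(c * |y|))) (Set.Iio 0) := by
    have : IntegrableOn (fun y : ℝ => Real.exp (-(c * |-y|))) (Set.Iio 0) :=
      IntegrableOn.comp_neg_Iio (f := fun y : ℝ => Real.exp (-(c * |y|))) (c := 0)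
        (by rw [neg_zero]; exact h1)
    simpa only [abs_neg] using this
  rw [← integrableOn_univ, ← Set.Iio_union_Ici (a := (0 : ℝ)), integrableOn_union,
    integrableOn_Ici_iff_integrableOn_Ioi]
  exact ⟨h2, h1⟩

/-- Pushing a product through a linear change of variables. -/
lemma lintegral_prod_linear (b : Fin n → Fin n → ℝ)
    (hspan : ⊤ ≤ Submodule.span ℝ (Set.range b)) :
    ∃ K : ℝ, 0 ≤ K ∧ ∀ g : Fin n → ℝ → ℝ, (∀ i, Integrable (g i)) → (∀ i, Measurable (g i)) →
      (∀ i y, 0 ≤ g i y) →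
      ∫⁻ y : Fin n → ℝ, ENNReal.ofReal (∏ i, g i (dotR y (b i)))
        ≤ ENNReal.ofReal (K * ∏ i, ∫ s, g i s) := by
  let L : (Fin n → ℝ) →ₗ[ℝ] (Fin n → ℝ) := LinearMap.pi fun i => dotL (b i)
  have hL : ∀ y i, L y i = dotR y (b i) := fun y i => rfl
  have hinj : LinearMap.ker L = ⊥ := by
    rw [LinearMap.ker_eq_bot']
    intro y hy
    have h0 : ∀ v ∈ Submodule.span ℝ (Set.range b), dotR y v = 0 := by
      intro v hv
      induction hv using Submodule.span_induction with
      | mem x hx => obtain ⟨i, rfl⟩ := hx; rw [← hL, hy]; rfl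
      | zero => simp [dotR]
      | add x z _ _ hx hz => rw [dotR_add_right, hx, hz, add_zero]
      | smul c x _ hx => rw [dotR_smul_right, hx, mul_zero]
    funext i
    have := h0 (Pi.single i 1) (hspan Submodule.mem_top)
    simpa [dotR_single] using this
  have hdet : LinearMap.det L ≠ 0 := by
    intro h
    have := LinearMap.bot_lt_ker_of_det_eq_zero h
    rw [hinj] at this
    exact lt_irrefl _ this
  refine ⟨|(LinearMap.det L)⁻¹|, abs_nonneg _, fun g hg hgm hg0 => ?_⟩
  have hLm : Measurable L := L.continuous_of_finiteDimensional.measurable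
  have hGm : Measurable fun z : Fin n → ℝ => ENNReal.ofReal (∏ i, g i (z i)) := by
    refine ENNReal.measurable_ofReal.comp ?_
    exact Finset.measurable_prod _ fun i _ => (hgm i).comp (measurable_pi_apply i)
  have h1 : ∫⁻ y : Fin n → ℝ, ENNReal.ofReal (∏ i, g i (dotR y (b i)))
      = ∫⁻ z, ENNReal.ofReal (∏ i, g i (z i)) ∂(Measure.map L volume) := by
    rw [lintegral_map hGm hLm]
    rfl
  have h2 : Integrable (fun z : Fin n → ℝ => ∏ i, g i (z i)) := Integrable.fintype_prod hg
  rw [h1, Real.map_linearMap_volume_pi_eq_smul_volume_pi hdet, lintegral_smul_measure,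
    ← ofReal_integral_eq_lintegral_ofReal h2
      (Filter.Eventually.of_forall fun z => Finset.prod_nonneg fun i _ => hg0 i _),
    integral_fintype_prod_volume_eq_prod, smul_eq_mul, ← ENNReal.ofReal_mul (abs_nonneg _)]

/-- The set where `|y|` is within `O(1)` of `τ` and `d` functionals, linearly independent together
with `|y|`, are bounded has volume `O(τ ^ (n - 1 - d))` in the positive orthant; the indicator
function is replaced by an exponential weight. -/
theorem count_integral {d : ℕ} (w : Fin d → Fin n → ℝ)
    (hw : LinearIndependent ℝ (Fin.cons (fun _ => (1 : ℝ)) w : Fin (d + 1) → Fin n → ℝ))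
    {c : ℝ} (hc : 0 < c) :
    d + 1 ≤ n ∧ ∃ C : ℝ, 0 ≤ C ∧ ∀ τ : ℝ, 0 ≤ τ →
      ∫⁻ y in Yset n, ENNReal.ofReal
        (Real.exp (-(c * (|τ - ∑ i, y i| + ∑ i, |dotR y (w i)|))))
      ≤ ENNReal.ofReal (C * (1 + τ) ^ (n - 1 - d)) := by
  have hdn : d + 1 ≤ n := by
    simpa using hw.fintype_card_le_finrank
  refine ⟨hdn, ?_⟩
  have hn0 : 0 < n := by omega
  have hnR : (0 : ℝ) < n := by exact_mod_cast hn0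
  set v : Fin (d + 1) → Fin n → ℝ := Fin.cons (fun _ => (1 : ℝ)) w with hv
  set s : Set (Fin n → ℝ) := Set.range v with hs
  set st : Set (Fin n → ℝ) := Set.range (fun i : Fin n => (Pi.single i 1 : Fin n → ℝ)) with hst
  have hsi : LinearIndepOn ℝ id s := hw.linearIndepOn_id
  have htop : ⊤ ≤ Submodule.span ℝ (s ∪ st) := by
    refine le_trans ?_ (Submodule.span_mono Set.subset_union_right)
    have := (Pi.basisFun ℝ (Fin n)).span_eq
    rw [← this]
    refine Submodule.span_mono ?_
    rintro _ ⟨i, rfl⟩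
    exact ⟨i, by simp⟩
  let E : Set (Fin n → ℝ) := hsi.extend (Set.subset_union_left (t := st))
  let bE : Module.Basis E ℝ (Fin n → ℝ) := Module.Basis.extendLe hsi Set.subset_union_left htop
  have hbE : ∀ e : E, bE e = e := fun e => Module.Basis.extendLe_apply_self _ _ _ e
  have hsE : s ⊆ E := hsi.subset_extend _
  have hEst : E ⊆ s ∪ st := hsi.extend_subset _
  have : Fintype E := Module.Basis.fintypeIndexOfRankLtAleph0 bE (by
    exact Module.rank_lt_aleph0 ℝ (Fin n → ℝ))
  have hcard : Fintype.card E = n := by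
    rw [← Module.finrank_eq_card_basis bE]; simp
  let ε : Fin n ≃ E := (finCongr hcard.symm).trans (Fintype.equivFin E).symm
  let b : Module.Basis (Fin n) ℝ (Fin n → ℝ) := bE.reindex ε.symm
  have hb : ∀ i, b i = (ε i : Fin n → ℝ) := fun i => by
    simp [b, hbE]
  obtain ⟨K, hK, hKb⟩ := lintegral_prod_linear (fun i => (b i)) b.span_eq.ge
  set c' : ℝ := c / n with hc'
  have hc'pos : 0 < c' := div_pos hc hnR
  set I₀ : ℝ := ∫ y : ℝ, Real.exp (-(c' * |y|)) with hI₀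
  have hI₀0 : 0 ≤ I₀ := integral_nonneg fun y => (Real.exp_pos _).le
  let fr : Finset (Fin n) := Finset.univ.filter fun i => (b i) ∉ s
  have hfr : fr.card = n - 1 - d := by
    have h1 : (Finset.univ.filter fun i => (b i) ∈ s).card = d + 1 := by
      have : (Finset.univ.filter fun i => (b i) ∈ s).image (fun i => b i)
          = Finset.univ.image v := by
        ext e
        simp only [Finset.mem_image, Finset.mem_filter, Finset.mem_univ, true_and]
        constructor
        · rintro ⟨i, hi, rfl⟩; exact hi
        · intro he
          have he' : e ∈ s := he
          refine ⟨ε.symm ⟨e, hsE he'⟩, ?_, ?_⟩ <;> simp [hb, he']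
      rw [← Finset.card_image_of_injective _ b.injective, this,
        Finset.card_image_of_injective _ hw.injective]
      simp
    have h2 := Finset.card_filter_add_card_filter_not (s := (Finset.univ : Finset (Fin n)))
      (fun i => (b i) ∈ s)
    rw [h1] at h2
    simp only [Finset.card_univ, Fintype.card_fin] at h2
    show (Finset.univ.filter fun i => ¬ (b i) ∈ s).card = _
    omega
  -- one-dimensional factors
  let g : ℝ → Fin n → ℝ → ℝ := fun τ i y =>
    if (b i) ∉ s then Set.indicator (Set.Icc 0 τ) (fun _ => (1 : ℝ)) y + Real.exp (-(c' * |y - τ|))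
    else if b i = (fun _ => 1) then Real.exp (-(c' * |y - τ|)) else Real.exp (-(c' * |y|))
  have hint : Integrable (fun y : ℝ => Real.exp (-(c' * |y|))) := integrable_exp_neg_abs hc'pos
  have hintτ : ∀ τ : ℝ, Integrable (fun y : ℝ => Real.exp (-(c' * |y - τ|))) :=
    fun τ => hint.comp_sub_right τ
  have hindτ : ∀ τ : ℝ, Integrable (Set.indicator (Set.Icc 0 τ) (fun _ : ℝ => (1 : ℝ))) :=
    fun τ => (integrable_indicator_iff measurableSet_Icc).2 (by simp)
  have hIτ : ∀ τ : ℝ, ∫ y : ℝ, Real.exp (-(c' * |y - τ|)) = I₀ :=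
    fun τ => integral_sub_right_eq_self (fun y : ℝ => Real.exp (-(c' * |y|))) τ
  have hgint : ∀ τ i, Integrable (g τ i) := by
    intro τ i
    simp only [g]
    split_ifs
    · exact hintτ τ
    · exact hint
    · exact (hindτ τ).add (hintτ τ)
  have hgmeas : ∀ τ i, Measurable (g τ i) := by
    intro τ i
    simp only [g]
    split_ifs
    · fun_prop
    · fun_prop
    · exact (measurable_const.indicator measurableSet_Icc).add (by fun_prop)
  have hg0 : ∀ τ i y, 0 ≤ g τ i y := by
    intro τ i y
    simp only [g]
    split_ifs
    · positivity
    · positivity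
    · exact add_nonneg (Set.indicator_nonneg (fun _ _ => zero_le_one) _) (Real.exp_pos _).le
  have hgI : ∀ τ, 0 ≤ τ → ∏ i, ∫ y, g τ i y ≤ (1 + I₀) ^ n * (1 + τ) ^ (n - 1 - d) := by
    intro τ hτ
    have h1 : ∀ i, ∫ y, g τ i y ≤ (1 + I₀) * (if (b i) ∉ s then (1 + τ) else 1) := by
      intro i
      by_cases h : (b i) ∉ s
      · simp only [g, if_pos h]
        rw [integral_add (hindτ τ) (hintτ τ), hIτ, integral_indicator measurableSet_Icc]
        simp only [integral_const, smul_eq_mul, mul_one, measureReal_restrict_apply_univ,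
          Real.volume_real_Icc_of_le hτ, sub_zero]
        nlinarith
      · simp only [g, if_neg h, mul_one]
        split_ifs
        · rw [hIτ]; linarith
        · linarith
    calc ∏ i, ∫ y, g τ i y ≤ ∏ i, ((1 + I₀) * (if (b i) ∉ s then (1 + τ) else 1)) :=
          Finset.prod_le_prod (fun i _ => integral_nonneg (hg0 τ i)) (fun i _ => h1 i)
      _ = (1 + I₀) ^ n * (1 + τ) ^ (n - 1 - d) := by
          rw [Finset.prod_mul_distrib, Finset.prod_const, Finset.card_univ, Fintype.card_fin,
            Finset.prod_ite, Finset.prod_const, Finset.prod_const_one, mul_one, ← hfr]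
  refine ⟨K * (1 + I₀) ^ n, by positivity, fun τ hτ => ?_⟩
  calc ∫⁻ y in Yset n, ENNReal.ofReal
        (Real.exp (-(c * (|τ - ∑ i, y i| + ∑ i, |dotR y (w i)|))))
      ≤ ∫⁻ y in Yset n, ENNReal.ofReal (∏ i, g τ i (dotR y (b i))) := by
        refine setLIntegral_mono' isOpen_Yset.measurableSet fun y hy => ENNReal.ofReal_le_ofReal ?_
        set X := |τ - ∑ i, y i| with hX
        set W := ∑ i, |dotR y (w i)| with hW
        have hX0 : 0 ≤ X := abs_nonneg _
        have hW0 : 0 ≤ W := Finset.sum_nonneg fun i _ => abs_nonneg _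
        have h1 : ∀ i, Real.exp (-(c' * (X + W))) ≤ g τ i (dotR y (b i)) := by
          intro i
          by_cases h : (b i) ∉ s
          · simp only [g, if_pos h]
            have hi : (b i) ∈ st := by
              have := hEst (ε i).2
              rw [← hb] at this
              exact this.resolve_left h
            obtain ⟨l, hl⟩ := hi
            have hyl : dotR y (b i) = y l := by rw [← hl, dotR_single, mul_one]
            rw [hyl]
            by_cases hle : y l ≤ τ
            · rw [Set.indicator_of_mem (Set.mem_Icc.2 ⟨(hy l).le, hle⟩)]
              have : Real.exp (-(c' * (X + W))) ≤ 1 := by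
                rw [Real.exp_le_one_iff]
                have : 0 ≤ c' * (X + W) := by positivity
                linarith
              have := Real.exp_pos (-(c' * |y l - τ|))
              linarith
            · push Not at hle
              have hq : y l ≤ ∑ i, y i :=
                Finset.single_le_sum (fun i _ => (hy i).le) (Finset.mem_univ l)
              have h0 : 0 ≤ Set.indicator (Set.Icc 0 τ) (fun _ => (1 : ℝ)) (y l) :=
                Set.indicator_nonneg (fun _ _ => zero_le_one) _
              have : Real.exp (-(c' * (X + W))) ≤ Real.exp (-(c' * |y l - τ|)) := by
                rw [Real.exp_le_exp, neg_le_neg_iff]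
                refine mul_le_mul_of_nonneg_left ?_ hc'pos.le
                rw [abs_of_pos (by linarith)]
                have : ∑ i, y i - τ ≤ X := by rw [hX, abs_sub_comm]; exact le_abs_self _
                linarith
              linarith
          · have hs' : b i ∈ s := not_not.1 h
            simp only [g, if_neg h]
            split_ifs with h1
            · rw [Real.exp_le_exp, neg_le_neg_iff, h1, dotR_const, mul_one, abs_sub_comm]
              exact mul_le_mul_of_nonneg_left (by linarith) hc'pos.le
            · obtain ⟨k, hk⟩ := hs'
              rw [Real.exp_le_exp, neg_le_neg_iff]
              refine mul_le_mul_of_nonneg_left ?_ hc'pos.le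
              revert hk
              refine Fin.cases ?_ ?_ k
              · intro hk; exact absurd hk.symm h1
              · intro k hk
                have hk' : w k = b i := by rw [← hk, hv, Fin.cons_succ]
                rw [← hk']
                have := Finset.single_le_sum (f := fun i => |dotR y (w i)|)
                  (fun i _ => abs_nonneg _) (Finset.mem_univ k)
                linarith
        calc Real.exp (-(c * (X + W))) = ∏ _i : Fin n, Real.exp (-(c' * (X + W))) := by
              rw [Finset.prod_const, Finset.card_univ, Fintype.card_fin, ← Real.exp_nat_mul, hc']
              congr 1
              field_simp
          _ ≤ ∏ i, g τ i (dotR y (b i)) :=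
              Finset.prod_le_prod (fun i _ => (Real.exp_pos _).le) (fun i _ => h1 i)
    _ ≤ ∫⁻ y, ENNReal.ofReal (∏ i, g τ i (dotR y (b i))) := setLIntegral_le_lintegral _ _
    _ ≤ ENNReal.ofReal (K * ∏ i, ∫ y, g τ i y) := hKb (g τ) (hgint τ) (hgmeas τ) (hg0 τ)
    _ ≤ ENNReal.ofReal (K * (1 + I₀) ^ n * (1 + τ) ^ (n - 1 - d)) := by
        refine ENNReal.ofReal_le_ofReal ?_
        rw [mul_assoc]
        exact mul_le_mul_of_nonneg_left (hgI τ hτ) hK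
end

/-! ### Volume estimates -/

section
variable {n : ℕ}

/-- The support function `m(y) = min_{β ∈ B} ⟨y, β⟩`. -/
def mB (B : Finset (Fin n → ℕ)) (hB : B.Nonempty) (y : Fin n → ℝ) : ℝ :=
  B.inf' hB fun β => dotR y (cv β)

lemma mB_le {B : Finset (Fin n → ℕ)} (hB : B.Nonempty) (y : Fin n → ℝ) {β} (hβ : β ∈ B) :
    mB B hB y ≤ dotR y (cv β) := Finset.inf'_le _ hβ

/-- The gap `d(y) = t₀|y| - m(y) ≥ 0`. -/
def gap (B : Finset (Fin n → ℕ)) (hB : B.Nonempty) (t₀ : ℝ) (y : Fin n → ℝ) : ℝ :=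
  t₀ * ∑ i, y i - mB B hB y

variable {ρ : ℕ} {j : Fin n} {t₀ : ℝ} {B : Finset (Fin n → ℕ)}
    {V : Submodule ℝ (Fin n → ℝ)} {u₀ : Fin n → ℝ}

namespace Geo

lemma Bne (G : Geo n ρ j t₀ B V u₀) : B.Nonempty := by
  obtain ⟨β, hβ, -⟩ := G.exists_one
  exact ⟨β, hβ⟩

lemma gap_nonneg (G : Geo n ρ j t₀ B V u₀) {y : Fin n → ℝ} (hy : y ∈ Yset n) :
    0 ≤ gap B G.Bne t₀ y :=
  sub_nonneg.2 (G.low y (fun i => (hy i).le) _ fun _ hβ => mB_le _ _ hβ)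

lemma rho_pos (G : Geo n ρ j t₀ B V u₀) : 1 ≤ ρ := by
  have h := G.rank
  by_contra hρ
  have : V = ⊤ := Submodule.eq_top_of_finrank_eq (by simp; omega)
  exact G.one_not_mem (this ▸ Submodule.mem_top)

/-- A basis of `V` together with the vector `1` is linearly independent, and its members are
controlled by the gap. -/
lemma exists_basis (G : Geo n ρ j t₀ B V u₀) :
    ∃ w : Fin (n - ρ) → Fin n → ℝ, LinearIndependent ℝ w ∧
      Submodule.span ℝ (Set.range w) = V ∧ ∃ A : ℝ, 1 ≤ A ∧ ∀ y ∈ Yset n,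
        ∑ i, |dotR y (w i)| ≤ A * gap B G.Bne t₀ y := by
  have hr : Module.finrank ℝ V = n - ρ := by have := G.rank; omega
  let bV := Module.finBasisOfFinrankEq ℝ V hr
  refine ⟨fun i => (bV i : Fin n → ℝ), ?_, ?_, ?_⟩
  · exact bV.linearIndependent.map' V.subtype (Submodule.ker_subtype V)
  · have : Set.range (fun i => (bV i : Fin n → ℝ)) = V.subtype '' Set.range bV := by
      rw [← Set.range_comp]; rfl
    rw [this, Submodule.span_image, bV.span_eq, Submodule.map_top, Submodule.range_subtype]
  · choose C hC h using fun i => G.ctrl (bV i : Fin n → ℝ) (bV i).2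
    refine ⟨1 + ∑ i, C i, by
      have := Finset.sum_nonneg fun i (_ : i ∈ Finset.univ) => hC i
      linarith, fun y hy => ?_⟩
    have hg := G.gap_nonneg hy
    calc ∑ i, |dotR y (bV i : Fin n → ℝ)| ≤ ∑ i, C i * gap B G.Bne t₀ y :=
          Finset.sum_le_sum fun i _ => h i y (fun i => (hy i).le) _ fun _ hβ => mB_le _ _ hβ
      _ ≤ (1 + ∑ i, C i) * gap B G.Bne t₀ y := by
          rw [← Finset.sum_mul, add_mul]; linarith

/-- A lower bound of the exponent by linear functionals in the setting of `count_integral`. -/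
lemma core_aux (G : Geo n ρ j t₀ B V u₀) {d : ℕ} (w : Fin d → Fin n → ℝ)
    (hw : LinearIndependent ℝ (Fin.cons (fun _ => (1 : ℝ)) w : Fin (d + 1) → Fin n → ℝ))
    {c : ℝ} (hc : 0 < c) {κ : ℝ} (hκ : 0 < κ) (Φ : ℝ → (Fin n → ℝ) → ℝ)
    (hΦ : ∀ T : ℝ, 1 ≤ T → ∀ y ∈ Yset n,
      κ * (|T - t₀ * ∑ i, y i| + ∑ i, |dotR y (w i)|) ≤ Φ T y) :
    d + 1 ≤ n ∧ ∃ C : ℝ, 0 ≤ C ∧ ∀ T : ℝ, 1 ≤ T →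
      ∫⁻ y in Yset n, ENNReal.ofReal (Real.exp (-(c * Φ T y)))
        ≤ ENNReal.ofReal (C * T ^ (n - 1 - d)) := by
  have ht := G.t₀pos
  set κ' := κ * min t₀ 1 with hκ'
  have hκ'0 : 0 < κ' := mul_pos hκ (lt_min ht one_pos)
  obtain ⟨hd, C, hC, h⟩ := count_integral w hw (mul_pos hc hκ'0)
  refine ⟨hd, C * (1 + 1 / t₀) ^ (n - 1 - d), by positivity, fun T hT => ?_⟩
  have hτ : 0 ≤ T / t₀ := div_nonneg (by linarith) ht.le
  calc ∫⁻ y in Yset n, ENNReal.ofReal (Real.exp (-(c * Φ T y)))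
      ≤ ∫⁻ y in Yset n, ENNReal.ofReal (Real.exp (-(c * κ' *
          (|T / t₀ - ∑ i, y i| + ∑ i, |dotR y (w i)|)))) := by
        refine setLIntegral_mono' isOpen_Yset.measurableSet fun y hy => ENNReal.ofReal_le_ofReal ?_
        rw [Real.exp_le_exp, neg_le_neg_iff, mul_assoc]
        refine mul_le_mul_of_nonneg_left (le_trans ?_ (hΦ T hT y hy)) hc.le
        rw [hκ', mul_assoc]
        refine mul_le_mul_of_nonneg_left ?_ hκ.le
        have h1 : |T - t₀ * ∑ i, y i| = t₀ * |T / t₀ - ∑ i, y i| := by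
          rw [← abs_of_pos ht, ← abs_mul, abs_of_pos ht]
          congr 1; field_simp
        have h2 : min t₀ 1 * |T / t₀ - ∑ i, y i| ≤ t₀ * |T / t₀ - ∑ i, y i| :=
          mul_le_mul_of_nonneg_right (min_le_left _ _) (abs_nonneg _)
        have h0 : 0 ≤ ∑ i, |dotR y (w i)| := Finset.sum_nonneg fun i _ => abs_nonneg _
        have h3 : min t₀ 1 * ∑ i, |dotR y (w i)| ≤ 1 * ∑ i, |dotR y (w i)| :=
          mul_le_mul_of_nonneg_right (min_le_right _ _) h0
        rw [mul_add, h1]; linarith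
    _ ≤ ENNReal.ofReal (C * (1 + T / t₀) ^ (n - 1 - d)) := h _ hτ
    _ ≤ _ := by
        refine ENNReal.ofReal_le_ofReal ?_
        rw [mul_assoc, ← mul_pow]
        refine mul_le_mul_of_nonneg_left (pow_le_pow_left₀ (by positivity) ?_ _) hC
        rw [add_mul, one_mul, one_div, div_eq_inv_mul]; linarith

/-- The gap controls `n - ρ` functionals independent of `|y|`, which leaves `ρ - 1` directions of
size `T`. -/
lemma core0 (G : Geo n ρ j t₀ B V u₀) {c : ℝ} (hc : 0 < c) :
    ∃ C : ℝ, 0 ≤ C ∧ ∀ T : ℝ, 1 ≤ T →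
      ∫⁻ y in Yset n, ENNReal.ofReal
        (Real.exp (-(c * (|T - t₀ * ∑ i, y i| + gap B G.Bne t₀ y))))
        ≤ ENNReal.ofReal (C * T ^ (ρ - 1)) := by
  obtain ⟨w, hw, hspan, A, hA, hwA⟩ := G.exists_basis
  have hLI : LinearIndependent ℝ (Fin.cons (fun _ => (1 : ℝ)) w : Fin _ → Fin n → ℝ) :=
    linearIndependent_finCons.2 ⟨hw, by rw [hspan]; exact G.one_not_mem⟩
  have hA0 : 0 < A := by linarith
  obtain ⟨hd, C, hC, h⟩ := G.core_aux w hLI hc (inv_pos.2 hA0)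
    (fun T y => |T - t₀ * ∑ i, y i| + gap B G.Bne t₀ y) (by
      intro T _ y hy
      have h1 := hwA y hy
      have h2 : A⁻¹ * ∑ i, |dotR y (w i)| ≤ gap B G.Bne t₀ y := by
        rw [inv_mul_le_iff₀ hA0]; exact h1
      have h3 : A⁻¹ * |T - t₀ * ∑ i, y i| ≤ |T - t₀ * ∑ i, y i| := by
        rw [inv_mul_le_iff₀ hA0]
        exact le_mul_of_one_le_left (abs_nonneg _) hA
      rw [mul_add]; linarith)
  refine ⟨C, hC, fun T hT => ?_⟩
  have e : n - 1 - (n - ρ) = ρ - 1 := by have := G.rank; have := G.rho_pos; omega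
  rw [← e]
  exact h T hT

/-- An additional decaying functional `⟨b, ·⟩` with `⟨u₀, b⟩ > 0` gains one logarithm. -/
lemma core1 (G : Geo n ρ j t₀ B V u₀) {b : Fin n → ℝ} (hb : 0 < dotR u₀ b) {c : ℝ} (hc : 0 < c) :
    ∃ C : ℝ, 0 ≤ C ∧ ∀ T : ℝ, 1 ≤ T →
      ∫⁻ y in Yset n, ENNReal.ofReal
        (Real.exp (-(c * (|T - t₀ * ∑ i, y i| + gap B G.Bne t₀ y + |dotR y b|))))
        ≤ ENNReal.ofReal (C * (T ^ (ρ - 1) / T)) := by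
  have ht := G.t₀pos
  obtain ⟨w, hw, hspan, A, hA, hwA⟩ := G.exists_basis
  have hA0 : 0 < A := by linarith
  by_cases hmem : b ∈ V ⊔ Submodule.span ℝ {(fun _ => (1 : ℝ) : Fin n → ℝ)}
  · -- `b = s + l • 1` with `l > 0`: the exponent controls `T` itself
    obtain ⟨s, hs, z, hz, hbz⟩ := Submodule.mem_sup.1 hmem
    obtain ⟨l, rfl⟩ := Submodule.mem_span_singleton.1 hz
    have hsum : 0 < ∑ i, u₀ i :=
      Finset.sum_pos' (fun i _ => G.u₀_nonneg i) ⟨j, Finset.mem_univ _, G.u₀_j⟩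
    have hl : 0 < l := by
      rw [← hbz, dotR_add_right, G.u₀_perp s hs, dotR_smul_right, dotR_const] at hb
      by_contra hl
      push Not at hl
      nlinarith
    obtain ⟨Cs, hCs, hCs'⟩ := G.ctrl s hs
    obtain ⟨C, hC, h⟩ := G.core0 (half_pos hc)
    -- `T ≤ K (|T - t₀ q| + d + |⟨b, y⟩|)`
    obtain ⟨K, hK, hKT⟩ : ∃ K : ℝ, 0 < K ∧ ∀ T : ℝ, 1 ≤ T → ∀ y ∈ Yset n,
        T ≤ K * (|T - t₀ * ∑ i, y i| + gap B G.Bne t₀ y + |dotR y b|) := by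
      refine ⟨1 + t₀ / l * (1 + Cs), by positivity, fun T hT y hy => ?_⟩
      have h1 := hCs' y (fun i => (hy i).le) _ fun _ hβ => mB_le G.Bne _ hβ
      have h2 : dotR y b = dotR y s + l * ∑ i, y i := by
        rw [← hbz, dotR_add_right, dotR_smul_right, dotR_const, mul_one]
      have hg := G.gap_nonneg hy
      set q := ∑ i, y i
      set g := gap B G.Bne t₀ y with hgdef
      have h1' : |dotR y s| ≤ Cs * g := h1
      have h3 : l * q ≤ |dotR y b| + Cs * g := by
        have := le_abs_self (dotR y b)
        have := neg_abs_le (dotR y s)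
        linarith
      have h4 : T ≤ |T - t₀ * q| + t₀ * q := by
        have := le_abs_self (T - t₀ * q); linarith
      have h5 : t₀ * q ≤ t₀ / l * (|dotR y b| + Cs * g) := by
        have : t₀ * q = t₀ / l * (l * q) := by field_simp
        rw [this]
        exact mul_le_mul_of_nonneg_left h3 (by positivity)
      have h6 : t₀ / l * (|dotR y b| + Cs * g) ≤ t₀ / l * (1 + Cs) *
          (|T - t₀ * q| + g + |dotR y b|) := by
        rw [mul_assoc]
        refine mul_le_mul_of_nonneg_left ?_ (by positivity)
        have a1 := abs_nonneg (T - t₀ * q)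
        have a2 := abs_nonneg (dotR y b)
        nlinarith [mul_nonneg hCs a1, mul_nonneg hCs a2]
      have a1 := abs_nonneg (dotR y b)
      rw [add_mul]; linarith
    refine ⟨C * (2 * K / c), by positivity, fun T hT => ?_⟩
    have hT0 : 0 < T := by linarith
    have hexp : Real.exp (-(c / 2 * (T / K))) ≤ (2 * K / c) / T := by
      have h1 := Real.add_one_le_exp (c / 2 * (T / K))
      have h2 : 0 < c / 2 * (T / K) := by positivity
      rw [Real.exp_neg]
      calc (Real.exp (c / 2 * (T / K)))⁻¹ ≤ (c / 2 * (T / K))⁻¹ :=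
            inv_anti₀ h2 (by linarith)
        _ = (2 * K / c) / T := by field_simp
    calc ∫⁻ y in Yset n, ENNReal.ofReal
            (Real.exp (-(c * (|T - t₀ * ∑ i, y i| + gap B G.Bne t₀ y + |dotR y b|))))
        ≤ ∫⁻ y in Yset n, ENNReal.ofReal (2 * K / c / T) * ENNReal.ofReal
          (Real.exp (-(c / 2 * (|T - t₀ * ∑ i, y i| + gap B G.Bne t₀ y)))) := by
          refine setLIntegral_mono' isOpen_Yset.measurableSet fun y hy => ?_
          rw [← ENNReal.ofReal_mul (by positivity)]
          refine ENNReal.ofReal_le_ofReal ?_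
          refine le_trans ?_ (mul_le_mul_of_nonneg_right hexp (Real.exp_pos _).le)
          rw [← Real.exp_add, Real.exp_le_exp]
          have h1 := hKT T hT y hy
          have h2 : T / K ≤ |T - t₀ * ∑ i, y i| + gap B G.Bne t₀ y + |dotR y b| := by
            rw [div_le_iff₀' hK]; exact h1
          have h3 := mul_le_mul_of_nonneg_left h2 (half_pos hc).le
          have h4 := mul_nonneg (half_pos hc).le (abs_nonneg (dotR y b))
          linarith
      _ = ENNReal.ofReal (2 * K / c / T) * ∫⁻ y in Yset n, ENNReal.ofReal
          (Real.exp (-(c / 2 * (|T - t₀ * ∑ i, y i| + gap B G.Bne t₀ y)))) := by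
          rw [lintegral_const_mul' _ _ ENNReal.ofReal_ne_top]
      _ ≤ ENNReal.ofReal (2 * K / c / T) * ENNReal.ofReal (C * T ^ (ρ - 1)) :=
          mul_le_mul' le_rfl (h T hT)
      _ = _ := by
          rw [← ENNReal.ofReal_mul (by positivity)]
          congr 1; ring
  · have hbV : b ∉ V := fun h => hmem (Submodule.mem_sup_left h)
    have hLI : LinearIndependent ℝ (Fin.cons (fun _ => (1 : ℝ))
        (Fin.cons b w : Fin (n - ρ + 1) → Fin n → ℝ) : Fin _ → Fin n → ℝ) := by
      refine linearIndependent_finCons.2 ⟨linearIndependent_finCons.2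
        ⟨hw, by rw [hspan]; exact hbV⟩, fun hone => ?_⟩
      rw [Fin.range_cons, Submodule.mem_span_insert] at hone
      obtain ⟨l, z, hz, hlz⟩ := hone
      rw [hspan] at hz
      by_cases hl : l = 0
      · apply G.one_not_mem
        rw [hlz, hl, zero_smul, zero_add]; exact hz
      · apply hmem
        have : b = (-(l⁻¹)) • z + l⁻¹ • (fun _ => (1 : ℝ) : Fin n → ℝ) := by
          rw [hlz, smul_add, smul_smul, inv_mul_cancel₀ hl]; module
        rw [this]
        exact Submodule.add_mem_sup (V.smul_mem _ hz)
          (Submodule.smul_mem _ _ (Submodule.mem_span_singleton_self _))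
    obtain ⟨hd, C, hC, h⟩ := G.core_aux _ hLI hc (inv_pos.2 hA0)
      (fun T y => |T - t₀ * ∑ i, y i| + gap B G.Bne t₀ y + |dotR y b|) (by
        intro T _ y hy
        have h1 := hwA y hy
        have h2 : A⁻¹ * ∑ i, |dotR y (w i)| ≤ gap B G.Bne t₀ y := by
          rw [inv_mul_le_iff₀ hA0]; exact h1
        have h3 : A⁻¹ * |T - t₀ * ∑ i, y i| ≤ |T - t₀ * ∑ i, y i| := by
          rw [inv_mul_le_iff₀ hA0]
          exact le_mul_of_one_le_left (abs_nonneg _) hA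
        have h4 : A⁻¹ * |dotR y b| ≤ |dotR y b| := by
          rw [inv_mul_le_iff₀ hA0]
          exact le_mul_of_one_le_left (abs_nonneg _) hA
        rw [Fin.sum_univ_succ]
        simp only [Fin.cons_zero, Fin.cons_succ]
        rw [mul_add, mul_add]; linarith)
    refine ⟨C, hC, fun T hT => (h T hT).trans (ENNReal.ofReal_le_ofReal ?_)⟩
    have e : ρ - 1 = n - 1 - (n - ρ + 1) + 1 := by have := G.rank; have := G.rho_pos; omega
    rw [e, pow_succ, mul_div_assoc, div_self (by linarith), mul_one]

end Geo
end

section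
variable {n : ℕ}

/-- `M(x) = ∑_{β ∈ B} |x^β|`, which is comparable to the size of a generic series supported
in the Newton polyhedron. -/
def MB (B : Finset (Fin n → ℕ)) (x : Fin n → ℝ) : ℝ := ∑ β ∈ B, |mono β x|

lemma abs_mono (β : Fin n → ℕ) (x : Fin n → ℝ) : |mono β x| = ∏ i, |x i| ^ β i := by
  simp [mono, Finset.abs_prod]

lemma MB_nonneg (B : Finset (Fin n → ℕ)) (x : Fin n → ℝ) : 0 ≤ MB B x :=
  Finset.sum_nonneg fun _ _ => abs_nonneg _

lemma le_MB {B : Finset (Fin n → ℕ)} {β} (hβ : β ∈ B) (x : Fin n → ℝ) : |mono β x| ≤ MB B x :=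
  Finset.single_le_sum (f := fun β => |mono β x|) (fun _ _ => abs_nonneg _) hβ

@[fun_prop]
lemma continuous_mono (β : Fin n → ℕ) : Continuous (mono β) := by
  unfold mono; fun_prop

@[fun_prop]
lemma continuous_MB (B : Finset (Fin n → ℕ)) : Continuous (MB B) := by
  unfold MB; fun_prop

lemma abs_mono_sgnExp (β : Fin n → ℕ) (σ : Fin n → Bool) (y : Fin n → ℝ) :
    |mono β (sgnExp σ y)| = Real.exp (-dotR y (cv β)) := by
  rw [abs_mono, dotR, ← Finset.sum_neg_distrib, Real.exp_sum]
  refine Finset.prod_congr rfl fun i _ => ?_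
  rw [abs_sgnExp, ← Real.exp_nat_mul, cv]
  congr 1; ring

variable {ρ : ℕ} {j : Fin n} {t₀ : ℝ} {B : Finset (Fin n → ℕ)}
    {V : Submodule ℝ (Fin n → ℝ)} {u₀ : Fin n → ℝ}

namespace Geo

/-- The pointwise estimate in logarithmic coordinates. -/
lemma weight_le (G : Geo n ρ j t₀ B V u₀) {N : ℕ} (hN : 2 / t₀ ≤ N) {t : ℝ} (ht : 0 < t)
    (σ : Fin n → Bool) {y : Fin n → ℝ} (hy : y ∈ Yset n) :
    Real.exp (-∑ i, y i) * ((1 + t * MB B (sgnExp σ y))⁻¹) ^ N ≤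
      t ^ (-1 / t₀) * Real.exp (-(1 / (2 * t₀) *
        (|Real.log t - t₀ * ∑ i, y i| + gap B G.Bne t₀ y))) := by
  have h0 := G.t₀pos
  set T := Real.log t
  set q := ∑ i, y i
  set d := gap B G.Bne t₀ y with hd
  have hdm : mB B G.Bne y = t₀ * q - d := by rw [hd, gap]; ring
  have hd0 : 0 ≤ d := G.gap_nonneg hy
  have hM : Real.exp (T - (t₀ * q - d)) ≤ t * MB B (sgnExp σ y) := by
    obtain ⟨β, hβ, hβe⟩ := Finset.exists_mem_eq_inf' G.Bne (fun β => dotR y (cv β))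
    have h1 := le_MB hβ (sgnExp σ y)
    rw [abs_mono_sgnExp] at h1
    have h2 : dotR y (cv β) = t₀ * q - d := by rw [← hdm, mB, hβe]
    rw [h2] at h1
    rw [sub_eq_add_neg, Real.exp_add, Real.exp_log ht]
    exact mul_le_mul_of_nonneg_left h1 ht.le
  have hpos : 0 < 1 + t * MB B (sgnExp σ y) := by
    have := mul_nonneg ht.le (MB_nonneg B (sgnExp σ y)); linarith
  have hinv : (1 + t * MB B (sgnExp σ y))⁻¹ ≤ Real.exp (-(max 0 (T - (t₀ * q - d)))) := by
    rw [Real.exp_neg]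
    refine inv_anti₀ (Real.exp_pos _) ?_
    rcases le_total 0 (T - (t₀ * q - d)) with h | h
    · rw [max_eq_right h]; linarith
    · rw [max_eq_left h, Real.exp_zero]
      have := mul_nonneg ht.le (MB_nonneg B (sgnExp σ y)); linarith
  calc Real.exp (-q) * ((1 + t * MB B (sgnExp σ y))⁻¹) ^ N
      ≤ Real.exp (-q) * (Real.exp (-(max 0 (T - (t₀ * q - d))))) ^ N := by
        refine mul_le_mul_of_nonneg_left ?_ (Real.exp_pos _).le
        exact pow_le_pow_left₀ (inv_pos.2 hpos).le hinv N
    _ = Real.exp (-q + N * -(max 0 (T - (t₀ * q - d)))) := by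
        rw [← Real.exp_nat_mul, ← Real.exp_add]
    _ ≤ Real.exp (T * (-1 / t₀) + -(1 / (2 * t₀) * (|T - t₀ * q| + d))) := by
        rw [Real.exp_le_exp]
        set D := T - t₀ * q with hD
        have e1 : T - (t₀ * q - d) = D + d := by rw [hD]; ring
        rw [e1]
        have hm0 : 0 ≤ max 0 (D + d) := le_max_left _ _
        have hN' : 2 / t₀ * max 0 (D + d) ≤ N * max 0 (D + d) :=
          mul_le_mul_of_nonneg_right hN hm0
        have e2 : -q = (D - T) / t₀ := by rw [hD]; field_simp; ring
        have key : D - 2 * max 0 (D + d) ≤ -(1 / 2 * (|D| + d)) := by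
          rcases le_total 0 D with h | h
          · rw [abs_of_nonneg h, max_eq_right (by linarith)]; linarith
          · rw [abs_of_nonpos h]
            rcases le_total 0 (D + d) with h' | h'
            · rw [max_eq_right h']; linarith
            · rw [max_eq_left h']; linarith
        have key2 := div_le_div_of_nonneg_right key h0.le
        have e3 : (D - 2 * max 0 (D + d)) / t₀ = D / t₀ - 2 / t₀ * max 0 (D + d) := by
          field_simp
        have e4 : -(1 / 2 * (|D| + d)) / t₀ = -(1 / (2 * t₀) * (|D| + d)) := by
          field_simp
        have e5 : T * (-1 / t₀) = - (T / t₀) := by field_simp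
        rw [e2, sub_div, e5]
        linarith
    _ = t ^ (-1 / t₀) * Real.exp (-(1 / (2 * t₀) * (|T - t₀ * q| + d))) := by
        rw [Real.exp_add, Real.rpow_def_of_pos ht]

lemma one_le_log {t : ℝ} (ht : Real.exp 1 ≤ t) : 1 ≤ Real.log t := by
  rw [Real.le_log_iff_exp_le (lt_of_lt_of_le (Real.exp_pos _) ht)]; exact ht

/-- The basic volume integral. -/
theorem volume_main (G : Geo n ρ j t₀ B V u₀) {N : ℕ} (hN : 2 / t₀ ≤ N) :
    ∃ C : ℝ, 0 ≤ C ∧ ∀ t : ℝ, Real.exp 1 ≤ t →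
      ∫⁻ x in PBox n 1, ENNReal.ofReal (((1 + t * MB B x)⁻¹) ^ N)
        ≤ ENNReal.ofReal (C * (t ^ (-1 / t₀) * Real.log t ^ (ρ - 1))) := by
  have h0 := G.t₀pos
  have hc : 0 < 1 / (2 * t₀) := by positivity
  obtain ⟨C, hC, h⟩ := G.core0 hc
  refine ⟨2 ^ n * C, by positivity, fun t ht => ?_⟩
  have htpos : 0 < t := lt_of_lt_of_le (Real.exp_pos _) ht
  have hT := one_le_log ht
  have key := lintegral_PBox_le (n := n) (fun x => ENNReal.ofReal (((1 + t * MB B x)⁻¹) ^ N))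
    (fun y => ENNReal.ofReal (Real.exp (∑ i, y i) * (t ^ (-1 / t₀) * Real.exp (-(1 / (2 * t₀) *
        (|Real.log t - t₀ * ∑ i, y i| + gap B G.Bne t₀ y)))))) (by
      intro σ y hy
      refine ENNReal.ofReal_le_ofReal ?_
      have := mul_le_mul_of_nonneg_left (G.weight_le hN htpos σ hy) (Real.exp_pos (∑ i, y i)).le
      rwa [← mul_assoc, ← Real.exp_add, add_neg_cancel, Real.exp_zero, one_mul] at this)
  refine key.trans ?_
  have e : ∀ y : Fin n → ℝ, ENNReal.ofReal (Real.exp (-∑ i, y i)) *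
      ENNReal.ofReal (Real.exp (∑ i, y i) * (t ^ (-1 / t₀) * Real.exp (-(1 / (2 * t₀) *
        (|Real.log t - t₀ * ∑ i, y i| + gap B G.Bne t₀ y)))))
      = ENNReal.ofReal (t ^ (-1 / t₀)) * ENNReal.ofReal (Real.exp (-(1 / (2 * t₀) *
        (|Real.log t - t₀ * ∑ i, y i| + gap B G.Bne t₀ y)))) := by
    intro y
    rw [← ENNReal.ofReal_mul (Real.exp_pos _).le, ← mul_assoc, ← Real.exp_add, neg_add_cancel,
      Real.exp_zero, one_mul, ENNReal.ofReal_mul (by positivity)]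
  simp only [e]
  rw [lintegral_const_mul' _ _ ENNReal.ofReal_ne_top]
  calc 2 ^ n * (ENNReal.ofReal (t ^ (-1 / t₀)) * _) ≤ ENNReal.ofReal (2 ^ n) *
      (ENNReal.ofReal (t ^ (-1 / t₀)) * ENNReal.ofReal (C * Real.log t ^ (ρ - 1))) := by
        refine mul_le_mul' (le_of_eq ?_) (mul_le_mul' le_rfl (h _ hT))
        rw [ENNReal.ofReal_pow (by norm_num)]; norm_num
    _ = _ := by
        rw [← ENNReal.ofReal_mul (by positivity), ← ENNReal.ofReal_mul (by positivity)]
        congr 1; ring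

/-- The points of the box where `t M` is bounded but `x_j` or some `t x^β`, `β_j ≥ 2`,
is not small. -/
def BadSet (B : Finset (Fin n → ℕ)) (j : Fin n) (A c t : ℝ) : Set (Fin n → ℝ) :=
  {x ∈ PBox n 1 | t * MB B x ≤ A ∧
    (c ≤ |x j| ∨ ∃ β ∈ B, 2 ≤ β j ∧ c ≤ t * |mono β x|)}

/-- Volume of the set of points with `tM ≤ A` on which a functional positive on `u₀` is bounded. -/
lemma volume_aux (G : Geo n ρ j t₀ B V u₀) {b : Fin n → ℝ} (hb : 0 < dotR u₀ b) (A : ℝ)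
    (hA : 0 ≤ A) (K : ℝ) (P : ℝ → (Fin n → ℝ) → Prop)
    (hP : ∀ t : ℝ, Real.exp 1 ≤ t → ∀ σ : Fin n → Bool, ∀ y ∈ Yset n, P t (sgnExp σ y) →
      |dotR y b| ≤ K + |Real.log t - t₀ * ∑ i, y i| + gap B G.Bne t₀ y)
    (hmeas : ∀ t : ℝ, MeasurableSet {x ∈ PBox n 1 | t * MB B x ≤ A ∧ P t x}) :
    ∃ C : ℝ, 0 ≤ C ∧ ∀ t : ℝ, Real.exp 1 ≤ t →
      volume {x ∈ PBox n 1 | t * MB B x ≤ A ∧ P t x}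
        ≤ ENNReal.ofReal (C * (t ^ (-1 / t₀) * (Real.log t ^ (ρ - 1) / Real.log t))) := by
  have h0 := G.t₀pos
  obtain ⟨N, hN⟩ := exists_nat_ge (2 / t₀)
  set c := 1 / (2 * t₀) with hcdef
  have hc : 0 < c := by positivity
  obtain ⟨C, hC, h⟩ := G.core1 hb (half_pos hc)
  set L := (1 + A) ^ N * Real.exp (c / 2 * K) with hL
  have hL0 : 0 ≤ L := by positivity
  refine ⟨2 ^ n * L * C, by positivity, fun t ht => ?_⟩
  have htpos : 0 < t := lt_of_lt_of_le (Real.exp_pos _) ht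
  have hT := one_le_log ht
  have hTpos : 0 < Real.log t := by linarith
  set s := {x ∈ PBox n 1 | t * MB B x ≤ A ∧ P t x} with hs
  have hsub : s ⊆ PBox n 1 := fun x hx => hx.1
  have hm : MeasurableSet s := hmeas t
  have hvol : volume s ≤ ∫⁻ x in PBox n 1, Set.indicator s 1 x := by
    rw [lintegral_indicator_one hm, Measure.restrict_apply hm, Set.inter_eq_left.2 hsub]
  have key := lintegral_PBox_le (n := n) (Set.indicator s 1)
    (fun y => ENNReal.ofReal (Real.exp (∑ i, y i) * (L * t ^ (-1 / t₀) * Real.exp (-(c / 2 *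
        (|Real.log t - t₀ * ∑ i, y i| + gap B G.Bne t₀ y + |dotR y b|)))))) (by
      intro σ y hy
      by_cases hmem : sgnExp σ y ∈ s
      · rw [Set.indicator_of_mem hmem, Pi.one_apply, ← ENNReal.ofReal_one]
        refine ENNReal.ofReal_le_ofReal ?_
        have h1 := G.weight_le hN htpos σ hy
        have h2 := hP t ht σ y hy hmem.2.2
        have hpos : 0 < 1 + t * MB B (sgnExp σ y) := by
          have := mul_nonneg htpos.le (MB_nonneg B (sgnExp σ y)); linarith
        have h3 : 1 ≤ (1 + A) ^ N * ((1 + t * MB B (sgnExp σ y))⁻¹) ^ N := by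
          rw [← mul_pow]
          refine one_le_pow₀ ?_
          rw [← div_eq_mul_inv, one_le_div hpos]
          linarith [hmem.2.1]
        set X := |Real.log t - t₀ * ∑ i, y i| + gap B G.Bne t₀ y with hX
        have h4 : Real.exp (-(c * X)) ≤ Real.exp (c / 2 * K) *
            Real.exp (-(c / 2 * (X + |dotR y b|))) := by
          rw [← Real.exp_add, Real.exp_le_exp]
          have : c / 2 * |dotR y b| ≤ c / 2 * (K + X) :=
            mul_le_mul_of_nonneg_left (by linarith) (half_pos hc).le
          linarith
        have h5 : 0 < t ^ (-1 / t₀) := Real.rpow_pos_of_pos htpos _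
        have hE : Real.exp (∑ i, y i) * Real.exp (-∑ i, y i) = 1 := by
          rw [← Real.exp_add, add_neg_cancel, Real.exp_zero]
        calc (1 : ℝ) ≤ (1 + A) ^ N * ((1 + t * MB B (sgnExp σ y))⁻¹) ^ N := h3
          _ = (1 + A) ^ N * (Real.exp (∑ i, y i) *
                (Real.exp (-∑ i, y i) * ((1 + t * MB B (sgnExp σ y))⁻¹) ^ N)) := by
              rw [← mul_assoc (Real.exp _), hE, one_mul]
          _ ≤ (1 + A) ^ N * (Real.exp (∑ i, y i) * (t ^ (-1 / t₀) *
                (Real.exp (c / 2 * K) * Real.exp (-(c / 2 * (X + |dotR y b|)))))) := by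
              refine mul_le_mul_of_nonneg_left (mul_le_mul_of_nonneg_left (h1.trans ?_)
                (Real.exp_pos _).le) (by positivity)
              exact mul_le_mul_of_nonneg_left h4 h5.le
          _ = _ := by rw [hL]; ring
      · rw [Set.indicator_of_notMem hmem]; exact zero_le)
  refine hvol.trans (key.trans ?_)
  have e : ∀ y : Fin n → ℝ, ENNReal.ofReal (Real.exp (-∑ i, y i)) *
      ENNReal.ofReal (Real.exp (∑ i, y i) * (L * t ^ (-1 / t₀) * Real.exp (-(c / 2 *
        (|Real.log t - t₀ * ∑ i, y i| + gap B G.Bne t₀ y + |dotR y b|)))))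
      = ENNReal.ofReal (L * t ^ (-1 / t₀)) * ENNReal.ofReal (Real.exp (-(c / 2 *
        (|Real.log t - t₀ * ∑ i, y i| + gap B G.Bne t₀ y + |dotR y b|)))) := by
    intro y
    rw [← ENNReal.ofReal_mul (Real.exp_pos _).le, ← mul_assoc, ← Real.exp_add, neg_add_cancel,
      Real.exp_zero, one_mul, ENNReal.ofReal_mul (by positivity)]
  simp only [e]
  rw [lintegral_const_mul' _ _ ENNReal.ofReal_ne_top]
  calc 2 ^ n * (ENNReal.ofReal (L * t ^ (-1 / t₀)) * _) ≤ ENNReal.ofReal (2 ^ n) *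
      (ENNReal.ofReal (L * t ^ (-1 / t₀)) *
        ENNReal.ofReal (C * (Real.log t ^ (ρ - 1) / Real.log t))) := by
        refine mul_le_mul' (le_of_eq ?_) (mul_le_mul' le_rfl (h _ hT))
        rw [ENNReal.ofReal_pow (by norm_num)]; norm_num
    _ = _ := by
        rw [← ENNReal.ofReal_mul (by positivity), ← ENNReal.ofReal_mul (by positivity)]
        congr 1; ring

/-- The two conditions defining `BadSet` bound a further functional which is positive on `u₀`, so
one logarithm is gained over `volume_main`. -/
theorem volume_bad (G : Geo n ρ j t₀ B V u₀) {A c : ℝ} (hA : 0 ≤ A) (hc : 0 < c) :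
    ∃ C : ℝ, 0 ≤ C ∧ ∀ t : ℝ, Real.exp 1 ≤ t →
      volume (BadSet B j A c t)
        ≤ ENNReal.ofReal (C * (t ^ (-1 / t₀) * (Real.log t ^ (ρ - 1) / Real.log t))) := by
  have hms : ∀ (P : ℝ → (Fin n → ℝ) → Prop) (t : ℝ), MeasurableSet {x | P t x} →
      MeasurableSet {x ∈ PBox n 1 | t * MB B x ≤ A ∧ P t x} := fun P t h =>
    (isOpen_PBox 1).measurableSet.inter
      (MeasurableSet.inter (s₁ := {x | t * MB B x ≤ A}) (s₂ := {x | P t x})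
      (measurableSet_le (by fun_prop) (by fun_prop)) h)
  obtain ⟨C₁, hC₁, h₁⟩ := G.volume_aux (b := Pi.single j 1)
    (by rw [dotR_single]; simpa using G.u₀_j) A hA (-Real.log c)
    (fun _ x => c ≤ |x j|) (by
      intro t ht σ y hy hx
      rw [abs_sgnExp, ← Real.log_le_iff_le_exp hc] at hx
      have := G.gap_nonneg hy
      rw [dotR_single, mul_one, abs_of_pos (hy j)]
      linarith [abs_nonneg (Real.log t - t₀ * ∑ i, y i)])
    (fun t => hms (fun _ x => c ≤ |x j|) t (measurableSet_le (by fun_prop) (by fun_prop)))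
  have h₂ : ∀ β : Fin n → ℕ, ∃ C : ℝ, 0 ≤ C ∧ (β ∈ B → 2 ≤ β j → ∀ t : ℝ, Real.exp 1 ≤ t →
      volume {x ∈ PBox n 1 | t * MB B x ≤ A ∧ c ≤ t * |mono β x|}
        ≤ ENNReal.ofReal (C * (t ^ (-1 / t₀) * (Real.log t ^ (ρ - 1) / Real.log t)))) := by
    intro β
    by_cases hβ : β ∈ B ∧ 2 ≤ β j
    swap
    · exact ⟨0, le_rfl, fun h h' => absurd ⟨h, h'⟩ hβ⟩
    obtain ⟨C, hC, h⟩ := G.volume_aux (G.u₀_two β hβ.1 hβ.2) A hA |Real.log c|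
      (fun t x => c ≤ t * |mono β x|) (by
        intro t ht σ y hy hx
        have htpos : 0 < t := lt_of_lt_of_le (Real.exp_pos _) ht
        rw [abs_mono_sgnExp, ← Real.log_le_log_iff hc (by positivity),
          Real.log_mul htpos.ne' (Real.exp_pos _).ne', Real.log_exp] at hx
        have h1 := mB_le G.Bne y hβ.1
        have h2 : gap B G.Bne t₀ y = t₀ * ∑ i, y i - mB B G.Bne y := rfl
        have h3 := G.gap_nonneg hy
        rw [dotR_sub_right, dotR_const, abs_le]
        have h4 := abs_nonneg (Real.log c)
        have h5 := neg_abs_le (Real.log c)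
        have h6 := le_abs_self (Real.log t - t₀ * ∑ i, y i)
        have h7 := abs_nonneg (Real.log t - t₀ * ∑ i, y i)
        constructor <;> linarith)
      (fun t => hms (fun t x => c ≤ t * |mono β x|) t (measurableSet_le (by fun_prop) (by fun_prop)))
    exact ⟨C, hC, fun _ _ => h⟩
  choose C₂ hC₂ h₂ using h₂
  have hS : 0 ≤ ∑ β ∈ B, C₂ β := Finset.sum_nonneg fun β _ => hC₂ β
  refine ⟨C₁ + ∑ β ∈ B, C₂ β, by positivity, fun t ht => ?_⟩
  have hlog := one_le_log ht
  have htpos : 0 < t := lt_of_lt_of_le (Real.exp_pos _) ht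
  have hX : 0 ≤ t ^ (-1 / t₀) * (Real.log t ^ (ρ - 1) / Real.log t) := by positivity
  have hcov : BadSet B j A c t ⊆ {x ∈ PBox n 1 | t * MB B x ≤ A ∧ c ≤ |x j|} ∪
      ⋃ β ∈ B.filter (fun β => 2 ≤ β j),
        {x ∈ PBox n 1 | t * MB B x ≤ A ∧ c ≤ t * |mono β x|} := by
    rintro x ⟨hx, hA, h | ⟨β, hβ, h2, h⟩⟩
    · exact Or.inl ⟨hx, hA, h⟩
    · exact Or.inr (Set.mem_biUnion (Finset.mem_coe.2 (Finset.mem_filter.2 ⟨hβ, h2⟩)) ⟨hx, hA, h⟩)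
  refine (measure_mono hcov).trans ((measure_union_le _ _).trans ?_)
  rw [add_mul, ENNReal.ofReal_add (by positivity) (by positivity), Finset.sum_mul,
    ENNReal.ofReal_sum_of_nonneg fun β _ => mul_nonneg (hC₂ β) hX]
  refine add_le_add (h₁ t ht) ((measure_biUnion_finset_le _ _).trans ?_)
  refine (Finset.sum_le_sum fun β hβ => ?_).trans
    (Finset.sum_le_sum_of_subset (Finset.filter_subset _ _))
  exact h₂ β (Finset.mem_filter.1 hβ).1 (Finset.mem_filter.1 hβ).2 t ht

end Geo
end

/-! ### Power series and their derivatives -/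

section
variable {n : ℕ}

/-- Total degree of an exponent. -/
def deg (γ : Fin n → ℕ) : ℕ := ∑ i, γ i

/-- The sum of the power series with coefficients `c`. -/
def PS (c : (Fin n → ℕ) → ℝ) (x : Fin n → ℝ) : ℝ := ∑' γ, c γ * mono γ x

/-- Coefficients of `∂_l` of a power series. -/
def Dc (l : Fin n) (c : (Fin n → ℕ) → ℝ) (γ : Fin n → ℕ) : ℝ :=
  (γ l + 1) * c (γ + Pi.single l 1)

/-- Coefficients of the Euler field `x_l ∂_l` applied to a power series. -/
def Ec (l : Fin n) (c : (Fin n → ℕ) → ℝ) (γ : Fin n → ℕ) : ℝ := γ l * c γ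

/-- The open cube of half-side `δ`. -/
def Cube (n : ℕ) (δ : ℝ) : Set (Fin n → ℝ) := {x | ∀ i, |x i| < δ}

lemma isOpen_Cube (δ : ℝ) : IsOpen (Cube n δ) := by
  have : Cube n δ = ⋂ i, {x | |x i| < δ} := by ext; simp [Cube]
  rw [this]
  exact isOpen_iInter_of_finite fun i => isOpen_lt (by fun_prop) (by fun_prop)

lemma convex_Cube (δ : ℝ) : Convex ℝ (Cube n δ) := by
  intro x hx y hy s t hs ht hst i
  calc |(s • x + t • y) i| ≤ s * |x i| + t * |y i| := by
        simp only [Pi.add_apply, Pi.smul_apply, smul_eq_mul]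
        refine (abs_add_le _ _).trans (le_of_eq ?_)
        rw [abs_mul, abs_mul, abs_of_nonneg hs, abs_of_nonneg ht]
    _ < δ := by
        have h1 := hx i
        have h2 := hy i
        rcases hs.eq_or_lt with h | h
        · subst h
          have : t = 1 := by linarith
          subst this; linarith
        · have h3 := mul_lt_mul_of_pos_left h1 h
          have h4 := mul_le_mul_of_nonneg_left h2.le ht
          have h5 : s * δ + t * δ = δ := by rw [← add_mul, hst, one_mul]
          linarith

lemma deg_add (γ γ' : Fin n → ℕ) : deg (γ + γ') = deg γ + deg γ' := by
  simp [deg, Finset.sum_add_distrib]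

lemma deg_single (l : Fin n) (b : ℕ) : deg (Pi.single l b : Fin n → ℕ) = b := by
  simp [deg]

lemma mono_add (γ γ' : Fin n → ℕ) (x : Fin n → ℝ) : mono (γ + γ') x = mono γ x * mono γ' x := by
  simp [mono, pow_add, Finset.prod_mul_distrib]

lemma mono_single (l : Fin n) (b : ℕ) (x : Fin n → ℝ) : mono (Pi.single l b) x = x l ^ b := by
  rw [mono, Finset.prod_eq_single l]
  · simp
  · intro i _ h; simp [h]
  · simp

lemma abs_mono_le {x : Fin n → ℝ} {δ : ℝ} (h : ∀ i, |x i| ≤ δ) (γ : Fin n → ℕ) :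
    |mono γ x| ≤ δ ^ deg γ := by
  rw [abs_mono, deg, ← Finset.prod_pow_eq_pow_sum]
  exact Finset.prod_le_prod (fun _ _ => by positivity) fun i _ =>
    pow_le_pow_left₀ (abs_nonneg _) (h i) _

lemma le_deg (γ : Fin n → ℕ) (l : Fin n) : γ l ≤ deg γ :=
  Finset.single_le_sum (f := γ) (fun _ _ => Nat.zero_le _) (Finset.mem_univ l)

lemma hasFDerivAt_mono (γ : Fin n → ℕ) (x : Fin n → ℝ) :
    HasFDerivAt (mono γ) (∑ l, ((γ l : ℝ) * mono (γ - Pi.single l 1) x) •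
      (ContinuousLinearMap.proj (R := ℝ) (φ := fun _ : Fin n => ℝ) l)) x := by
  have h : ∀ i ∈ (Finset.univ : Finset (Fin n)), HasFDerivAt (fun x : Fin n → ℝ => x i ^ γ i)
      (((γ i : ℝ) * x i ^ (γ i - 1)) •
        (ContinuousLinearMap.proj (R := ℝ) (φ := fun _ : Fin n => ℝ) i)) x := by
    intro i _
    have h1 := (ContinuousLinearMap.proj (R := ℝ) (φ := fun _ : Fin n => ℝ) i).hasFDerivAt (x := x)
    simpa using h1.pow (γ i)
  have := HasFDerivAt.finsetProd h
  have e0 : (fun x : Fin n → ℝ => ∏ i, x i ^ γ i) = mono γ := rfl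
  rw [e0] at this
  refine this.congr_fderiv (Finset.sum_congr rfl fun l _ => ?_)
  rw [smul_smul]
  congr 1
  have e : mono (γ - Pi.single l 1) x = (∏ i ∈ Finset.univ.erase l, x i ^ γ i) *
      x l ^ (γ l - 1) := by
    rw [mono, ← Finset.prod_erase_mul _ _ (Finset.mem_univ l)]
    congr 1
    · refine Finset.prod_congr rfl fun i hi => ?_
      simp [Finset.ne_of_mem_erase hi]
    · simp
  rw [e]; ring

/-- Term by term differentiation of an absolutely convergent power series. -/
lemma hasFDerivAt_PS {c : (Fin n → ℕ) → ℝ} {R : ℝ} (hR : 0 < R)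
    (hc : Summable fun γ => |c γ| * R ^ deg γ) {x : Fin n → ℝ} (hx : x ∈ Cube n (R / 2)) :
    HasFDerivAt (PS c) (∑' γ, c γ • ∑ l, ((γ l : ℝ) * mono (γ - Pi.single l 1) x) •
      (ContinuousLinearMap.proj (R := ℝ) (φ := fun _ : Fin n => ℝ) l)) x ∧
    ∀ l, fderiv ℝ (PS c) x (Pi.single l 1) = PS (Dc l c) x := by
  have hR2 : 0 < R / 2 := by positivity
  have hb : ∀ (γ : Fin n → ℕ) (l : Fin n) (x : Fin n → ℝ), x ∈ Cube n (R / 2) →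
      |(γ l : ℝ) * mono (γ - Pi.single l 1) x| ≤ 2 / R * R ^ deg γ := by
    intro γ l x hx
    rcases Nat.eq_zero_or_pos (γ l) with h | h
    · simp [h]; positivity
    · have e : γ = (γ - Pi.single l 1) + Pi.single l 1 := by
        ext i
        by_cases hi : i = l
        · subst hi; simp; omega
        · simp [hi]
      have hd : deg γ = deg (γ - Pi.single l 1) + 1 := by
        conv_lhs => rw [e]
        rw [deg_add, deg_single]
      have h1 := abs_mono_le (fun i => (hx i).le) (γ - Pi.single l 1)
      have h2 : (γ l : ℝ) ≤ 2 ^ deg γ := by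
        have := (le_deg γ l).trans (Nat.lt_two_pow_self (n := deg γ)).le
        exact_mod_cast this
      rw [abs_mul, Nat.abs_cast]
      calc (γ l : ℝ) * |mono (γ - Pi.single l 1) x|
          ≤ 2 ^ deg γ * (R / 2) ^ deg (γ - Pi.single l 1) := by gcongr
        _ = 2 / R * R ^ deg γ := by
            rw [hd, pow_succ, pow_succ, div_pow]; field_simp
  have hnorm : ∀ (γ : Fin n → ℕ) (x : Fin n → ℝ), x ∈ Cube n (R / 2) →
      ‖c γ • ∑ l, ((γ l : ℝ) * mono (γ - Pi.single l 1) x) •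
      (ContinuousLinearMap.proj (R := ℝ) (φ := fun _ : Fin n => ℝ) l)‖
        ≤ n * (2 / R) * (|c γ| * R ^ deg γ) := by
    intro γ x hx
    rw [norm_smul, Real.norm_eq_abs]
    calc |c γ| * _ ≤ |c γ| * ∑ l : Fin n, 2 / R * R ^ deg γ := by
          gcongr
          refine (norm_sum_le _ _).trans (Finset.sum_le_sum fun l _ => ?_)
          rw [norm_smul, Real.norm_eq_abs]
          refine (mul_le_of_le_one_right (abs_nonneg _) ?_).trans (hb γ l x hx)
          refine ContinuousLinearMap.opNorm_le_bound _ zero_le_one fun y => ?_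
          rw [one_mul]; exact norm_le_pi_norm y l
      _ = _ := by simp; ring
  have hu := hc.mul_left (n * (2 / R))
  have h0 : (0 : Fin n → ℝ) ∈ Cube n (R / 2) := fun i => by simpa using hR2
  have hsum0 : Summable fun γ => c γ * mono γ x := by
    refine Summable.of_norm_bounded hc fun γ => ?_
    rw [Real.norm_eq_abs, abs_mul]
    gcongr
    exact abs_mono_le (fun i => (hx i).le.trans (by linarith)) γ
  have key := hasFDerivAt_tsum_of_isPreconnected hu (isOpen_Cube (R / 2))
    (convex_Cube (n := n) (R / 2)).isPreconnected
    (f := fun γ x => c γ * mono γ x) (fun γ x _ => (hasFDerivAt_mono γ x).const_mul (c γ))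
    hnorm hx hsum0 hx
  refine ⟨key, fun l => ?_⟩
  have hsm : Summable fun γ => c γ • ∑ l, ((γ l : ℝ) * mono (γ - Pi.single l 1) x) •
      (ContinuousLinearMap.proj (R := ℝ) (φ := fun _ : Fin n => ℝ) l) :=
    Summable.of_norm_bounded hu fun γ => hnorm γ x hx
  have e1 : fderiv ℝ (PS c) x = _ := key.fderiv
  rw [e1]
  have e2 := (ContinuousLinearMap.apply ℝ ℝ (Pi.single l (1 : ℝ) : Fin n → ℝ)).map_tsum hsm
  simp only [ContinuousLinearMap.apply_apply] at e2
  rw [e2]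
  have e3 : ∀ γ : Fin n → ℕ, (c γ • ∑ l, ((γ l : ℝ) * mono (γ - Pi.single l 1) x) •
      (ContinuousLinearMap.proj (R := ℝ) (φ := fun _ : Fin n => ℝ) l)) (Pi.single l 1)
      = c γ * ((γ l : ℝ) * mono (γ - Pi.single l 1) x) := by
    intro γ
    simp only [smul_apply, sum_apply,
      ContinuousLinearMap.proj_apply, smul_eq_mul]
    rw [Finset.sum_eq_single l]
    · simp
    · intro i _ hi; simp [hi]
    · simp
  simp only [e3]
  have inj : Function.Injective (fun γ : Fin n → ℕ => γ + Pi.single l 1) := fun a b h =>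
    add_right_cancel h
  rw [← inj.tsum_eq]
  · refine tsum_congr fun γ => ?_
    simp [Dc]; ring
  · intro γ hγ
    have h : γ l ≠ 0 := by
      intro h; simp [h] at hγ
    refine ⟨γ - Pi.single l 1, ?_⟩
    ext i
    by_cases hi : i = l
    · subst hi; simp; omega
    · simp [hi]

end

/-! ### Domination by the generators of the Newton polyhedron -/

section
variable {n : ℕ} {B : Finset (Fin n → ℕ)} {a : (Fin n → ℕ) → ℝ} {R : ℝ}

/-- Every monomial of the support is dominated by `M`. -/
lemma term_le (hB : IsMinGen {α | a α ≠ 0} B) (hR : 0 < R) :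
    ∃ K : ℝ, 0 ≤ K ∧ ∀ z : Fin n → ℝ, (∀ i, |z i| ≤ R / 2) → ∀ α : Fin n → ℕ,
      2 ^ deg α * |a α| * |mono α z| ≤ K * MB B z * (|a α| * R ^ deg α) ∧
      (α ∉ B → ∀ η : ℝ, (∀ i, |z i| ≤ η) →
        2 ^ deg α * |a α| * |mono α z| ≤ η * (K * MB B z * (|a α| * R ^ deg α))) := by
  have hR2 : 0 < R / 2 := by positivity
  set K₀ := ∑ β ∈ B, (2 / R) ^ deg β with hK₀
  have hK₀0 : 0 ≤ K₀ := Finset.sum_nonneg fun _ _ => by positivity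
  refine ⟨K₀ * (1 + 2 / R), by positivity, fun z hz α => ?_⟩
  by_cases hα : a α = 0
  · simp [hα]
  obtain ⟨β, hβ, hle⟩ := hB.le α hα
  obtain ⟨γ, rfl⟩ : ∃ γ, α = β + γ := ⟨α - β, (add_tsub_cancel_of_le hle).symm⟩
  have hK : (2 / R) ^ deg β ≤ K₀ :=
    Finset.single_le_sum (f := fun β => (2 / R) ^ deg β) (fun _ _ => by positivity) hβ
  have hM := le_MB hβ z
  have hM0 := MB_nonneg B z
  have e1 : (2 : ℝ) ^ deg (β + γ) * (R / 2) ^ deg γ = (2 / R) ^ deg β * R ^ deg (β + γ) := by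
    rw [deg_add, pow_add, pow_add, div_pow, div_pow]; field_simp
  rw [mono_add, abs_mul]
  constructor
  · have h1 := abs_mono_le hz γ
    calc 2 ^ deg (β + γ) * |a (β + γ)| * (|mono β z| * |mono γ z|)
        ≤ 2 ^ deg (β + γ) * |a (β + γ)| * (MB B z * (R / 2) ^ deg γ) := by gcongr
      _ = (2 ^ deg (β + γ) * (R / 2) ^ deg γ) * |a (β + γ)| * MB B z := by ring
      _ = (2 / R) ^ deg β * MB B z * (|a (β + γ)| * R ^ deg (β + γ)) := by rw [e1]; ring
      _ ≤ K₀ * (1 + 2 / R) * MB B z * (|a (β + γ)| * R ^ deg (β + γ)) := by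
          gcongr
          calc (2 / R) ^ deg β ≤ K₀ * 1 := by linarith
            _ ≤ _ := by gcongr; linarith [div_pos two_pos hR]
  · intro hα' η hη
    have hγ : γ ≠ 0 := by rintro rfl; exact hα' (by simpa using hβ)
    obtain ⟨l, hl⟩ : ∃ l, γ l ≠ 0 := by
      by_contra! h; exact hγ (funext h)
    have hη0 : 0 ≤ η := (abs_nonneg _).trans (hη l)
    obtain ⟨γ', rfl⟩ : ∃ γ' : Fin n → ℕ, γ = γ' + Pi.single l 1 := by
      refine ⟨γ - Pi.single l 1, ?_⟩
      ext i
      by_cases hi : i = l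
      · subst hi; simp; omega
      · simp [hi]
    have h1 := abs_mono_le hz γ'
    have h2 : |mono (γ' + Pi.single l 1) z| ≤ η * (2 / R) * (R / 2) ^ deg (γ' + Pi.single l 1) := by
      rw [mono_add, abs_mul, mono_single, pow_one, deg_add, deg_single, pow_succ]
      calc |mono γ' z| * |z l| ≤ (R / 2) ^ deg γ' * η := by gcongr; exact hη l
        _ = _ := by field_simp
    set γ := γ' + Pi.single l 1
    calc 2 ^ deg (β + γ) * |a (β + γ)| * (|mono β z| * |mono γ z|)
        ≤ 2 ^ deg (β + γ) * |a (β + γ)| * (MB B z * (η * (2 / R) * (R / 2) ^ deg γ)) := by gcongr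
      _ = η * (2 / R) * ((2 ^ deg (β + γ) * (R / 2) ^ deg γ) * |a (β + γ)| * MB B z) := by ring
      _ = η * ((2 / R) * (2 / R) ^ deg β * MB B z * (|a (β + γ)| * R ^ deg (β + γ))) := by
          rw [e1]; ring
      _ ≤ η * (K₀ * (1 + 2 / R) * MB B z * (|a (β + γ)| * R ^ deg (β + γ))) := by
          have : (2 / R) * (2 / R) ^ deg β ≤ K₀ * (1 + 2 / R) := by
            calc (2 / R) * (2 / R) ^ deg β ≤ (2 / R) * K₀ := by gcongr
              _ ≤ _ := by nlinarith
          gcongr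

/-- Series dominated termwise by `2 ^ deg α |a_α| |z^α|` are bounded by `M(z)`, and up to a small
multiple of `M(z)` they are given by their terms with exponents in `B`. -/
lemma dom_sum (hB : IsMinGen {α | a α ≠ 0} B) (hR : 0 < R)
    (hs : Summable fun γ => |a γ| * R ^ deg γ) :
    ∃ C : ℝ, 0 ≤ C ∧ ∀ z : Fin n → ℝ, (∀ i, |z i| ≤ R / 2) →
      (Summable fun α => 2 ^ deg α * |a α| * |mono α z|) ∧
      ∑' α, 2 ^ deg α * |a α| * |mono α z| ≤ C * MB B z ∧
      ∀ g : (Fin n → ℕ) → ℝ, (∀ α, |g α| ≤ 2 ^ deg α * |a α| * |mono α z|) →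
        Summable g ∧ ∀ η : ℝ, 0 ≤ η → (∀ i, |z i| ≤ η) → |∑' α, g α - ∑ α ∈ B, g α| ≤ C * (η * MB B z) := by
  obtain ⟨K, hK, h⟩ := term_le hB hR
  set S := ∑' γ, |a γ| * R ^ deg γ
  refine ⟨K * S, mul_nonneg hK (tsum_nonneg fun _ => by positivity), fun z hz => ?_⟩
  have hs' := hs.mul_left (K * MB B z)
  have h1 : Summable fun α => 2 ^ deg α * |a α| * |mono α z| :=
    Summable.of_nonneg_of_le (fun _ => by positivity) (fun α => (h z hz α).1) hs'
  refine ⟨h1, ?_, fun g hg => ?_⟩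
  · refine (h1.tsum_le_tsum (fun α => (h z hz α).1) hs').trans (le_of_eq ?_)
    rw [tsum_mul_left]; ring
  have hgs : Summable g := Summable.of_norm_bounded h1 hg
  refine ⟨hgs, fun η hη0 hη => ?_⟩
  rw [← hgs.sum_add_tsum_compl (s := B), add_sub_cancel_left]
  have hs'' := (hs'.mul_left η).subtype ((↑B : Set (Fin n → ℕ))ᶜ)
  have h2 : ∀ α : ↥((↑B : Set (Fin n → ℕ))ᶜ), ‖g α‖ ≤ η * (K * MB B z * (|a α| * R ^ deg α.1)) :=
    fun α => (hg α).trans ((h z hz α).2 α.2 η hη)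
  rw [← Real.norm_eq_abs]
  refine (tsum_of_norm_bounded hs''.hasSum h2).trans ?_
  refine ((hs'.mul_left η).tsum_subtype_le (fun α => η * (K * MB B z * (|a α| * R ^ deg α)))
    _ ?_).trans (le_of_eq ?_)
  · intro α
    have := MB_nonneg B z
    positivity
  · rw [tsum_mul_left, tsum_mul_left]; ring

end

section
variable {n : ℕ} {B : Finset (Fin n → ℕ)} {a : (Fin n → ℕ) → ℝ} {R : ℝ} {j : Fin n}

/-- Coefficient sequences obtained from `a` by `b` derivatives in `x_j` and any number of
Euler fields: up to polynomial factors they are the `j`-shifts of `a` by `b`. -/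
def Cls (a : (Fin n → ℕ) → ℝ) (j : Fin n) (b : ℕ) (c : (Fin n → ℕ) → ℝ) : Prop :=
  ∃ (C : ℝ) (k : ℕ), 0 ≤ C ∧ ∀ γ, |c γ| ≤ C * (1 + deg γ : ℝ) ^ k * |a (γ + Pi.single j b)|

lemma Cls.base : Cls a j 0 a := ⟨1, 0, zero_le_one, fun γ => by simp⟩

lemma Cls.E {b : ℕ} {c : (Fin n → ℕ) → ℝ} (h : Cls a j b c) (l : Fin n) : Cls a j b (Ec l c) := by
  obtain ⟨C, k, hC, h⟩ := h
  refine ⟨C, k + 1, hC, fun γ => ?_⟩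
  have h1 : (γ l : ℝ) ≤ deg γ := by exact_mod_cast le_deg γ l
  rw [Ec, abs_mul, Nat.abs_cast]
  calc (γ l : ℝ) * |c γ| ≤ (1 + deg γ) * (C * (1 + deg γ : ℝ) ^ k * |a (γ + Pi.single j b)|) := by
        gcongr
        · linarith
        · exact h γ
    _ = _ := by ring

lemma Cls.D {b : ℕ} {c : (Fin n → ℕ) → ℝ} (h : Cls a j b c) : Cls a j (b + 1) (Dc j c) := by
  obtain ⟨C, k, hC, h⟩ := h
  refine ⟨C * 2 ^ k, k + 1, by positivity, fun γ => ?_⟩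
  have h1 : (γ j : ℝ) ≤ deg γ := by exact_mod_cast le_deg γ j
  have h2 := h (γ + Pi.single j 1)
  have e : γ + Pi.single j 1 + Pi.single j b = γ + Pi.single j (b + 1) := by
    rw [add_assoc, ← Pi.single_add, add_comm 1 b]
  rw [e, deg_add, deg_single] at h2
  push_cast at h2
  rw [Dc, abs_mul, abs_of_nonneg (by positivity : (0 : ℝ) ≤ γ j + 1)]
  have h3 : (1 + (deg γ + 1) : ℝ) ≤ 2 * (1 + deg γ) := by
    have : (0 : ℝ) ≤ deg γ := Nat.cast_nonneg _
    linarith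
  calc (γ j + 1 : ℝ) * |c (γ + Pi.single j 1)|
      ≤ (1 + deg γ) * (C * (2 * (1 + deg γ) : ℝ) ^ k * |a (γ + Pi.single j (b + 1))|) := by
        refine mul_le_mul (by linarith) (h2.trans (by gcongr)) (abs_nonneg _) (by positivity)
    _ = _ := by rw [mul_pow]; ring

lemma Cls.bound {b : ℕ} {c : (Fin n → ℕ) → ℝ} (h : Cls a j b c) :
    ∃ C : ℝ, 0 ≤ C ∧ ∀ γ, |c γ| ≤ C * 2 ^ deg γ * |a (γ + Pi.single j b)| := by
  obtain ⟨C, k, hC, h⟩ := h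
  have ht := tendsto_pow_const_div_const_pow_of_one_lt k (one_lt_two : (1 : ℝ) < 2)
  obtain ⟨M, hM⟩ := ht.bddAbove_range
  have hM' : ∀ m : ℕ, (m : ℝ) ^ k ≤ M * 2 ^ m := fun m => by
    have := hM ⟨m, rfl⟩
    rwa [div_le_iff₀ (by positivity)] at this
  have hM0 : 0 ≤ M := by
    have := hM ⟨1, rfl⟩
    refine le_trans ?_ this
    positivity
  refine ⟨C * (M * 2), by positivity, fun γ => (h γ).trans ?_⟩
  have h1 := hM' (1 + deg γ)
  push_cast at h1
  rw [pow_add, pow_one] at h1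
  calc C * (1 + deg γ : ℝ) ^ k * |a (γ + Pi.single j b)|
      ≤ C * (M * (2 * 2 ^ deg γ)) * |a (γ + Pi.single j b)| := by gcongr
    _ = _ := by ring

lemma Cls.summable {b : ℕ} {c : (Fin n → ℕ) → ℝ} (h : Cls a j b c) (hR : 0 < R)
    (hs : Summable fun γ => |a γ| * R ^ deg γ) :
    Summable fun γ => |c γ| * (R / 2) ^ deg γ := by
  obtain ⟨C, hC, h⟩ := h.bound
  have inj : Function.Injective (fun γ : Fin n → ℕ => γ + Pi.single j b) := fun a b h =>
    add_right_cancel h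
  have h1 := (hs.comp_injective inj).mul_left (C / R ^ b)
  refine Summable.of_nonneg_of_le (fun _ => by positivity) (fun γ => ?_) h1
  simp only [Function.comp, deg_add, deg_single]
  calc |c γ| * (R / 2) ^ deg γ ≤ C * 2 ^ deg γ * |a (γ + Pi.single j b)| * (R / 2) ^ deg γ := by
        gcongr; exact h γ
    _ = _ := by rw [div_pow, pow_add]; field_simp

lemma abs_mono_le_abs_mono {x z : Fin n → ℝ} (h : ∀ i, |x i| ≤ |z i|) (γ : Fin n → ℕ) :
    |mono γ x| ≤ |mono γ z| := by
  rw [abs_mono, abs_mono]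
  exact Finset.prod_le_prod (fun _ _ => by positivity) fun i _ =>
    pow_le_pow_left₀ (abs_nonneg _) (h i) _

/-- The series of a class with `b` derivatives in `x_j` are `O(M(z) |z_j|^{-b})`, also at points `x`
with smaller coordinates. -/
lemma Cls.le (hB : IsMinGen {α | a α ≠ 0} B) (hR : 0 < R)
    (hs : Summable fun γ => |a γ| * R ^ deg γ)
    {b : ℕ} {c : (Fin n → ℕ) → ℝ} (h : Cls a j b c) :
    ∃ C : ℝ, 0 ≤ C ∧ ∀ x z : Fin n → ℝ, (∀ i, |x i| ≤ |z i|) → (∀ i, |z i| ≤ R / 2) →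
      |PS c x| * |z j| ^ b ≤ C * MB B z := by
  obtain ⟨C, hC, hc⟩ := h.bound
  obtain ⟨C', hC', h'⟩ := dom_sum hB hR hs
  refine ⟨C * C', by positivity, fun x z hxz hz => ?_⟩
  obtain ⟨h1, h2, -⟩ := h' z hz
  have inj : Function.Injective (fun γ : Fin n → ℕ => γ + Pi.single j b) := fun a b h =>
    add_right_cancel h
  have h3 := (h1.comp_injective inj).mul_left C
  have h4 : ∀ γ, ‖c γ * mono γ x * |z j| ^ b‖ ≤ C * ((fun α => 2 ^ deg α * |a α| * |mono α z|) ∘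
      (fun γ : Fin n → ℕ => γ + Pi.single j b)) γ := by
    intro γ
    simp only [Function.comp, deg_add, deg_single, mono_add, mono_single]
    rw [Real.norm_eq_abs, abs_mul, abs_mul, abs_mul, abs_pow, abs_abs, abs_pow]
    have h5 := abs_mono_le_abs_mono hxz γ
    calc |c γ| * |mono γ x| * |z j| ^ b
        ≤ (C * 2 ^ deg γ * |a (γ + Pi.single j b)|) * |mono γ z| * |z j| ^ b := by
          gcongr; exact hc γ
      _ ≤ (C * 2 ^ (deg γ + b) * |a (γ + Pi.single j b)|) * |mono γ z| * |z j| ^ b := by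
          gcongr
          · norm_num
          · omega
      _ = _ := by ring
  have h6 := tsum_of_norm_bounded h3.hasSum h4
  rw [tsum_mul_right, Real.norm_eq_abs, abs_mul, abs_pow, abs_abs, tsum_mul_left] at h6
  refine h6.trans ?_
  rw [mul_assoc]
  gcongr
  exact (tsum_comp_le_tsum_of_inj h1 (fun _ => by positivity) inj).trans h2

lemma tsum_shift (l : Fin n) (g : (Fin n → ℕ) → ℝ) (hg : ∀ γ, γ l = 0 → g γ = 0) :
    ∑' γ : Fin n → ℕ, g (γ + (Pi.single l 1 : Fin n → ℕ)) = ∑' γ, g γ := by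
  have inj : Function.Injective (fun γ : Fin n → ℕ => γ + Pi.single l 1) := fun a b h =>
    add_right_cancel h
  refine inj.tsum_eq fun γ hγ => ?_
  have h : γ l ≠ 0 := fun h => hγ (hg γ h)
  refine ⟨γ - Pi.single l 1, ?_⟩
  ext i
  by_cases hi : i = l
  · subst hi; simp; omega
  · simp [hi]

lemma euler (l : Fin n) (c : (Fin n → ℕ) → ℝ) (x : Fin n → ℝ) :
    x l * PS (Dc l c) x = PS (Ec l c) x := by
  rw [PS, PS, ← tsum_mul_left, ← tsum_shift l (fun γ => Ec l c γ * mono γ x)]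
  · refine tsum_congr fun γ => ?_
    simp only [Dc, Ec, mono_add, mono_single, pow_one, Pi.add_apply, Pi.single_eq_same]
    push_cast; ring
  · intro γ h; simp [Ec, h]

lemma cast_le_two_pow_deg (γ : Fin n → ℕ) (l : Fin n) : (γ l : ℝ) ≤ 2 ^ deg γ := by
  have := (le_deg γ l).trans (Nat.lt_two_pow_self (n := deg γ)).le
  exact_mod_cast this

/-- The logarithmic derivatives of `f` are given by the terms in `B` up to a small error. -/
lemma expandE (hB : IsMinGen {α | a α ≠ 0} B) (hR : 0 < R)
    (hs : Summable fun γ => |a γ| * R ^ deg γ) :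
    ∃ C : ℝ, 0 ≤ C ∧ ∀ z : Fin n → ℝ, ∀ η : ℝ, 0 ≤ η → (∀ i, |z i| ≤ η) → (∀ i, |z i| < R / 2) →
      ∀ l, |z l * fderiv ℝ (PS a) z (Pi.single l 1) - ∑ β ∈ B, β l * a β * mono β z|
        ≤ C * (η * MB B z) := by
  obtain ⟨C, hC, h⟩ := dom_sum hB hR hs
  refine ⟨C, hC, fun z η hη0 hη hz l => ?_⟩
  rw [(hasFDerivAt_PS hR hs hz).2 l, euler, PS]
  refine (((h z fun i => (hz i).le).2.2 (fun β => Ec l a β * mono β z) fun α => ?_).2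
    η hη0 hη)
  rw [Ec, abs_mul, abs_mul, Nat.abs_cast]
  gcongr
  exact cast_le_two_pow_deg α l

/-- Where the generators linear in `x_j` dominate at `z`, they determine `z_j ∂_j f (x)` for all
points `x` with coordinates bounded by those of `z`. -/
lemma expandD (hB : IsMinGen {α | a α ≠ 0} B) (hR : 0 < R)
    (hs : Summable fun γ => |a γ| * R ^ deg γ) (j : Fin n) :
    ∃ C : ℝ, 0 ≤ C ∧ ∀ x z : Fin n → ℝ, (∀ i, |x i| ≤ |z i|) →
      ∀ η : ℝ, 0 ≤ η → (∀ i, |z i| ≤ η) → (∀ i, |z i| < R / 2) →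
      |z j * fderiv ℝ (PS a) x (Pi.single j 1)
          - z j * ∑ β ∈ B with β j = 1, a β * mono (β - Pi.single j 1) x|
        ≤ C * ∑ β ∈ B with β j ≠ 1, |mono β z| + C * (η * MB B z) := by
  obtain ⟨C, hC, h⟩ := dom_sum hB hR hs
  have hC₁ : 0 ≤ ∑ β ∈ B, 2 ^ deg β * |a β| := Finset.sum_nonneg fun _ _ => by positivity
  set C₁ := ∑ β ∈ B, 2 ^ deg β * |a β| with hC₁def
  refine ⟨C + C₁, by positivity, fun x z hxz η hη0 hη hz => ?_⟩
  set g : (Fin n → ℕ) → ℝ := fun α => z j * (α j * a α * mono (α - Pi.single j 1) x) with hg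
  have hgle : ∀ α, |g α| ≤ 2 ^ deg α * |a α| * |mono α z| := by
    intro α
    rcases Nat.eq_zero_or_pos (α j) with h0 | h0
    · simp only [hg, h0]; simp; positivity
    · obtain ⟨γ, rfl⟩ : ∃ γ : Fin n → ℕ, α = γ + Pi.single j 1 := by
        refine ⟨α - Pi.single j 1, ?_⟩
        ext i
        by_cases hi : i = j
        · subst hi; simp; omega
        · simp [hi]
      have h1 := abs_mono_le_abs_mono hxz γ
      have h2 := cast_le_two_pow_deg (γ + Pi.single j 1) j
      simp only [hg]
      rw [add_tsub_cancel_right, mono_add, mono_single, pow_one, abs_mul, abs_mul, abs_mul,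
        Nat.abs_cast, abs_mul]
      calc |z j| * (((γ + Pi.single j 1 : Fin n → ℕ) j : ℝ) * |a (γ + Pi.single j 1)| * |mono γ x|)
          ≤ |z j| * (2 ^ deg (γ + Pi.single j 1) * |a (γ + Pi.single j 1)| * |mono γ z|) := by
            gcongr
        _ = _ := by ring
  have hx : x ∈ Cube n (R / 2) := fun i => (hxz i).trans_lt (hz i)
  have e1 : z j * fderiv ℝ (PS a) x (Pi.single j 1) = ∑' α, g α := by
    rw [(hasFDerivAt_PS hR hs hx).2 j, PS, ← tsum_mul_left, ← tsum_shift j g]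
    · refine tsum_congr fun γ => ?_
      simp [hg, Dc]
    · intro γ h; simp [hg, h]
  have h1 := ((h z fun i => (hz i).le).2.2 g hgle).2 η hη0 hη
  have e2 : ∑ α ∈ B, g α = z j * ∑ β ∈ B with β j = 1, a β * mono (β - Pi.single j 1) x
      + ∑ β ∈ B with β j ≠ 1, g β := by
    rw [← Finset.sum_filter_add_sum_filter_not B (fun β => β j = 1), Finset.mul_sum]
    congr 1
    refine Finset.sum_congr rfl fun β hβ => ?_
    simp [hg, (Finset.mem_filter.1 hβ).2]
  have h2 : |∑ β ∈ B with β j ≠ 1, g β| ≤ C₁ * ∑ β ∈ B with β j ≠ 1, |mono β z| := by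
    refine (Finset.abs_sum_le_sum_abs _ _).trans ?_
    rw [Finset.mul_sum]
    refine Finset.sum_le_sum fun β hβ => (hgle β).trans ?_
    gcongr
    exact Finset.single_le_sum (f := fun β => 2 ^ deg β * |a β|) (fun _ _ => by positivity)
      (Finset.mem_filter.1 hβ).1
  rw [e1]
  rw [e2] at h1
  have h3 : 0 ≤ ∑ β ∈ B with β j ≠ 1, |mono β z| := Finset.sum_nonneg fun _ _ => abs_nonneg _
  have h4 : 0 ≤ C₁ * (η * MB B z) := by have := MB_nonneg B z; positivity
  have h5 := mul_nonneg hC h3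
  rw [abs_le] at h1 h2 ⊢
  constructor <;> nlinarith

end

/-! ### Toric degenerations -/

section
variable {n : ℕ} {B : Finset (Fin n → ℕ)}

lemma mono_ne_zero {x : Fin n → ℝ} (hx : ∀ i, x i ≠ 0) (β : Fin n → ℕ) : mono β x ≠ 0 :=
  Finset.prod_ne_zero_iff.2 fun i _ => pow_ne_zero _ (hx i)

lemma log_abs_mono {x : Fin n → ℝ} (hx : ∀ i, x i ≠ 0) (β : Fin n → ℕ) :
    Real.log |mono β x| = -dotR (fun i => -Real.log |x i|) (cv β) := by
  rw [abs_mono, Real.log_prod fun i _ => pow_ne_zero _ (abs_ne_zero.2 (hx i)), dotR,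
    ← Finset.sum_neg_distrib]
  refine Finset.sum_congr rfl fun i _ => ?_
  rw [Real.log_pow, cv]; ring

/-- A linear map of finite-dimensional spaces has a linear generalised inverse. -/
lemma exists_gen_inverse {V W : Type*} [AddCommGroup V] [Module ℝ V] [AddCommGroup W] [Module ℝ W]
    (E : V →ₗ[ℝ] W) : ∃ S : W →ₗ[ℝ] V, ∀ v, E (S (E v)) = E v := by
  obtain ⟨g, hg⟩ := E.rangeRestrict.exists_rightInverse_of_surjective E.range_rangeRestrict
  obtain ⟨S, hS⟩ := g.exists_extend
  refine ⟨S, fun v => ?_⟩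
  have h1 : S (E v) = g (E.rangeRestrict v) := LinearMap.congr_fun hS (E.rangeRestrict v)
  have h2 := LinearMap.congr_fun hg (E.rangeRestrict v)
  rw [h1]
  exact congrArg Subtype.val h2

/-- Degenerations of the normalised monomials `x^β / M(x)` as `x → 0` are governed by compact
faces of the Newton polyhedron. -/
theorem toric_limit (hB : B.Nonempty) {ι : Type*} (𝒰 : Ultrafilter ι) (x : ι → Fin n → ℝ)
    (hx0 : ∀ N i, x N i ≠ 0) (hx : Tendsto x 𝒰 (𝓝 0)) :
    ∃ (F : Finset (Fin n → ℕ)) (u y : Fin n → ℝ) (c κ : ℝ), F ⊆ B ∧ F.Nonempty ∧ (∀ i, 0 < u i) ∧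
      (∀ β ∈ F, dotR u (cv β) = c) ∧ (∀ β ∈ B, β ∉ F → c < dotR u (cv β)) ∧
      (∀ i, y i ≠ 0) ∧ 0 < κ ∧
      (∀ β ∈ F, Tendsto (fun N => mono β (x N) / MB B (x N)) 𝒰 (𝓝 (κ * mono β y))) ∧
      (∀ β ∈ B, β ∉ F → Tendsto (fun N => mono β (x N) / MB B (x N)) 𝒰 (𝓝 0)) := by
  have hMpos : ∀ N, 0 < MB B (x N) := fun N => by
    obtain ⟨β, hβ⟩ := hB
    exact (abs_pos.2 (mono_ne_zero (hx0 N) β)).trans_le (le_MB hβ _)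
  -- limits of the normalised monomials
  have hp : ∀ β, ∃ p : ℝ, β ∈ B → 0 ≤ p ∧
      Tendsto (fun N => |mono β (x N)| / MB B (x N)) 𝒰 (𝓝 p) := by
    intro β
    by_cases hβ : β ∈ B
    · have hle : ((𝒰.map fun N => |mono β (x N)| / MB B (x N) : Ultrafilter ℝ) : Filter ℝ)
          ≤ 𝓟 (Set.Icc 0 1) := by
        rw [le_principal_iff, Ultrafilter.coe_map, mem_map]
        refine Filter.mem_of_superset univ_mem fun N _ => ?_
        exact ⟨div_nonneg (abs_nonneg _) (hMpos N).le, (div_le_one (hMpos N)).2 (le_MB hβ _)⟩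
      obtain ⟨p, hp, hp'⟩ := isCompact_Icc.ultrafilter_le_nhds _ hle
      exact ⟨p, fun _ => ⟨hp.1, hp'⟩⟩
    · exact ⟨0, fun h => absurd h hβ⟩
  choose p hp using hp
  have hsum : ∑ β ∈ B, p β = 1 := by
    have h1 := tendsto_finsetSum B fun β hβ => (hp β hβ).2
    refine tendsto_nhds_unique h1 ?_
    refine tendsto_const_nhds.congr fun N => ?_
    rw [← Finset.sum_div, ← MB, div_self (hMpos N).ne']
  -- eventually constant signs
  have hsgn : ∀ i, ∃ σ : ℝ, σ ≠ 0 ∧ ∀ᶠ N in 𝒰, x N i = σ * |x N i| := by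
    intro i
    rcases 𝒰.em (fun N => 0 < x N i) with h | h
    · exact ⟨1, one_ne_zero, h.mono fun N hN => by rw [abs_of_pos hN, one_mul]⟩
    · exact ⟨-1, by norm_num, h.mono fun N hN => by
        rw [abs_of_nonpos (not_lt.1 hN)]; ring⟩
  choose σ hσ0 hσ using hsgn
  set F := B.filter fun β => 0 < p β with hF
  have hFne : F.Nonempty := by
    by_contra h
    rw [Finset.not_nonempty_iff_eq_empty] at h
    have : ∑ β ∈ B, p β ≤ 0 := Finset.sum_nonpos fun β hβ => by
      by_contra h'
      have : β ∈ F := Finset.mem_filter.2 ⟨hβ, not_le.1 h'⟩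
      rw [h] at this; simp at this
    linarith
  have hFB : F ⊆ B := Finset.filter_subset _ _
  have hFp : ∀ β ∈ F, 0 < p β := fun β hβ => (Finset.mem_filter.1 hβ).2
  have hFp' : ∀ β ∈ B, β ∉ F → p β = 0 := fun β hβ h =>
    le_antisymm (by by_contra h'; exact h (Finset.mem_filter.2 ⟨hβ, not_le.1 h'⟩)) (hp β hβ).1
  obtain ⟨β₀, hβ₀⟩ := hFne
  -- logarithmic coordinates
  set k : ι → Fin n → ℝ := fun N i => -Real.log |x N i| with hk
  have hk_top : ∀ i, Tendsto (fun N => k N i) 𝒰 atTop := by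
    intro i
    have h1 : Tendsto (fun N => |x N i|) 𝒰 (𝓝[>] 0) := by
      refine tendsto_nhdsWithin_iff.2 ⟨?_, Eventually.of_forall fun N => abs_pos.2 (hx0 N i)⟩
      have := (((continuous_apply i).tendsto (0 : Fin n → ℝ)).comp hx).abs
      simpa using this
    exact tendsto_neg_atBot_atTop.comp (Real.tendsto_log_nhdsGT_zero.comp h1)
  have hlogp : ∀ β ∈ B, ∀ N, dotR (k N) (cv β - cv β₀) =
      Real.log (|mono β₀ (x N)| / MB B (x N)) - Real.log (|mono β (x N)| / MB B (x N)) := by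
    intro β _ N
    rw [Real.log_div (abs_ne_zero.2 (mono_ne_zero (hx0 N) _)) (hMpos N).ne',
      Real.log_div (abs_ne_zero.2 (mono_ne_zero (hx0 N) _)) (hMpos N).ne',
      log_abs_mono (hx0 N), log_abs_mono (hx0 N), dotR_sub_right]
    ring
  let E : (Fin n → ℝ) →ₗ[ℝ] (↥F → ℝ) := LinearMap.pi fun β => dotL (cv β.1 - cv β₀)
  have hE : ∀ v (β : ↥F), E v β = dotR v (cv β.1 - cv β₀) := fun v β => by
    simp [E, dotL]
  obtain ⟨S, hS⟩ := exists_gen_inverse E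
  set e : ↥F → ℝ := fun β => Real.log (p β₀) - Real.log (p β)
  have hElim : Tendsto (fun N => E (k N)) 𝒰 (𝓝 e) := by
    rw [tendsto_pi_nhds]
    intro β
    simp only [hE]
    refine Tendsto.congr (fun N => (hlogp β (hFB β.2) N).symm) ?_
    exact ((hp _ (hFB hβ₀)).2.log (hFp _ hβ₀).ne').sub ((hp _ (hFB β.2)).2.log (hFp _ β.2).ne')
  set w := S e with hw
  have hwlim : Tendsto (fun N => S (E (k N))) 𝒰 (𝓝 w) :=
    ((LinearMap.continuous_of_finiteDimensional S).tendsto e).comp hElim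
  have hdotc : ∀ b : Fin n → ℝ, Continuous fun v : Fin n → ℝ => dotR v b := fun b => by
    unfold dotR; fun_prop
  -- choice of the functional
  have hu1 : ∀ᶠ N in 𝒰, ∀ i, 0 < k N i - S (E (k N)) i := by
    rw [eventually_all]
    intro i
    have h1 : Tendsto (fun N => k N i - S (E (k N)) i) 𝒰 atTop := by
      have h2 := (((continuous_apply i).tendsto w).comp hwlim).neg
      simpa [sub_eq_add_neg] using (hk_top i).atTop_add h2
    exact h1.eventually_gt_atTop 0
  have hu2 : ∀ᶠ N in 𝒰, ∀ β ∈ B, β ∉ F →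
      0 < dotR (k N) (cv β - cv β₀) - dotR (S (E (k N))) (cv β - cv β₀) := by
    refine (Finset.eventually_all B).2 fun β hβ => ?_
    by_cases hβF : β ∈ F
    · exact Eventually.of_forall fun N h => absurd hβF h
    have h2 := (((hdotc (cv β - cv β₀)).tendsto w).comp hwlim).neg
    have h3 : Tendsto (fun N => dotR (k N) (cv β - cv β₀)) 𝒰 atTop := by
      refine Tendsto.congr (fun N => (hlogp β hβ N).symm) ?_
      have h4 := ((hp _ (hFB hβ₀)).2.log (hFp _ hβ₀).ne')
      have h5 : Tendsto (fun N => |mono β (x N)| / MB B (x N)) 𝒰 (𝓝[>] 0) := by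
        refine tendsto_nhdsWithin_iff.2 ⟨?_, Eventually.of_forall fun N =>
          div_pos (abs_pos.2 (mono_ne_zero (hx0 N) _)) (hMpos N)⟩
        have := (hp β hβ).2
        rwa [hFp' β hβ hβF] at this
      have h6 := tendsto_neg_atBot_atTop.comp (Real.tendsto_log_nhdsGT_zero.comp h5)
      simpa [sub_eq_add_neg, Function.comp_def] using h4.add_atTop h6
    have h7 : Tendsto (fun N => dotR (k N) (cv β - cv β₀) - dotR (S (E (k N))) (cv β - cv β₀))
        𝒰 atTop := by
      simpa [sub_eq_add_neg] using h3.atTop_add h2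
    exact (h7.eventually_gt_atTop 0).mono fun N h _ => h
  obtain ⟨N, hN1, hN2⟩ := (hu1.and hu2).exists
  have hES : ∀ N, ∀ β ∈ F, dotR (S (E (k N))) (cv β - cv β₀) = dotR (k N) (cv β - cv β₀) :=
    fun N β hβ => by
      rw [← hE _ ⟨β, hβ⟩, hS, hE]
  set y : Fin n → ℝ := fun i => σ i * Real.exp (-w i) with hy
  have hy0 : ∀ i, y i ≠ 0 := fun i => mul_ne_zero (hσ0 i) (Real.exp_pos _).ne'
  have hmy : ∀ β : Fin n → ℕ, mono β y = mono β σ * Real.exp (-dotR w (cv β)) := by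
    intro β
    simp only [mono, hy, mul_pow, Finset.prod_mul_distrib]
    congr 1
    rw [dotR, ← Finset.sum_neg_distrib, Real.exp_sum]
    refine Finset.prod_congr rfl fun i _ => ?_
    rw [← Real.exp_nat_mul, cv]; congr 1; ring
  have hmx : ∀ β : Fin n → ℕ, ∀ᶠ N in 𝒰, mono β (x N) / MB B (x N) =
      mono β σ * (|mono β (x N)| / MB B (x N)) := by
    intro β
    filter_upwards [eventually_all.2 hσ] with N hN
    rw [abs_mono, ← mul_div_assoc]
    congr 1
    simp only [mono]
    rw [← Finset.prod_mul_distrib]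
    refine Finset.prod_congr rfl fun i _ => ?_
    rw [← mul_pow, ← hN i]
  refine ⟨F, fun i => k N i - S (E (k N)) i, y, dotR (fun i => k N i - S (E (k N)) i) (cv β₀),
    p β₀ * Real.exp (dotR w (cv β₀)), hFB, ⟨β₀, hβ₀⟩, hN1, ?_, ?_, hy0,
    mul_pos (hFp _ hβ₀) (Real.exp_pos _), ?_, ?_⟩
  · intro β hβ
    have h1 := hES N β hβ
    have h2 : dotR (k N - S (E (k N))) (cv β - cv β₀) = 0 := by
      rw [sub_eq_add_neg, dotR_add_left, ← neg_one_smul ℝ, dotR_smul_left, h1]; ring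
    rw [dotR_sub_right] at h2
    exact sub_eq_zero.1 h2
  · intro β hβ hβF
    have h1 := hN2 β hβ hβF
    have h2 : dotR (k N - S (E (k N))) (cv β - cv β₀) =
        dotR (k N) (cv β - cv β₀) - dotR (S (E (k N))) (cv β - cv β₀) := by
      rw [sub_eq_add_neg, dotR_add_left, ← neg_one_smul ℝ, dotR_smul_left]; ring
    rw [← h2, dotR_sub_right] at h1
    exact sub_pos.1 h1
  · intro β hβ
    have h1 : Tendsto (fun N => mono β (x N) / MB B (x N)) 𝒰 (𝓝 (mono β σ * p β)) :=
      ((hp β (hFB hβ)).2.const_mul _).congr' ((hmx β).mono fun N h => h.symm)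
    have h2 : dotR w (cv β - cv β₀) = Real.log (p β₀) - Real.log (p β) := by
      have h3 : Tendsto (fun N => dotR (S (E (k N))) (cv β - cv β₀)) 𝒰
          (𝓝 (dotR w (cv β - cv β₀))) := ((hdotc _).tendsto w).comp hwlim
      refine tendsto_nhds_unique h3 ?_
      have h4 := (tendsto_pi_nhds.1 hElim) ⟨β, hβ⟩
      refine h4.congr fun N => ?_
      rw [hE, hES N β hβ]
    rw [dotR_sub_right] at h2
    have h5 : p β = p β₀ * Real.exp (dotR w (cv β₀)) * Real.exp (-dotR w (cv β)) := by
      have h6 : -dotR w (cv β) = Real.log (p β) - Real.log (p β₀) - dotR w (cv β₀) := by linarith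
      rw [h6, Real.exp_sub, Real.exp_sub, Real.exp_log (hFp _ hβ), Real.exp_log (hFp _ hβ₀)]
      have := (hFp _ hβ₀).ne'
      field_simp
    have h7 : p β₀ * Real.exp (dotR w (cv β₀)) * mono β y = mono β σ * p β := by
      rw [hmy, h5]; ring
    rwa [h7]
  · intro β hβ hβF
    have h1 : Tendsto (fun N => mono β (x N) / MB B (x N)) 𝒰 (𝓝 (mono β σ * p β)) :=
      ((hp β hβ).2.const_mul _).congr' ((hmx β).mono fun N h => h.symm)
    rwa [hFp' β hβ hβF, mul_zero] at h1

end

/-! ### Lower bounds from non-degeneracy and instability -/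

section
variable {n : ℕ} {B : Finset (Fin n → ℕ)} {a : (Fin n → ℕ) → ℝ} {R : ℝ}

/-- A sequence of points with nonzero coordinates shrinking to `0` at rate `1/(N+1)`, as an
ultrafilter limit. -/
lemma tendsto_zero_of_PBox {x : ℕ → Fin n → ℝ} (hx : ∀ N : ℕ, x N ∈ PBox n (1 / (N + 1))) :
    Tendsto x (hyperfilter ℕ : Ultrafilter ℕ) (𝓝 0) := by
  have h : Tendsto x atTop (𝓝 0) := by
    rw [tendsto_pi_nhds]
    intro i
    refine squeeze_zero_norm (fun N => ?_) tendsto_one_div_add_atTop_nhds_zero_nat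
    rw [Real.norm_eq_abs]
    exact (hx N i).2.le
  exact h.mono_left (Nat.hyperfilter_le_atTop)

lemma tendsto_inv_hyper :
    Tendsto (fun N : ℕ => 1 / ((N : ℝ) + 1)) (hyperfilter ℕ : Ultrafilter ℕ) (𝓝 0) :=
  tendsto_one_div_add_atTop_nhds_zero_nat.mono_left Nat.hyperfilter_le_atTop

/-- Non-degeneracy bounds the logarithmic gradient of `f` from below by `M`. -/
theorem gradient_lower (hB : IsMinGen {α | a α ≠ 0} B) (hBne : B.Nonempty) (hR : 0 < R)
    (hs : Summable fun γ => |a γ| * R ^ deg γ)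
    (hnd : NonDegenerateR a (newtonPolyhedron {α | a α ≠ 0})) :
    ∃ c δ : ℝ, 0 < c ∧ 0 < δ ∧ ∀ x ∈ PBox n δ,
      c * MB B x ^ 2 ≤ ∑ l, (x l * fderiv ℝ (PS a) x (Pi.single l 1)) ^ 2 := by
  by_contra hcon
  push Not at hcon
  have hpos : ∀ N : ℕ, 0 < 1 / ((N : ℝ) + 1) := fun N => by positivity
  choose x hx hlt using fun N : ℕ => hcon _ _ (hpos N) (hpos N)
  have hx0 : ∀ N i, x N i ≠ 0 := fun N i => (hx N i).1
  have hlim := tendsto_zero_of_PBox hx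
  obtain ⟨F, u, y, c, κ, hFB, hFne, hu, hFc, hFc', hy, hκ, h1, h2⟩ :=
    toric_limit hBne (hyperfilter ℕ) x hx0 hlim
  obtain ⟨C, hC, hexp⟩ := expandE hB hR hs
  have hMpos : ∀ N, 0 < MB B (x N) := fun N => by
    obtain ⟨β, hβ⟩ := hBne
    exact (abs_pos.2 (mono_ne_zero (hx0 N) β)).trans_le (le_MB hβ _)
  have hinv := tendsto_inv_hyper
  have hzero : ∀ l, ∑ β ∈ F, (β l : ℝ) * a β * (κ * mono β y) = 0 := by
    intro l
    -- the limit of `∑ β_l a_β x^β / M`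
    have hA : Tendsto (fun N => ∑ β ∈ B, (β l : ℝ) * a β * (mono β (x N) / MB B (x N)))
        (hyperfilter ℕ : Ultrafilter ℕ) (𝓝 (∑ β ∈ F, (β l : ℝ) * a β * (κ * mono β y))) := by
      have : ∑ β ∈ F, (β l : ℝ) * a β * (κ * mono β y)
          = ∑ β ∈ B, if β ∈ F then (β l : ℝ) * a β * (κ * mono β y) else 0 := by
        rw [← Finset.sum_filter, Finset.filter_mem_eq_inter, Finset.inter_eq_right.2 hFB]
      rw [this]
      refine tendsto_finsetSum B fun β hβ => ?_
      by_cases hβF : β ∈ F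
      · simp only [hβF, if_true]; exact (h1 β hβF).const_mul _
      · simp only [hβF, if_false]
        simpa using (h2 β hβ hβF).const_mul ((β l : ℝ) * a β)
    refine tendsto_nhds_unique hA ?_
    have hq : Tendsto (fun N : ℕ => Real.sqrt (1 / ((N : ℝ) + 1)) + C * (1 / ((N : ℝ) + 1)))
        (hyperfilter ℕ : Ultrafilter ℕ) (𝓝 0) := by
      simpa using hinv.sqrt.add (hinv.const_mul C)
    have hev : ∀ᶠ N : ℕ in ((hyperfilter ℕ : Ultrafilter ℕ) : Filter ℕ), 1 / ((N : ℝ) + 1) < R / 2 :=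
      hinv.eventually_lt_const (by positivity)
    refine squeeze_zero_norm' ?_ hq
    filter_upwards [hev] with N hN
    have hM := hMpos N
    have h3 := hexp (x N) (1 / (N + 1)) (hpos N).le (fun i => (hx N i).2.le)
      (fun i => (hx N i).2.trans hN) l
    have h4 : |x N l * fderiv ℝ (PS a) (x N) (Pi.single l 1)| ≤
        Real.sqrt (1 / ((N : ℝ) + 1)) * MB B (x N) := by
      have h5 : (x N l * fderiv ℝ (PS a) (x N) (Pi.single l 1)) ^ 2 ≤
          1 / ((N : ℝ) + 1) * MB B (x N) ^ 2 :=
        (Finset.single_le_sum (f := fun l => (x N l * fderiv ℝ (PS a) (x N) (Pi.single l 1)) ^ 2)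
          (fun _ _ => sq_nonneg _) (Finset.mem_univ l)).trans (hlt N).le
      refine abs_le_of_sq_le_sq (h5.trans (le_of_eq ?_)) (by positivity)
      rw [mul_pow, Real.sq_sqrt (hpos N).le]
    have h6 : ∑ β ∈ B, (β l : ℝ) * a β * (mono β (x N) / MB B (x N)) =
        (∑ β ∈ B, (β l : ℝ) * a β * mono β (x N)) / MB B (x N) := by
      rw [Finset.sum_div]
      exact Finset.sum_congr rfl fun β _ => by ring
    rw [h6, Real.norm_eq_abs, abs_div, abs_of_pos hM, div_le_iff₀ hM]
    rw [abs_le] at h3 h4 ⊢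
    constructor <;> nlinarith
  refine hnd (traceFace (newtonPolyhedron {α | a α ≠ 0}) u) ⟨u, fun i => (hu i).le, rfl⟩
    (compact_traceFace hB hu hFc hFB hFne hFc') y hy ?_
  have e : facePoly a (traceFace (newtonPolyhedron {α | a α ≠ 0}) u) =
      fun x => ∑ β ∈ F, a β * mono β x :=
    funext fun x => facePoly_traceFace hB hu hFc hFB hFne hFc' x
  have hd : HasFDerivAt (fun x => ∑ β ∈ F, a β * mono β x) (∑ β ∈ F, a β • ∑ l,
      ((β l : ℝ) * mono (β - Pi.single l 1) y) •
        (ContinuousLinearMap.proj (R := ℝ) (φ := fun _ : Fin n => ℝ) l)) y :=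
    HasFDerivAt.fun_sum fun β _ => (hasFDerivAt_mono β y).const_mul (a β)
  rw [e, hd.fderiv]
  have e2 : ∑ β ∈ F, a β • ∑ l, ((β l : ℝ) * mono (β - Pi.single l 1) y) •
        (ContinuousLinearMap.proj (R := ℝ) (φ := fun _ : Fin n => ℝ) l) =
      ∑ l, (∑ β ∈ F, a β * ((β l : ℝ) * mono (β - Pi.single l 1) y)) •
        (ContinuousLinearMap.proj (R := ℝ) (φ := fun _ : Fin n => ℝ) l) := by
    simp only [Finset.smul_sum, Finset.sum_smul, smul_smul]
    rw [Finset.sum_comm]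
  rw [e2]
  refine Finset.sum_eq_zero fun l _ => ?_
  have e3 : (∑ β ∈ F, a β * ((β l : ℝ) * mono (β - Pi.single l 1) y)) * (κ * y l) = 0 := by
    rw [← hzero l, Finset.sum_mul]
    refine Finset.sum_congr rfl fun β _ => ?_
    rcases Nat.eq_zero_or_pos (β l) with h | h
    · simp [h]
    · have e4 : β = (β - Pi.single l 1) + (Pi.single l 1 : Fin n → ℕ) := by
        ext i
        by_cases hi : i = l
        · subst hi; simp; omega
        · simp [hi]
      have e5 : mono β y = mono (β - Pi.single l 1) y * y l := by
        conv_lhs => rw [e4]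
        rw [mono_add, mono_single, pow_one]
      rw [e5]; ring
  rw [(mul_eq_zero.1 e3).resolve_right (mul_ne_zero hκ.ne' (hy l)), zero_smul]

/-- If the part of `f` linear in `x_j` dominates, then its coefficient does not vanish. -/
theorem linear_lower (hB : IsMinGen {α | a α ≠ 0} B) (hBne : B.Nonempty) (j : Fin n)
    (hun : ∀ γ : Set (Fin n → ℝ), IsFaceOf (newtonPolyhedron {α | a α ≠ 0}) γ → IsCompact γ →
      (∀ y ∈ γ, y j = 1) → ∀ x : Fin n → ℝ, (∀ i, x i ≠ 0) → facePoly a γ x ≠ 0) :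
    ∃ c δ G : ℝ, 0 < c ∧ 0 < δ ∧ 0 < G ∧ ∀ x ∈ PBox n δ,
      (∀ β ∈ B, β j ≠ 1 → G * |mono β x| ≤ ∑ β ∈ B with β j = 1, |mono β x|) →
      c * ∑ β ∈ B with β j = 1, |mono β x| ≤ |∑ β ∈ B with β j = 1, a β * mono β x| := by
  by_contra hcon
  push Not at hcon
  have hpos : ∀ N : ℕ, 0 < 1 / ((N : ℝ) + 1) := fun N => by positivity
  choose x hx hdom hlt using fun N : ℕ => hcon _ _ (N + 1) (hpos N) (hpos N) (by positivity)
  have hx0 : ∀ N i, x N i ≠ 0 := fun N i => (hx N i).1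
  have hlim := tendsto_zero_of_PBox hx
  obtain ⟨F, u, y, c, κ, hFB, hFne, hu, hFc, hFc', hy, hκ, h1, h2⟩ :=
    toric_limit hBne (hyperfilter ℕ) x hx0 hlim
  have hMpos : ∀ N, 0 < MB B (x N) := fun N => by
    obtain ⟨β, hβ⟩ := hBne
    exact (abs_pos.2 (mono_ne_zero (hx0 N) β)).trans_le (le_MB hβ _)
  have hinv := tendsto_inv_hyper
  have hT : ∀ N, ∑ β ∈ B with β j = 1, |mono β (x N)| ≤ MB B (x N) := fun N =>
    Finset.sum_le_sum_of_subset_of_nonneg (Finset.filter_subset _ _) fun _ _ _ => abs_nonneg _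
  have hF1 : ∀ β ∈ F, β j = 1 := by
    intro β hβ
    by_contra hne
    have h3 : Tendsto (fun N => mono β (x N) / MB B (x N)) (hyperfilter ℕ : Ultrafilter ℕ)
        (𝓝 0) := by
      refine squeeze_zero_norm (fun N => ?_) hinv
      rw [Real.norm_eq_abs, abs_div, abs_of_pos (hMpos N), div_le_iff₀ (hMpos N),
        div_mul_eq_mul_div, one_mul, le_div_iff₀ (by positivity), mul_comm]
      exact (hdom N β (hFB hβ) hne).trans (hT N)
    exact mul_ne_zero hκ.ne' (mono_ne_zero hy β) (tendsto_nhds_unique (h1 β hβ) h3)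
  have hzero : ∑ β ∈ F, a β * (κ * mono β y) = 0 := by
    have hA : Tendsto (fun N => ∑ β ∈ B with β j = 1, a β * (mono β (x N) / MB B (x N)))
        (hyperfilter ℕ : Ultrafilter ℕ) (𝓝 (∑ β ∈ F, a β * (κ * mono β y))) := by
      have hFB1 : F ⊆ B.filter fun β => β j = 1 := fun β hβ =>
        Finset.mem_filter.2 ⟨hFB hβ, hF1 β hβ⟩
      have : ∑ β ∈ F, a β * (κ * mono β y)
          = ∑ β ∈ B with β j = 1, if β ∈ F then a β * (κ * mono β y) else 0 := by
        rw [← Finset.sum_filter, Finset.filter_mem_eq_inter, Finset.inter_eq_right.2 hFB1]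
      rw [this]
      refine tendsto_finsetSum _ fun β hβ => ?_
      by_cases hβF : β ∈ F
      · simp only [hβF, if_true]; exact (h1 β hβF).const_mul _
      · simp only [hβF, if_false]
        simpa using (h2 β (Finset.mem_filter.1 hβ).1 hβF).const_mul (a β)
    refine tendsto_nhds_unique hA ?_
    refine squeeze_zero_norm (fun N => ?_) hinv
    have h6 : ∑ β ∈ B with β j = 1, a β * (mono β (x N) / MB B (x N)) =
        (∑ β ∈ B with β j = 1, a β * mono β (x N)) / MB B (x N) := by
      rw [Finset.sum_div]
      exact Finset.sum_congr rfl fun β _ => by ring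
    rw [h6, Real.norm_eq_abs, abs_div, abs_of_pos (hMpos N), div_le_iff₀ (hMpos N)]
    exact (hlt N).le.trans (mul_le_mul_of_nonneg_left (hT N) (hpos N).le)
  refine hun (traceFace (newtonPolyhedron {α | a α ≠ 0}) u) ⟨u, fun i => (hu i).le, rfl⟩
    (compact_traceFace hB hu hFc hFB hFne hFc') ?_ y hy ?_
  · rw [traceFace_subset_hull hB hu hFc hFB hFne hFc']
    have hconv : Convex ℝ {y : Fin n → ℝ | y j = 1} := by
      intro p hp q hq s t _ _ hst
      simp only [Set.mem_ofPred_eq] at hp hq ⊢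
      simp [hp, hq, hst]
    refine fun z hz => convexHull_min ?_ hconv hz
    rintro _ ⟨β, hβ, rfl⟩
    simp [cv, hF1 β hβ]
  · rw [facePoly_traceFace hB hu hFc hFB hFne hFc']
    have : (∑ β ∈ F, a β * mono β y) * κ = 0 := by
      rw [← hzero, Finset.sum_mul]
      exact Finset.sum_congr rfl fun β _ => by ring
    exact (mul_eq_zero.1 this).resolve_right hκ.ne'

end

/-! ### Symbols along a frame -/

section
variable {n : ℕ} {ι : Type*} {F : Type*} [NormedAddCommGroup F] [NormedSpace ℝ F]

/-- The vector field `ρ_l ∂_l` applied to a family of functions. -/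
def vf (ρ : Fin n → ι → (Fin n → ℝ) → ℝ) (l : Fin n) (h : ι → (Fin n → ℝ) → F) :
    ι → (Fin n → ℝ) → F :=
  fun i x => ρ l i x • fderiv ℝ (h i) x (Pi.single l 1)

/-- Symbols of order `m` and weight `w`: families of functions on the open sets `Ω i` all of
whose iterated derivatives, up to order `m`, along the fields `ρ_l ∂_l` are differentiable and
are bounded by a multiple of `w`, uniformly in the index `i`. -/
def Symb (Ω : ι → Set (Fin n → ℝ)) (ρ : Fin n → ι → (Fin n → ℝ) → ℝ) :
    ℕ → (ι → (Fin n → ℝ) → ℝ) → (ι → (Fin n → ℝ) → F) → Prop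
  | 0, w, h => (∀ i, ∀ x ∈ Ω i, DifferentiableAt ℝ (h i) x) ∧
      ∃ C : ℝ, 0 ≤ C ∧ ∀ i, ∀ x ∈ Ω i, ‖h i x‖ ≤ C * w i x
  | m + 1, w, h => ((∀ i, ∀ x ∈ Ω i, DifferentiableAt ℝ (h i) x) ∧
      ∃ C : ℝ, 0 ≤ C ∧ ∀ i, ∀ x ∈ Ω i, ‖h i x‖ ≤ C * w i x) ∧
      ∀ l, Symb Ω ρ m w (vf ρ l h)

namespace Symb
variable {Ω : ι → Set (Fin n → ℝ)} {ρ : Fin n → ι → (Fin n → ℝ) → ℝ} {m : ℕ}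
  {w w' : ι → (Fin n → ℝ) → ℝ} {h g : ι → (Fin n → ℝ) → F}

lemma zero_of (hh : Symb Ω ρ m w h) : Symb Ω ρ 0 w h := by
  cases m with
  | zero => exact hh
  | succ m => exact hh.1

lemma diff (hh : Symb Ω ρ m w h) {i : ι} {x : Fin n → ℝ} (hx : x ∈ Ω i) :
    DifferentiableAt ℝ (h i) x := hh.zero_of.1 i x hx

lemma bd (hh : Symb Ω ρ m w h) : ∃ C : ℝ, 0 ≤ C ∧ ∀ i, ∀ x ∈ Ω i, ‖h i x‖ ≤ C * w i x :=
  hh.zero_of.2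

lemma of_succ (hh : Symb Ω ρ (m + 1) w h) : Symb Ω ρ m w h := by
  induction m generalizing h with
  | zero => exact hh.1
  | succ m ih => exact ⟨hh.1, fun l => ih (hh.2 l)⟩

/-- Weights may be replaced by larger ones. -/
lemma mono_w (hh : Symb Ω ρ m w h) {C : ℝ} (hC : 0 ≤ C)
    (hw : ∀ i, ∀ x ∈ Ω i, w i x ≤ C * w' i x) : Symb Ω ρ m w' h := by
  have key : ∀ k : ι → (Fin n → ℝ) → F, Symb Ω ρ 0 w k → Symb Ω ρ 0 w' k := by
    rintro k ⟨h1, D, hD, h2⟩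
    refine ⟨h1, D * C, by positivity, fun i x hx => (h2 i x hx).trans ?_⟩
    rw [mul_assoc]
    exact mul_le_mul_of_nonneg_left (hw i x hx) hD
  induction m generalizing h with
  | zero => exact key h hh
  | succ m ih => exact ⟨key h hh.1, fun l => ih (hh.2 l)⟩

lemma mono_w' (hh : Symb Ω ρ m w h) (hw : ∀ i, ∀ x ∈ Ω i, w i x ≤ w' i x) : Symb Ω ρ m w' h :=
  hh.mono_w zero_le_one fun i x hx => by simpa using hw i x hx

/-- Being a symbol only depends on the values on the open sets `Ω i`. -/
lemma congr (hΩ : ∀ i, IsOpen (Ω i)) (hh : Symb Ω ρ m w h)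
    (hg : ∀ i, ∀ x ∈ Ω i, g i x = h i x) : Symb Ω ρ m w g := by
  have key : ∀ h g : ι → (Fin n → ℝ) → F, (∀ i, ∀ x ∈ Ω i, g i x = h i x) →
      ∀ i, ∀ x ∈ Ω i, g i =ᶠ[𝓝 x] h i := by
    intro h g hg i x hx
    filter_upwards [(hΩ i).mem_nhds hx] with y hy using hg i y hy
  have key0 : ∀ h g : ι → (Fin n → ℝ) → F, Symb Ω ρ 0 w h →
      (∀ i, ∀ x ∈ Ω i, g i x = h i x) → Symb Ω ρ 0 w g := by
    rintro h g ⟨h1, D, hD, h2⟩ hg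
    refine ⟨fun i x hx => (h1 i x hx).congr_of_eventuallyEq (key h g hg i x hx), D, hD,
      fun i x hx => ?_⟩
    rw [hg i x hx]; exact h2 i x hx
  induction m generalizing h g with
  | zero => exact key0 h g hh hg
  | succ m ih =>
    refine ⟨key0 h g hh.1 hg, fun l => ih (hh.2 l) fun i x hx => ?_⟩
    simp only [vf, (key h g hg i x hx).fderiv_eq]

lemma add (hΩ : ∀ i, IsOpen (Ω i)) (hh : Symb Ω ρ m w h) (hg : Symb Ω ρ m w g) :
    Symb Ω ρ m w (fun i x => h i x + g i x) := by
  have key : ∀ h g : ι → (Fin n → ℝ) → F, Symb Ω ρ 0 w h → Symb Ω ρ 0 w g →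
      Symb Ω ρ 0 w (fun i x => h i x + g i x) := by
    rintro h g ⟨h1, D, hD, h2⟩ ⟨h1', D', hD', h2'⟩
    refine ⟨fun i x hx => (h1 i x hx).add (h1' i x hx), D + D', by positivity, fun i x hx => ?_⟩
    rw [add_mul]
    exact (norm_add_le _ _).trans (add_le_add (h2 i x hx) (h2' i x hx))
  induction m generalizing h g with
  | zero => exact key h g hh hg
  | succ m ih =>
    refine ⟨key h g hh.1 hg.1, fun l => (ih (hh.2 l) (hg.2 l)).congr hΩ fun i x hx => ?_⟩
    simp only [vf]
    rw [fderiv_fun_add (hh.diff hx) (hg.diff hx)]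
    simp

lemma clm {F' : Type*} [NormedAddCommGroup F'] [NormedSpace ℝ F'] (L : F →L[ℝ] F')
    (hΩ : ∀ i, IsOpen (Ω i)) (hh : Symb Ω ρ m w h) : Symb Ω ρ m w (fun i x => L (h i x)) := by
  have key : ∀ h : ι → (Fin n → ℝ) → F, Symb Ω ρ 0 w h →
      Symb Ω ρ 0 w (fun i x => L (h i x)) := by
    rintro h ⟨h1, D, hD, h2⟩
    refine ⟨fun i x hx => L.differentiableAt.comp x (h1 i x hx), ‖L‖ * D, by positivity,
      fun i x hx => ?_⟩
    rw [mul_assoc]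
    exact (L.le_opNorm _).trans (mul_le_mul_of_nonneg_left (h2 i x hx) (norm_nonneg _))
  induction m generalizing h with
  | zero => exact key h hh
  | succ m ih =>
    refine ⟨key h hh.1, fun l => (ih (hh.2 l)).congr hΩ fun i x hx => ?_⟩
    simp only [vf]
    have : HasFDerivAt (fun x => L (h i x)) (L.comp (fderiv ℝ (h i) x)) x :=
      L.hasFDerivAt.comp x (hh.diff hx).hasFDerivAt
    rw [this.fderiv]
    simp

lemma const (c : F) (hw : ∃ C : ℝ, 0 ≤ C ∧ ∀ i, ∀ x ∈ Ω i, ‖c‖ ≤ C * w i x) :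
    Symb Ω ρ m w (fun _ _ => c) := by
  induction m generalizing c with
  | zero => exact ⟨fun i x _ => differentiableAt_const _, hw⟩
  | succ m ih =>
    refine ⟨⟨fun i x _ => differentiableAt_const _, hw⟩, fun l => ?_⟩
    have : vf ρ l (fun (_ : ι) (_ : Fin n → ℝ) => c) = fun _ _ => 0 := by
      funext i x; simp [vf]
    rw [this]
    exact ih 0 ⟨0, le_rfl, fun i x hx => by simp⟩

lemma zero : Symb Ω ρ m w (fun _ _ => (0 : F)) :=
  const 0 ⟨0, le_rfl, fun i x hx => by simp⟩

lemma sum (hΩ : ∀ i, IsOpen (Ω i)) {κ : Type*} (s : Finset κ)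
    {k : κ → ι → (Fin n → ℝ) → F} (hk : ∀ a ∈ s, Symb Ω ρ m w (k a)) :
    Symb Ω ρ m w (fun i x => ∑ a ∈ s, k a i x) := by
  classical
  induction s using Finset.induction_on with
  | empty => simpa using zero
  | insert a s ha ih =>
    have := (hk a (Finset.mem_insert_self a s)).add hΩ
      (ih fun b hb => hk b (Finset.mem_insert_of_mem hb))
    refine this.congr hΩ fun i x hx => ?_
    rw [Finset.sum_insert ha]

lemma smul (hΩ : ∀ i, IsOpen (Ω i)) {u : ι → (Fin n → ℝ) → ℝ}
    (hw0 : ∀ i, ∀ x ∈ Ω i, 0 ≤ w i x)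
    (hu : Symb Ω ρ m w u) (hg : Symb Ω ρ m w' g) :
    Symb Ω ρ m (fun i x => w i x * w' i x) (fun i x => u i x • g i x) := by
  have key : ∀ (u : ι → (Fin n → ℝ) → ℝ) (g : ι → (Fin n → ℝ) → F), Symb Ω ρ 0 w u →
      Symb Ω ρ 0 w' g → Symb Ω ρ 0 (fun i x => w i x * w' i x) (fun i x => u i x • g i x) := by
    rintro u g ⟨h1, D, hD, h2⟩ ⟨h1', D', hD', h2'⟩
    refine ⟨fun i x hx => (h1 i x hx).smul (h1' i x hx), D * D', by positivity,
      fun i x hx => ?_⟩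
    have h0 := hw0 i x hx
    calc ‖u i x • g i x‖ ≤ ‖u i x‖ * ‖g i x‖ := norm_smul_le _ _
      _ ≤ (D * w i x) * (D' * w' i x) :=
        mul_le_mul (h2 i x hx) (h2' i x hx) (norm_nonneg _) (by positivity)
      _ = D * D' * (w i x * w' i x) := by ring
  induction m generalizing u g with
  | zero => exact key u g hu hg
  | succ m ih =>
    refine ⟨key u g hu.1 hg.1, fun l =>
      ((ih hu.of_succ (hg.2 l)).add hΩ (ih (hu.2 l) hg.of_succ)).congr hΩ fun i x hx => ?_⟩
    simp only [vf]
    rw [fderiv_fun_smul (hu.diff hx) (hg.diff hx)]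
    simp [smul_smul, mul_comm]

lemma mul (hΩ : ∀ i, IsOpen (Ω i)) {u v : ι → (Fin n → ℝ) → ℝ}
    (hw0 : ∀ i, ∀ x ∈ Ω i, 0 ≤ w i x) (hu : Symb Ω ρ m w u) (hv : Symb Ω ρ m w' v) :
    Symb Ω ρ m (fun i x => w i x * w' i x) (fun i x => u i x * v i x) :=
  hu.smul hΩ hw0 hv

lemma neg (hΩ : ∀ i, IsOpen (Ω i)) (hh : Symb Ω ρ m w h) : Symb Ω ρ m w (fun i x => -h i x) :=
  (hh.clm (-ContinuousLinearMap.id ℝ F) hΩ).congr hΩ fun i x hx => by simp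

/-- Inverse of a symbol bounded below by its own weight. -/
lemma inv (hΩ : ∀ i, IsOpen (Ω i)) {u : ι → (Fin n → ℝ) → ℝ}
    (hw0 : ∀ i, ∀ x ∈ Ω i, 0 < w i x) {c : ℝ} (hc : 0 < c)
    (hu : Symb Ω ρ m w u) (hl : ∀ i, ∀ x ∈ Ω i, c * w i x ≤ u i x) :
    Symb Ω ρ m (fun i x => (w i x)⁻¹) (fun i x => (u i x)⁻¹) := by
  have hpos : ∀ i, ∀ x ∈ Ω i, 0 < u i x := fun i x hx =>
    (mul_pos hc (hw0 i x hx)).trans_le (hl i x hx)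
  have hwi : ∀ i, ∀ x ∈ Ω i, 0 ≤ (w i x)⁻¹ := fun i x hx => (inv_pos.2 (hw0 i x hx)).le
  have key : Symb Ω ρ 0 (fun i x => (w i x)⁻¹) (fun i x => (u i x)⁻¹) := by
    refine ⟨fun i x hx => (hu.diff hx).inv (hpos i x hx).ne', c⁻¹, by positivity,
      fun i x hx => ?_⟩
    rw [Real.norm_eq_abs, abs_of_pos (inv_pos.2 (hpos i x hx)), ← mul_inv]
    exact inv_anti₀ (mul_pos hc (hw0 i x hx)) (hl i x hx)
  induction m with
  | zero => exact key
  | succ m ih =>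
    have h1 := ih hu.of_succ
    refine ⟨key, fun l => ?_⟩
    have h2 := (((hu.2 l).mul hΩ (fun i x hx => (hw0 i x hx).le) h1).mul hΩ
      (fun i x hx => mul_nonneg (hw0 i x hx).le (hwi i x hx)) h1).neg hΩ
    refine (h2.mono_w' fun i x hx => ?_).congr hΩ fun i x hx => ?_
    · rw [mul_inv_cancel₀ (hw0 i x hx).ne', one_mul]
    · simp only [vf]
      have : HasFDerivAt (fun x => (u i x)⁻¹) ((-(u i x ^ 2)⁻¹) • fderiv ℝ (u i) x) x :=
        (hasDerivAt_inv (hpos i x hx).ne').comp_hasFDerivAt x (hu.diff hx).hasFDerivAt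
      rw [this.fderiv]
      simp only [smul_apply, smul_eq_mul]
      have := (hpos i x hx).ne'
      field_simp

end Symb

/-- Positive families which are symbols of every order with themselves as weight. -/
structure HomS (Ω : ι → Set (Fin n → ℝ)) (ρ : Fin n → ι → (Fin n → ℝ) → ℝ)
    (h : ι → (Fin n → ℝ) → ℝ) : Prop where
  pos : ∀ i, ∀ x ∈ Ω i, 0 < h i x
  sym : ∀ m, Symb Ω ρ m h h

namespace HomS
variable {Ω : ι → Set (Fin n → ℝ)} {ρ : Fin n → ι → (Fin n → ℝ) → ℝ}
  {h g : ι → (Fin n → ℝ) → ℝ}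

lemma mul (hΩ : ∀ i, IsOpen (Ω i)) (hh : HomS Ω ρ h) (hg : HomS Ω ρ g) :
    HomS Ω ρ (fun i x => h i x * g i x) :=
  ⟨fun i x hx => mul_pos (hh.pos i x hx) (hg.pos i x hx),
    fun m => (hh.sym m).mul hΩ (fun i x hx => (hh.pos i x hx).le) (hg.sym m)⟩

lemma add (hΩ : ∀ i, IsOpen (Ω i)) (hh : HomS Ω ρ h) (hg : HomS Ω ρ g) :
    HomS Ω ρ (fun i x => h i x + g i x) :=
  ⟨fun i x hx => add_pos (hh.pos i x hx) (hg.pos i x hx), fun m =>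
    ((hh.sym m).mono_w' fun i x hx => le_add_of_nonneg_right (hg.pos i x hx).le).add hΩ
      ((hg.sym m).mono_w' fun i x hx => le_add_of_nonneg_left (hh.pos i x hx).le)⟩

lemma inv (hΩ : ∀ i, IsOpen (Ω i)) (hh : HomS Ω ρ h) : HomS Ω ρ (fun i x => (h i x)⁻¹) :=
  ⟨fun i x hx => inv_pos.2 (hh.pos i x hx), fun m => (hh.sym m).inv hΩ hh.pos one_pos
    fun i x _ => by simp⟩

/-- Positive functions of the index alone. -/
lemma param {p : ι → ℝ} (hp : ∀ i, 0 < p i) : HomS Ω ρ (fun i _ => p i) := by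
  refine ⟨fun i x _ => hp i, fun m => ?_⟩
  have h0 : Symb Ω ρ 0 (fun i _ => p i) (fun i (_ : Fin n → ℝ) => p i) :=
    ⟨fun i x _ => differentiableAt_const _, 1, zero_le_one, fun i x _ => by
      rw [Real.norm_eq_abs, abs_of_pos (hp i), one_mul]⟩
  cases m with
  | zero => exact h0
  | succ m =>
    refine ⟨h0, fun l => ?_⟩
    have : vf ρ l (fun i (_ : Fin n → ℝ) => p i) = fun _ _ => 0 := by
      funext i x; simp [vf]
    rw [this]
    exact Symb.zero

lemma prod (hΩ : ∀ i, IsOpen (Ω i)) {κ : Type*} (s : Finset κ)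
    {k : κ → ι → (Fin n → ℝ) → ℝ} (hk : ∀ a ∈ s, HomS Ω ρ (k a)) :
    HomS Ω ρ (fun i x => ∏ a ∈ s, k a i x) := by
  classical
  induction s using Finset.induction_on with
  | empty => simpa using param (ρ := ρ) (Ω := Ω) (p := fun _ => (1 : ℝ)) fun _ => one_pos
  | insert a s ha ih =>
    simpa [Finset.prod_insert ha] using (hk a (Finset.mem_insert_self a s)).mul hΩ
      (ih fun b hb => hk b (Finset.mem_insert_of_mem hb))

lemma pow (hΩ : ∀ i, IsOpen (Ω i)) (hh : HomS Ω ρ h) (k : ℕ) : HomS Ω ρ (fun i x => h i x ^ k) := by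
  simpa using prod hΩ (Finset.range k) (fun _ _ => hh)

lemma sum (hΩ : ∀ i, IsOpen (Ω i)) {κ : Type*} {s : Finset κ} (hs : s.Nonempty)
    {k : κ → ι → (Fin n → ℝ) → ℝ} (hk : ∀ a ∈ s, HomS Ω ρ (k a)) :
    HomS Ω ρ (fun i x => ∑ a ∈ s, k a i x) := by
  classical
  induction hs using Finset.Nonempty.cons_induction with
  | singleton a => simpa using hk a (by simp)
  | cons a s ha hs ih =>
    simpa [Finset.sum_cons, -Finset.cons_eq_insert] using (hk a (Finset.mem_cons_self a s)).add hΩ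
      (ih fun b hb => hk b (Finset.mem_cons_of_mem hb))

end HomS
end

/-! ### Integration by parts -/

section
variable {n : ℕ} {ι : Type*}

lemma continuous_of_zero_off {F : Type*} [TopologicalSpace F] [Zero F]
    {K Ω : Set (Fin n → ℝ)} (hK : IsCompact K) (hΩ : IsOpen Ω) (hKΩ : K ⊆ Ω)
    {g : (Fin n → ℝ) → F} (h0 : ∀ x, x ∉ K → g x = 0) (hc : ContinuousOn g Ω) : Continuous g := by
  refine continuous_iff_continuousAt.2 fun x => ?_
  by_cases hx : x ∈ K
  · exact hc.continuousAt (hΩ.mem_nhds (hKΩ hx))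
  · have : g =ᶠ[𝓝 x] fun _ => 0 := by
      filter_upwards [hK.isClosed.isOpen_compl.mem_nhds hx] with y hy using h0 y hy
    exact this.continuousAt

lemma integrable_of_zero_off {K Ω : Set (Fin n → ℝ)} (hK : IsCompact K) (hΩ : IsOpen Ω)
    (hKΩ : K ⊆ Ω) {g : (Fin n → ℝ) → ℂ} (h0 : ∀ x, x ∉ K → g x = 0) (hc : ContinuousOn g Ω) :
    Integrable g :=
  (continuous_of_zero_off hK hΩ hKΩ h0 hc).integrable_of_hasCompactSupport
    (HasCompactSupport.intro hK h0)

lemma fderiv_zero_off {F : Type*} [NormedAddCommGroup F] [NormedSpace ℝ F]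
    {K : Set (Fin n → ℝ)} (hK : IsCompact K) {g : (Fin n → ℝ) → F}
    (h0 : ∀ x, x ∉ K → g x = 0) {x : Fin n → ℝ} (hx : x ∉ K) : HasFDerivAt g (0 : (Fin n → ℝ) →L[ℝ] F) x := by
  have : g =ᶠ[𝓝 x] fun _ => 0 := by
    filter_upwards [hK.isClosed.isOpen_compl.mem_nhds hx] with y hy using h0 y hy
  exact (hasFDerivAt_const (0 : F) x).congr_of_eventuallyEq this

lemma integral_fderiv_zero {K Ω : Set (Fin n → ℝ)} (hK : IsCompact K) (hΩ : IsOpen Ω)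
    (hKΩ : K ⊆ Ω) {g : (Fin n → ℝ) → ℂ} (h0 : ∀ x, x ∉ K → g x = 0)
    (hd : ∀ x ∈ Ω, DifferentiableAt ℝ g x) (v : Fin n → ℝ)
    (hc : ContinuousOn (fun x => fderiv ℝ g x v) Ω) :
    Integrable (fun x => fderiv ℝ g x v) ∧ ∫ x, fderiv ℝ g x v = 0 := by
  have h1 : Integrable (fun x => fderiv ℝ g x v) := integrable_of_zero_off hK hΩ hKΩ
    (fun x hx => by rw [(fderiv_zero_off hK h0 hx).fderiv]; simp) hc
  have h2 : Integrable g := integrable_of_zero_off hK hΩ hKΩ h0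
    fun x hx => (hd x hx).continuousAt.continuousWithinAt
  have hd' : ∀ x, DifferentiableAt ℝ g x := fun x => by
    by_cases hx : x ∈ K
    · exact hd x (hKΩ hx)
    · exact (fderiv_zero_off hK h0 hx).differentiableAt
  refine ⟨h1, ?_⟩
  have := integral_bilinear_hasFDerivAt_right_eq_neg_left_of_integrable (μ := volume)
    (f := fun _ : Fin n → ℝ => (1 : ℂ)) (f' := fun _ => 0) (g := g) (g' := fun x => fderiv ℝ g x)
    (v := v) (B := ContinuousLinearMap.mul ℝ ℂ) (by simp) (by simpa using h1) (by simpa using h2)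
    (fun x _ => hasFDerivAt_const _ _) (fun x _ => (hd' x).hasFDerivAt)
  simpa using this

lemma hasFDerivAt_cexp {Φ : (Fin n → ℝ) → ℝ} {x : Fin n → ℝ} (h : DifferentiableAt ℝ Φ x) :
    HasFDerivAt (fun x => cexp (I * (Φ x : ℂ)))
      ((cexp (I * (Φ x : ℂ)) * I) • (ofRealCLM.comp (fderiv ℝ Φ x))) x := by
  have h1 : HasFDerivAt (fun x => (Φ x : ℂ)) (ofRealCLM.comp (fderiv ℝ Φ x)) x :=
    ofRealCLM.hasFDerivAt.comp x h.hasFDerivAt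
  have h2 := (h1.const_mul I).cexp
  simpa [smul_smul] using h2

lemma norm_cexp_I (y : ℝ) : ‖cexp (I * (y : ℂ))‖ = 1 := by
  rw [mul_comm, Complex.norm_exp_ofReal_mul_I]

/-- Repeated integration by parts: an oscillating integral whose phase has a gradient (in the
frame `ρ_l ∂_l`) of exact size `W` gains any power of `(1 + W)⁻¹`, uniformly in parameters. -/
theorem nonstationary {Ω K : ι → Set (Fin n → ℝ)} {ρ : Fin n → ι → (Fin n → ℝ) → ℝ}
    (hΩ : ∀ i, IsOpen (Ω i)) (hK : ∀ i, IsCompact (K i)) (hKΩ : ∀ i, K i ⊆ Ω i)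
    (hρ : ∀ l i, ∀ x ∈ Ω i, DifferentiableAt ℝ (ρ l i) x)
    (hdv : ∀ m l, Symb Ω ρ m (fun _ _ => 1) (fun i x => fderiv ℝ (ρ l i) x (Pi.single l 1)))
    {Φ W : ι → (Fin n → ℝ) → ℝ} (hW : ∀ i, ∀ x ∈ Ω i, 0 ≤ W i x)
    (hΦ : ∀ i, ∀ x ∈ Ω i, DifferentiableAt ℝ (Φ i) x)
    (hΘ : ∀ m l, Symb Ω ρ m W (vf ρ l Φ)) {c : ℝ} (hc : 0 < c)
    (hlow : ∀ i, ∀ x ∈ Ω i, c * W i x ^ 2 ≤ ∑ l, vf ρ l Φ i x ^ 2) (N : ℕ) :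
    ∀ (w : ι → (Fin n → ℝ) → ℝ) (ψ : ι → (Fin n → ℝ) → ℂ), (∀ i, ∀ x ∈ Ω i, 0 ≤ w i x) →
      (∀ m, Symb Ω ρ m w ψ) → (∀ i, ∀ x, x ∉ K i → ψ i x = 0) →
      ∃ C : ℝ, 0 ≤ C ∧ ∀ i, ‖∫ x, cexp (I * (Φ i x : ℂ)) * ψ i x‖ₑ ≤
        ENNReal.ofReal C * ∫⁻ x in K i, ENNReal.ofReal (w i x * ((1 + W i x)⁻¹) ^ N) := by
  induction N with
  | zero =>
    intro w ψ hw hψ h0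
    obtain ⟨C, hC, hb⟩ := (hψ 0).bd
    refine ⟨C, hC, fun i => ?_⟩
    have hm : MeasurableSet (K i) := (hK i).isClosed.measurableSet
    calc ‖∫ x, cexp (I * (Φ i x : ℂ)) * ψ i x‖ₑ
        ≤ ∫⁻ x, ‖cexp (I * (Φ i x : ℂ)) * ψ i x‖ₑ := enorm_integral_le_lintegral_enorm _
      _ = ∫⁻ x in K i, ‖cexp (I * (Φ i x : ℂ)) * ψ i x‖ₑ := by
          rw [← lintegral_indicator hm]
          refine lintegral_congr fun x => ?_
          by_cases hx : x ∈ K i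
          · rw [Set.indicator_of_mem hx]
          · rw [Set.indicator_of_notMem hx, h0 i x hx]; simp
      _ ≤ ∫⁻ x in K i, ENNReal.ofReal C * ENNReal.ofReal (w i x * ((1 + W i x)⁻¹) ^ 0) := by
          refine setLIntegral_mono' hm fun x hx => ?_
          rw [← ENNReal.ofReal_mul hC, ← ofReal_norm, pow_zero, mul_one, norm_mul, norm_cexp_I,
            one_mul]
          exact ENNReal.ofReal_le_ofReal (hb i x (hKΩ i hx))
      _ = _ := lintegral_const_mul' _ _ ENNReal.ofReal_ne_top
  | succ N ih =>
    intro w ψ hw hψ h0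
    have hV : ∀ i, ∀ x ∈ Ω i, 0 < 1 + W i x := fun i x hx => by linarith [hW i x hx]
    let Θ := fun l => vf ρ l Φ
    let D : ι → (Fin n → ℝ) → ℝ := fun i x => 1 + ∑ l, Θ l i x * Θ l i x
    have hDpos : ∀ i x, 0 < D i x := fun i x =>
      add_pos_of_pos_of_nonneg one_pos (Finset.sum_nonneg fun l _ => mul_self_nonneg _)
    have hDs : ∀ m, Symb Ω ρ m (fun i x => (1 + W i x) ^ 2) D := by
      intro m
      refine (Symb.const (1 : ℝ) ⟨1, zero_le_one, fun i x hx => ?_⟩).add hΩ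
        (Symb.sum hΩ Finset.univ fun l _ => ((hΘ m l).mul hΩ hW (hΘ m l)).mono_w' fun i x hx => ?_)
      · rw [norm_one]; nlinarith [hW i x hx]
      · nlinarith [hW i x hx]
    have hDinv : ∀ m, Symb Ω ρ m (fun i x => ((1 + W i x) ^ 2)⁻¹) (fun i x => (D i x)⁻¹) := by
      intro m
      refine (hDs m).inv hΩ (fun i x hx => pow_pos (hV i x hx) 2)
        (c := min 1 c / 2) (by positivity) fun i x hx => ?_
      have h1 : min 1 c ≤ 1 := min_le_left _ _
      have h2 : min 1 c ≤ c := min_le_right _ _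
      have h3 := hlow i x hx
      have h4 : D i x = 1 + ∑ l, vf ρ l Φ i x ^ 2 := by simp only [D, Θ, sq]
      have h5 := hW i x hx
      have h6 : (1 + W i x) ^ 2 ≤ 2 * (1 + W i x ^ 2) := by nlinarith [sq_nonneg (1 - W i x)]
      have h7 : (0 : ℝ) < min 1 c := by positivity
      rw [h4]
      nlinarith [sq_nonneg (W i x), mul_le_mul_of_nonneg_right h2 (sq_nonneg (W i x)),
        mul_le_mul_of_nonneg_left h6 h7.le]
    let G : Fin n → ι → (Fin n → ℝ) → ℂ := fun l i x => (Θ l i x * (D i x)⁻¹) • ψ i x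
    have hV2 : ∀ i, ∀ x ∈ Ω i, W i x * ((1 + W i x) ^ 2)⁻¹ ≤ (1 + W i x)⁻¹ := fun i x hx => by
      have := hV i x hx
      have h1 := hW i x hx
      rw [← div_eq_mul_inv, ← one_div, div_le_div_iff₀ (by positivity) this]
      nlinarith
    have hG : ∀ m l, Symb Ω ρ m (fun i x => w i x * (1 + W i x)⁻¹) (G l) := by
      intro m l
      have hi : ∀ i, ∀ x ∈ Ω i, 0 ≤ ((1 + W i x) ^ 2)⁻¹ := fun i x hx =>
        inv_nonneg.2 (pow_nonneg (hV i x hx).le 2)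
      refine (((hΘ m l).mul hΩ hW (hDinv m)).smul hΩ
        (fun i x hx => mul_nonneg (hW i x hx) (hi i x hx)) (hψ m)).mono_w' fun i x hx => ?_
      rw [mul_comm (w i x)]
      exact mul_le_mul_of_nonneg_right (hV2 i x hx) (hw i x hx)
    let S : Fin n → ι → (Fin n → ℝ) → ℂ := fun l i x =>
      fderiv ℝ (ρ l i) x (Pi.single l 1) • G l i x + vf ρ l (G l) i x
    have hS : ∀ m l, Symb Ω ρ m (fun i x => w i x * (1 + W i x)⁻¹) (S l) := by
      intro m l
      refine (((hdv m l).smul hΩ (fun _ _ _ => zero_le_one) (hG m l)).mono_w'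
        fun i x hx => ?_).add hΩ ((hG (m + 1) l).2 l)
      rw [one_mul]
    let T : ι → (Fin n → ℝ) → ℂ := fun i x => (D i x)⁻¹ • ψ i x + I * ∑ l, S l i x
    have hT : ∀ m, Symb Ω ρ m (fun i x => w i x * (1 + W i x)⁻¹) T := by
      intro m
      refine (((hDinv m).smul hΩ (fun i x hx => inv_nonneg.2 (pow_nonneg (hV i x hx).le 2))
        (hψ m)).mono_w' fun i x hx => ?_).add hΩ
        (((Symb.sum hΩ Finset.univ fun l _ => hS m l).clm
          (ContinuousLinearMap.mul ℝ ℂ I) hΩ).congr hΩ fun i x hx => rfl)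
      rw [mul_comm (w i x)]
      refine mul_le_mul_of_nonneg_right ?_ (hw i x hx)
      refine inv_anti₀ (hV i x hx) ?_
      nlinarith [hW i x hx]
    have hG0 : ∀ l i x, x ∉ K i → G l i x = 0 := fun l i x hx => by simp [G, h0 i x hx]
    have hS0 : ∀ l i x, x ∉ K i → S l i x = 0 := fun l i x hx => by
      simp [S, hG0 l i x hx, vf, (fderiv_zero_off (hK i) (hG0 l i) hx).fderiv]
    have hT0 : ∀ i x, x ∉ K i → T i x = 0 := fun i x hx => by
      simp [T, h0 i x hx, hS0 _ i x hx]
    obtain ⟨C, hC, hb⟩ := ih _ T (fun i x hx => mul_nonneg (hw i x hx)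
      (inv_nonneg.2 (hV i x hx).le)) hT hT0
    refine ⟨C, hC, fun i => ?_⟩
    have hcongr : ∫ x, cexp (I * (Φ i x : ℂ)) * ψ i x = ∫ x, cexp (I * (Φ i x : ℂ)) * T i x := by
      let e : (Fin n → ℝ) → ℂ := fun x => cexp (I * (Φ i x : ℂ))
      have he : ContinuousOn e (Ω i) := fun x hx =>
        (hasFDerivAt_cexp (hΦ i x hx)).continuousAt.continuousWithinAt
      have hcont : ∀ (w : ι → (Fin n → ℝ) → ℝ) (k : ι → (Fin n → ℝ) → ℂ), Symb Ω ρ 0 w k →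
          ContinuousOn (k i) (Ω i) := fun w k hk x hx =>
        (hk.diff hx).continuousAt.continuousWithinAt
      have i1 : Integrable fun x => e x * ψ i x :=
        integrable_of_zero_off (hK i) (hΩ i) (hKΩ i) (fun x hx => by rw [h0 i x hx, mul_zero])
          (he.mul (hcont _ _ (hψ 0)))
      have i2 : Integrable fun x => e x * T i x :=
        integrable_of_zero_off (hK i) (hΩ i) (hKΩ i) (fun x hx => by rw [hT0 i x hx, mul_zero])
          (he.mul (hcont _ _ (hT 0)))
      let u : Fin n → (Fin n → ℝ) → ℂ := fun l x => ρ l i x • (e x * G l i x)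
      have hu : ∀ l, ∀ x ∈ Ω i, DifferentiableAt ℝ (u l) x ∧
          fderiv ℝ (u l) x (Pi.single l 1) =
            e x * (I * (Θ l i x • G l i x)) + e x * S l i x := by
        intro l x hx
        have hh := (hρ l i x hx).hasFDerivAt.fun_smul
          ((hasFDerivAt_cexp (hΦ i x hx)).mul ((hG 0 l).diff hx).hasFDerivAt)
        refine ⟨hh.differentiableAt, ?_⟩
        have hh' : fderiv ℝ (u l) x = _ := hh.fderiv
        rw [hh']
        simp [S, e, Θ, vf]
        ring
      have hu0 : ∀ l x, x ∉ K i → u l x = 0 := fun l x hx => by simp [u, hG0 l i x hx]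
      have hui := fun l => integral_fderiv_zero (hK i) (hΩ i) (hKΩ i) (hu0 l)
        (fun x hx => (hu l x hx).1) (Pi.single l 1) (by
          have hcΘ : ContinuousOn (Θ l i) (Ω i) := fun x hx =>
            ((hΘ 0 l).diff hx).continuousAt.continuousWithinAt
          have : ContinuousOn (fun x => e x * (I * (Θ l i x • G l i x)) + e x * S l i x) (Ω i) :=
            (he.mul (continuousOn_const.mul (hcΘ.smul (hcont _ _ (hG 0 l))))).add
              (he.mul (hcont _ _ (hS 0 l)))
          exact this.congr fun x hx => (hu l x hx).2)
      have hpt : ∀ x, e x * ψ i x - e x * T i x =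
          ∑ l, (-I) * fderiv ℝ (u l) x (Pi.single l 1) := by
        intro x
        by_cases hx : x ∈ K i
        · have hxΩ := hKΩ i hx
          simp only [(hu _ x hxΩ).2]
          have hD : ((D i x : ℝ) : ℂ) ≠ 0 := by exact_mod_cast (hDpos i x).ne'
          have hψD : ψ i x = (D i x)⁻¹ • ψ i x + ∑ l, Θ l i x • G l i x := by
            have h1 : ∑ l, Θ l i x • G l i x = ((D i x - 1) * (D i x)⁻¹) • ψ i x := by
              simp only [G, smul_smul, ← Finset.sum_smul]
              congr 1
              simp only [D, add_sub_cancel_left, Finset.sum_mul, mul_assoc]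
            rw [h1, ← add_smul]
            have h2 : (D i x)⁻¹ + (D i x - 1) * (D i x)⁻¹ = 1 := by
              have := (hDpos i x).ne'
              field_simp
              ring
            rw [h2, one_smul]
          have h3 : ∀ l, (-I) * (e x * (I * (Θ l i x • G l i x)) + e x * S l i x) =
              e x * (Θ l i x • G l i x) - e x * (I * S l i x) := fun l => by
            linear_combination (-(e x * (Θ l i x • G l i x))) * I_mul_I
          simp only [h3, Finset.sum_sub_distrib, ← Finset.mul_sum]
          conv_lhs => rw [hψD]
          simp only [T]
          ring
        · have : ∀ l, fderiv ℝ (u l) x (Pi.single l 1) = 0 := fun l => by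
            rw [(fderiv_zero_off (hK i) (hu0 l) hx).fderiv]; simp
          simp [h0 i x hx, hT0 i x hx, this]
      have := integral_sub i1 i2
      rw [integral_congr_ae (ae_of_all _ hpt), integral_finsetSum _ fun l _ =>
        (hui l).1.const_mul _] at this
      simp only [integral_const_mul, (hui _).2, mul_zero, Finset.sum_const_zero] at this
      exact sub_eq_zero.1 this.symm
    rw [hcongr]
    refine (hb i).trans (le_of_eq ?_)
    congr 2
    funext x
    rw [pow_succ', mul_assoc]

end

/-! ### The frame adapted to the unstable variable -/

/-- The parameters of the oscillating integrals: the frequency `t`, a large threshold `lam` and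
the width `eps` of a cutoff near the coordinate hyperplanes. -/
structure Par where
  t : ℝ
  lam : ℝ
  eps : ℝ
  ht : 0 < t
  hlam : 0 < lam
  heps : 0 < eps

section
variable {n : ℕ} {B : Finset (Fin n → ℕ)} {j : Fin n} {κ δ : ℝ}

/-- The cube of radius `δ` without the coordinate hyperplanes other than `{x_j = 0}`. -/
def Om (δ : ℝ) (j : Fin n) : Set (Fin n → ℝ) := {x | ∀ l, |x l| < δ ∧ (l ≠ j → x l ≠ 0)}

lemma isOpen_Om : IsOpen (Om δ j) := by
  have : Om δ j = ⋂ l, {x | |x l| < δ ∧ (l ≠ j → x l ≠ 0)} := by ext; simp [Om]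
  rw [this]
  refine isOpen_iInter_of_finite fun l => ?_
  by_cases h : l = j
  · simpa [h] using isOpen_lt (continuous_abs.comp (continuous_apply j)) continuous_const
  · have : {x : Fin n → ℝ | |x l| < δ ∧ (l ≠ j → x l ≠ 0)} = {x | |x l| < δ} ∩ {x | x l ≠ 0} := by
      ext; simp [h]
    rw [this]
    exact (isOpen_lt (continuous_abs.comp (continuous_apply l)) continuous_const).inter
      (isOpen_ne_fun (continuous_apply l) continuous_const)

/-- The monomial `|x^β|` with the factor `x_j` removed. -/
def mo (j : Fin n) (β : Fin n → ℕ) (x : Fin n → ℝ) : ℝ := ∏ l ∈ Finset.univ.erase j, |x l| ^ β l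

/-- The coefficient of `|x_j|` in the part of `MB B` which is linear in `|x_j|`. -/
def M1 (B : Finset (Fin n → ℕ)) (j : Fin n) (x : Fin n → ℝ) : ℝ :=
  ∑ β ∈ B with β j = 1, mo j β x

/-- The size of `x_j` at which `t` times the part of `MB B` linear in `x_j` is `lam`. -/
def Rt (B : Finset (Fin n → ℕ)) (j : Fin n) (p : Par) (x : Fin n → ℝ) : ℝ :=
  p.lam * (p.t * M1 B j x)⁻¹

/-- A smooth scale in `x_j`, independent of `x_j`, at most `Rt` and `δ`, at which the terms of
degree at least two in `x_j` are dominated by the linear ones. -/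
def rad (B : Finset (Fin n → ℕ)) (j : Fin n) (κ δ : ℝ) (p : Par) (x : Fin n → ℝ) : ℝ :=
  Rt B j p x * ((1 + Rt B j p x * δ⁻¹) + ∑ β ∈ B with 2 ≤ β j,
    Rt B j p x ^ β j * mo j β x * (p.t * (κ * p.lam)⁻¹))⁻¹

/-- A smooth substitute for the maximum of `|x_j|` and `rad`. -/
def rr (B : Finset (Fin n → ℕ)) (j : Fin n) (κ δ : ℝ) (p : Par) (x : Fin n → ℝ) : ℝ :=
  Real.sqrt (x j ^ 2 + rad B j κ δ p x ^ 2)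

/-- The coefficients of the frame used for integrating by parts: `x_l ∂_l` for `l ≠ j`, and
`rr ∂_j`. -/
def fld (B : Finset (Fin n → ℕ)) (j : Fin n) (κ δ : ℝ) (l : Fin n) (p : Par)
    (x : Fin n → ℝ) : ℝ := if l = j then rr B j κ δ p x else x l

/-- The point `x` with its coordinate `x_j` replaced by `rr`. -/
def xh (B : Finset (Fin n → ℕ)) (j : Fin n) (κ δ : ℝ) (p : Par) (x : Fin n → ℝ) : Fin n → ℝ :=
  Function.update x j (rr B j κ δ p x)

lemma abs_mono_eq (j : Fin n) (β : Fin n → ℕ) (x : Fin n → ℝ) :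
    |mono β x| = |x j| ^ β j * mo j β x := by
  rw [abs_mono, mo, Finset.mul_prod_erase _ (fun l => |x l| ^ β l) (Finset.mem_univ j)]

lemma mo_nonneg (β : Fin n → ℕ) (x : Fin n → ℝ) : 0 ≤ mo j β x :=
  Finset.prod_nonneg fun _ _ => by positivity

lemma mo_pos (β : Fin n → ℕ) {x : Fin n → ℝ} (hx : ∀ l, l ≠ j → x l ≠ 0) : 0 < mo j β x :=
  Finset.prod_pos fun l hl => pow_pos (abs_pos.2 (hx l (Finset.ne_of_mem_erase hl))) _

lemma mo_congr (β : Fin n → ℕ) {x y : Fin n → ℝ} (hx : ∀ l, l ≠ j → x l = y l) :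
    mo j β x = mo j β y :=
  Finset.prod_congr rfl fun l hl => by rw [hx l (Finset.ne_of_mem_erase hl)]

lemma M1_pos (hB1 : ∃ β ∈ B, β j = 1) {x : Fin n → ℝ} (hx : ∀ l, l ≠ j → x l ≠ 0) :
    0 < M1 B j x := by
  obtain ⟨β, hβ, h1⟩ := hB1
  exact Finset.sum_pos (fun β _ => mo_pos β hx) ⟨β, Finset.mem_filter.2 ⟨hβ, h1⟩⟩

lemma Rt_pos (hB1 : ∃ β ∈ B, β j = 1) (p : Par) {x : Fin n → ℝ} (hx : ∀ l, l ≠ j → x l ≠ 0) :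
    0 < Rt B j p x :=
  mul_pos p.hlam (inv_pos.2 (mul_pos p.ht (M1_pos hB1 hx)))

lemma Rt_mul (hB1 : ∃ β ∈ B, β j = 1) (p : Par) {x : Fin n → ℝ} (hx : ∀ l, l ≠ j → x l ≠ 0) :
    p.t * (Rt B j p x * M1 B j x) = p.lam := by
  have := (M1_pos hB1 hx).ne'
  have := p.ht.ne'
  unfold Rt
  field_simp

lemma rad_terms_nonneg (hκ : 0 < κ) (p : Par) (β : Fin n → ℕ) {x : Fin n → ℝ}
    (hR : 0 ≤ Rt B j p x) : 0 ≤ Rt B j p x ^ β j * mo j β x * (p.t * (κ * p.lam)⁻¹) := by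
  have := p.ht; have := p.hlam; have := mo_nonneg (j := j) β x
  positivity

/-- `rad` expressed through its denominator, with the bounds on the latter. -/
lemma rad_spec (hκ : 0 < κ) (hδ : 0 < δ) (hB1 : ∃ β ∈ B, β j = 1) (p : Par) {x : Fin n → ℝ}
    (hx : ∀ l, l ≠ j → x l ≠ 0) :
    ∃ q : ℝ, 1 ≤ q ∧ rad B j κ δ p x = Rt B j p x / q ∧ Rt B j p x / δ ≤ q ∧
      (∀ β ∈ B, 2 ≤ β j → Rt B j p x ^ β j * mo j β x * (p.t * (κ * p.lam)⁻¹) ≤ q) ∧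
      q = 1 + Rt B j p x * δ⁻¹ + ∑ β ∈ B with 2 ≤ β j,
        Rt B j p x ^ β j * mo j β x * (p.t * (κ * p.lam)⁻¹) := by
  have hR := Rt_pos hB1 p hx
  have h0 : 0 ≤ Rt B j p x * δ⁻¹ := by positivity
  have hS : 0 ≤ ∑ β ∈ B with 2 ≤ β j, Rt B j p x ^ β j * mo j β x * (p.t * (κ * p.lam)⁻¹) :=
    Finset.sum_nonneg fun β _ => rad_terms_nonneg hκ p β hR.le
  refine ⟨_, ?_, rfl, ?_, ?_, rfl⟩
  · linarith
  · rw [div_eq_mul_inv]; linarith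
  · intro β hβ h2
    have := Finset.single_le_sum (s := B.filter fun β => 2 ≤ β j)
      (f := fun β => Rt B j p x ^ β j * mo j β x * (p.t * (κ * p.lam)⁻¹))
      (fun β _ => rad_terms_nonneg hκ p β hR.le) (Finset.mem_filter.2 ⟨hβ, h2⟩)
    linarith

lemma rad_pos (hκ : 0 < κ) (hδ : 0 < δ) (hB1 : ∃ β ∈ B, β j = 1) (p : Par) {x : Fin n → ℝ}
    (hx : ∀ l, l ≠ j → x l ≠ 0) : 0 < rad B j κ δ p x := by
  obtain ⟨q, hq, e, -⟩ := rad_spec hκ hδ hB1 p hx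
  rw [e]; exact div_pos (Rt_pos hB1 p hx) (by linarith)

lemma rad_le (hκ : 0 < κ) (hδ : 0 < δ) (hB1 : ∃ β ∈ B, β j = 1) (p : Par) {x : Fin n → ℝ}
    (hx : ∀ l, l ≠ j → x l ≠ 0) : rad B j κ δ p x ≤ δ := by
  obtain ⟨q, hq, e, h, -⟩ := rad_spec hκ hδ hB1 p hx
  rw [e, div_le_iff₀ (by linarith)]
  rwa [div_le_iff₀ hδ, mul_comm] at h

/-- At the scale `rad`, the terms of degree at least two in `x_j` are dominated by the linear
ones. -/
lemma rad_pow_le (hκ : 0 < κ) (hδ : 0 < δ) (hB1 : ∃ β ∈ B, β j = 1) (p : Par) {x : Fin n → ℝ}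
    (hx : ∀ l, l ≠ j → x l ≠ 0) {β : Fin n → ℕ} (hβ : β ∈ B) (h2 : 2 ≤ β j) :
    rad B j κ δ p x ^ β j * mo j β x ≤ κ * (rad B j κ δ p x * M1 B j x) := by
  obtain ⟨q, hq, e, -, h, -⟩ := rad_spec hκ hδ hB1 p hx
  have hR := Rt_pos hB1 p hx
  have hq0 : 0 < q := by linarith
  have ht := p.ht
  have hl := p.hlam
  have h1 : Rt B j p x ^ β j * mo j β x ≤ q * (κ * p.lam / p.t) := by
    have := h β hβ h2
    rw [← div_eq_mul_inv, mul_div_assoc', div_le_iff₀ (by positivity)] at this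
    rw [mul_div_assoc', le_div_iff₀ ht]; exact this
  have h3 : M1 B j x = p.lam / p.t / Rt B j p x := by
    have := Rt_mul hB1 p hx
    rw [← this]; field_simp
  have h4 : q ^ 2 ≤ q ^ β j := pow_le_pow_right₀ hq h2
  rw [e, div_pow, h3, div_mul_eq_mul_div, div_le_iff₀ (by positivity)]
  calc Rt B j p x ^ β j * mo j β x ≤ q * (κ * p.lam / p.t) := h1
    _ = κ * p.lam / p.t / q * q ^ 2 := by field_simp
    _ ≤ κ * p.lam / p.t / q * q ^ β j := mul_le_mul_of_nonneg_left h4 (by positivity)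
    _ = _ := by field_simp

lemma abs_le_rr (p : Par) (x : Fin n → ℝ) : |x j| ≤ rr B j κ δ p x := by
  rw [← Real.sqrt_sq_eq_abs]
  exact Real.sqrt_le_sqrt (by nlinarith [sq_nonneg (rad B j κ δ p x)])

lemma rad_le_rr (p : Par) (x : Fin n → ℝ) : rad B j κ δ p x ≤ rr B j κ δ p x :=
  Real.le_sqrt_of_sq_le (by nlinarith [sq_nonneg (x j)])

lemma rr_pos (hκ : 0 < κ) (hδ : 0 < δ) (hB1 : ∃ β ∈ B, β j = 1) (p : Par) {x : Fin n → ℝ}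
    (hx : ∀ l, l ≠ j → x l ≠ 0) : 0 < rr B j κ δ p x :=
  (rad_pos hκ hδ hB1 p hx).trans_le (rad_le_rr p x)

lemma rr_lt (hκ : 0 < κ) (hδ : 0 < δ) (hB1 : ∃ β ∈ B, β j = 1) (p : Par) {x : Fin n → ℝ}
    (hx : x ∈ Om δ j) : rr B j κ δ p x < 2 * δ := by
  have h1 := rad_le hκ hδ hB1 p fun l hl => (hx l).2 hl
  have h0 := rad_pos hκ hδ hB1 p fun l hl => (hx l).2 hl
  have h2 := (hx j).1
  rw [rr, Real.sqrt_lt' (by positivity)]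
  have : x j ^ 2 < δ ^ 2 := sq_lt_sq' (by linarith [neg_abs_le (x j)]) (by linarith [le_abs_self (x j)])
  nlinarith

lemma abs_le_xh (p : Par) (x : Fin n → ℝ) (l : Fin n) : |x l| ≤ |xh B j κ δ p x l| := by
  by_cases h : l = j
  · subst h
    rw [xh, Function.update_self]
    exact (abs_le_rr p x).trans (le_abs_self _)
  · rw [xh, Function.update_of_ne h]

lemma xh_j (p : Par) (x : Fin n → ℝ) : xh B j κ δ p x j = rr B j κ δ p x := by
  rw [xh, Function.update_self]

lemma mo_xh (β : Fin n → ℕ) (p : Par) (x : Fin n → ℝ) : mo j β (xh B j κ δ p x) = mo j β x :=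
  mo_congr β fun l hl => by rw [xh, Function.update_of_ne hl]

lemma abs_mono_xh (β : Fin n → ℕ) (p : Par) (x : Fin n → ℝ) :
    |mono β (xh B j κ δ p x)| = rr B j κ δ p x ^ β j * mo j β x := by
  rw [abs_mono_eq j, mo_xh, xh_j, abs_of_nonneg (a := rr B j κ δ p x) (Real.sqrt_nonneg _)]

lemma xh_mem (hκ : 0 < κ) (hδ : 0 < δ) (hB1 : ∃ β ∈ B, β j = 1) (p : Par) {x : Fin n → ℝ}
    (hx : x ∈ Om δ j) : xh B j κ δ p x ∈ PBox n (2 * δ) := by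
  intro l
  by_cases h : l = j
  · subst h
    have h0 := rr_pos hκ hδ hB1 p fun l hl => (hx l).2 hl
    rw [xh_j, abs_of_pos h0]
    exact ⟨h0.ne', rr_lt hκ hδ hB1 p hx⟩
  · rw [xh, Function.update_of_ne h]
    exact ⟨(hx l).2 h, by linarith [(hx l).1]⟩

lemma M_le_xh (p : Par) (x : Fin n → ℝ) : MB B x ≤ MB B (xh B j κ δ p x) :=
  Finset.sum_le_sum fun β _ => abs_mono_le_abs_mono (abs_le_xh p x) β

lemma sum_linear_xh (p : Par) (x : Fin n → ℝ) :
    ∑ β ∈ B with β j = 1, |mono β (xh B j κ δ p x)| = rr B j κ δ p x * M1 B j x := by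
  rw [M1, Finset.mul_sum]
  refine Finset.sum_congr rfl fun β hβ => ?_
  rw [abs_mono_xh, (Finset.mem_filter.1 hβ).2, pow_one]

lemma HomS.add_sum {ι : Type*} {Ω : ι → Set (Fin n → ℝ)} {ρ : Fin n → ι → (Fin n → ℝ) → ℝ}
    (hΩ : ∀ i, IsOpen (Ω i)) {h : ι → (Fin n → ℝ) → ℝ} (hh : HomS Ω ρ h) {α : Type*}
    (s : Finset α) {k : α → ι → (Fin n → ℝ) → ℝ} (hk : ∀ a ∈ s, HomS Ω ρ (k a)) :
    HomS Ω ρ (fun i x => h i x + ∑ a ∈ s, k a i x) := by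
  rcases s.eq_empty_or_nonempty with rfl | hs
  · simpa using hh
  · exact hh.add hΩ (HomS.sum hΩ hs hk)

/-- The open sets of the calculus, not depending on the parameters. -/
abbrev OmF (δ : ℝ) (j : Fin n) : Par → Set (Fin n → ℝ) := fun _ => Om δ j

lemma isOpen_OmF : ∀ p : Par, IsOpen (OmF δ j p) := fun _ => isOpen_Om

lemma vf_of_ne {F : Type*} [NormedAddCommGroup F] [NormedSpace ℝ F] {l : Fin n} (hl : l ≠ j)
    (h : Par → (Fin n → ℝ) → F) (p : Par) (x : Fin n → ℝ) :
    vf (fld B j κ δ) l h p x = x l • fderiv ℝ (h p) x (Pi.single l 1) := by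
  simp [vf, fld, hl]

lemma homS_abs {l : Fin n} (hl : l ≠ j) :
    HomS (OmF δ j) (fld B j κ δ) (fun _ x => |x l|) := by
  refine ⟨fun _ x hx => abs_pos.2 ((hx l).2 hl), fun m => ?_⟩
  have hd : ∀ x ∈ Om δ j, HasFDerivAt (fun x : Fin n → ℝ => |x l|)
      ((SignType.sign (x l) : ℝ) • ContinuousLinearMap.proj (R := ℝ) (φ := fun _ : Fin n => ℝ) l)
      x := fun x hx => by
    have h := hasDerivAt_abs ((hx l).2 hl)
    exact h.comp_hasFDerivAt x (ContinuousLinearMap.proj (R := ℝ) (φ := fun _ : Fin n => ℝ)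
      l).hasFDerivAt
  have h0 : Symb (OmF δ j) (fld B j κ δ) 0 (fun _ x => |x l|) (fun _ x => |x l|) :=
    ⟨fun _ x hx => (hd x hx).differentiableAt, 1, zero_le_one, fun _ x _ => by simp⟩
  induction m with
  | zero => exact h0
  | succ m ih =>
    refine ⟨h0, fun k => ?_⟩
    by_cases hk : k = l
    · subst hk
      refine ih.congr isOpen_OmF fun p x hx => ?_
      rw [vf_of_ne hl, (hd x hx).fderiv]
      simp only [smul_apply, ContinuousLinearMap.proj_apply, Pi.single_eq_same, smul_eq_mul,
        mul_one]
      exact self_mul_sign _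
    · refine Symb.congr isOpen_OmF (h := fun _ _ => 0) Symb.zero fun p x hx => ?_
      simp [vf, (hd x hx).fderiv, Pi.single_eq_of_ne' hk]

lemma homS_mo (β : Fin n → ℕ) : HomS (OmF δ j) (fld B j κ δ) (fun _ x => mo j β x) :=
  HomS.prod isOpen_OmF _ fun _ hl => (homS_abs (Finset.ne_of_mem_erase hl)).pow isOpen_OmF _

lemma homS_Rt (hB1 : ∃ β ∈ B, β j = 1) : HomS (OmF δ j) (fld B j κ δ) (fun p => Rt B j p) := by
  obtain ⟨β, hβ, h1⟩ := hB1
  have hM : HomS (OmF δ j) (fld B j κ δ) (fun _ x => M1 B j x) :=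
    HomS.sum isOpen_OmF ⟨β, Finset.mem_filter.2 ⟨hβ, h1⟩⟩ fun β _ => homS_mo β
  exact (HomS.param Par.hlam).mul isOpen_OmF
    (((HomS.param Par.ht).mul isOpen_OmF hM).inv isOpen_OmF)

lemma homS_rad (hκ : 0 < κ) (hδ : 0 < δ) (hB1 : ∃ β ∈ B, β j = 1) :
    HomS (OmF δ j) (fld B j κ δ) (fun p => rad B j κ δ p) := by
  have hR := homS_Rt (κ := κ) (δ := δ) hB1
  have h1 : HomS (OmF δ j) (fld B j κ δ) (fun p x => 1 + Rt B j p x * δ⁻¹) :=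
    (HomS.param (p := fun _ => (1 : ℝ)) fun _ => one_pos).add isOpen_OmF
      (hR.mul isOpen_OmF (HomS.param (p := fun _ => δ⁻¹) fun _ => inv_pos.2 hδ))
  refine hR.mul isOpen_OmF (HomS.inv isOpen_OmF (h1.add_sum isOpen_OmF _ fun β _ => ?_))
  exact ((hR.pow isOpen_OmF _).mul isOpen_OmF (homS_mo β)).mul isOpen_OmF
    (HomS.param (p := fun p : Par => p.t * (κ * p.lam)⁻¹) fun p =>
      mul_pos p.ht (inv_pos.2 (mul_pos hκ p.hlam)))

lemma hasFDerivAt_rr (hκ : 0 < κ) (hδ : 0 < δ) (hB1 : ∃ β ∈ B, β j = 1) (p : Par)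
    {x : Fin n → ℝ} (hx : x ∈ Om δ j) (v : Fin n → ℝ) :
    DifferentiableAt ℝ (rr B j κ δ p) x ∧ fderiv ℝ (rr B j κ δ p) x v =
      (rr B j κ δ p x)⁻¹ * (x j * v j + rad B j κ δ p x * fderiv ℝ (rad B j κ δ p) x v) := by
  have h0 := rr_pos hκ hδ hB1 p fun l hl => (hx l).2 hl
  have hr := (((homS_rad hκ hδ hB1).sym 0).diff (i := p) hx).hasFDerivAt
  have hp : HasFDerivAt (fun x : Fin n → ℝ => x j)
    (ContinuousLinearMap.proj (R := ℝ) (φ := fun _ : Fin n => ℝ) j) x :=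
    (ContinuousLinearMap.proj (R := ℝ) (φ := fun _ : Fin n => ℝ) j).hasFDerivAt
  have hne : x j ^ 2 + rad B j κ δ p x ^ 2 ≠ 0 := fun h => by
    rw [rr, h, Real.sqrt_zero] at h0; exact h0.false
  have h := ((hp.pow 2).add (hr.pow 2)).sqrt hne
  have h' : HasFDerivAt (rr B j κ δ p) _ x := h
  refine ⟨h'.differentiableAt, ?_⟩
  rw [h'.fderiv]
  have h1 := h0.ne'
  change (1 / (2 * rr B j κ δ p x)) * _ = _
  simp
  field_simp

/-- `x_j` and `rr` are symbols of weight `rr`. -/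
lemma symb_rr (hκ : 0 < κ) (hδ : 0 < δ) (hB1 : ∃ β ∈ B, β j = 1) (m : ℕ) :
    Symb (OmF δ j) (fld B j κ δ) m (rr B j κ δ) (fun _ x => x j) ∧
    Symb (OmF δ j) (fld B j κ δ) m (rr B j κ δ) (rr B j κ δ) := by
  have hpos : ∀ p, ∀ x ∈ OmF δ j p, 0 < rr B j κ δ p x := fun p x hx =>
    rr_pos hκ hδ hB1 p fun l hl => (hx l).2 hl
  have hp : ∀ x, HasFDerivAt (fun x : Fin n → ℝ => x j)
    (ContinuousLinearMap.proj (R := ℝ) (φ := fun _ : Fin n => ℝ) j) x := fun x =>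
    (ContinuousLinearMap.proj (R := ℝ) (φ := fun _ : Fin n => ℝ) j).hasFDerivAt
  have hx0 : Symb (OmF δ j) (fld B j κ δ) 0 (rr B j κ δ) (fun _ x => x j) :=
    ⟨fun p x _ => (hp x).differentiableAt, 1, zero_le_one, fun p x _ => by
      rw [one_mul]; exact abs_le_rr p x⟩
  have hr0 : Symb (OmF δ j) (fld B j κ δ) 0 (rr B j κ δ) (rr B j κ δ) :=
    ⟨fun p x hx => (hasFDerivAt_rr hκ hδ hB1 p hx 0).1, 1, zero_le_one, fun p x hx => by
      rw [one_mul, Real.norm_eq_abs, abs_of_pos (hpos p x hx)]⟩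
  induction m with
  | zero => exact ⟨hx0, hr0⟩
  | succ m ih =>
    have hθ : ∀ l, Symb (OmF δ j) (fld B j κ δ) m (rr B j κ δ)
        (vf (fld B j κ δ) l (fun _ x => x j)) := fun l => by
      by_cases hl : l = j
      · subst hl
        refine ih.2.congr isOpen_OmF fun p x hx => ?_
        simp [vf, fld, (hp x).fderiv]
      · refine Symb.congr isOpen_OmF (h := fun _ _ => 0) Symb.zero fun p x hx => ?_
        simp [vf, (hp x).fderiv, Pi.single_eq_of_ne' hl]
    refine ⟨⟨hx0, hθ⟩, hr0, fun l => ?_⟩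
    have hinv := ih.2.inv isOpen_OmF hpos one_pos fun p x _ => by rw [one_mul]
    have hrad := homS_rad (κ := κ) (δ := δ) hκ hδ hB1
    have e1 := ih.1.mul isOpen_OmF (fun p x hx => (hpos p x hx).le) (hθ l)
    have e2 := (((hrad.sym m).mul isOpen_OmF (fun p x hx => (hrad.pos p x hx).le)
      ((hrad.sym (m + 1)).2 l)).mono_w' (w' := fun p x => rr B j κ δ p x * rr B j κ δ p x)
      fun p x hx => mul_le_mul (rad_le_rr p x) (rad_le_rr p x) (hrad.pos p x hx).le
        (hpos p x hx).le)
    refine ((hinv.mul isOpen_OmF (fun p x hx => (inv_pos.2 (hpos p x hx)).le)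
      (e1.add isOpen_OmF e2)).mono_w' fun p x hx => ?_).congr isOpen_OmF fun p x hx => ?_
    · rw [inv_mul_cancel_left₀ (hpos p x hx).ne']
    · simp only [vf, (hasFDerivAt_rr hκ hδ hB1 p hx _).2, (hp x).fderiv, smul_eq_mul,
        ContinuousLinearMap.proj_apply]
      ring

lemma diff_fld (hκ : 0 < κ) (hδ : 0 < δ) (hB1 : ∃ β ∈ B, β j = 1) (l : Fin n) (p : Par)
    {x : Fin n → ℝ} (hx : x ∈ Om δ j) : DifferentiableAt ℝ (fld B j κ δ l p) x := by
  by_cases hl : l = j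
  · have : fld B j κ δ l p = rr B j κ δ p := by funext y; simp [fld, hl]
    rw [this]; exact (hasFDerivAt_rr hκ hδ hB1 p hx 0).1
  · have : fld B j κ δ l p = fun y => y l := by funext y; simp [fld, hl]
    rw [this]; fun_prop

lemma symb_div (hκ : 0 < κ) (hδ : 0 < δ) (hB1 : ∃ β ∈ B, β j = 1) (m : ℕ) (l : Fin n) :
    Symb (OmF δ j) (fld B j κ δ) m (fun _ _ => 1)
      (fun p x => fderiv ℝ (fld B j κ δ l p) x (Pi.single l 1)) := by
  by_cases hl : l = j
  · subst hl
    have hpos : ∀ p, ∀ x ∈ OmF δ l p, 0 < rr B l κ δ p x := fun p x hx =>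
      rr_pos hκ hδ hB1 p fun k hk => (hx k).2 hk
    have hinv := (symb_rr hκ hδ hB1 m).2.inv isOpen_OmF hpos one_pos fun p x _ => by rw [one_mul]
    refine ((hinv.mul isOpen_OmF (fun p x hx => (inv_pos.2 (hpos p x hx)).le)
      ((symb_rr hκ hδ hB1 (m + 1)).2.2 l)).mono_w' fun p x hx => ?_).congr isOpen_OmF
      fun p x hx => ?_
    · rw [inv_mul_cancel₀ (hpos p x hx).ne']
    · have : fld B l κ δ l p = rr B l κ δ p := by funext y; simp [fld]
      have h := (hpos p x hx).ne'
      simp only [vf, this, smul_eq_mul]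
      field_simp
  · refine (Symb.const (1 : ℝ) ⟨1, zero_le_one, fun p x _ => by simp⟩).congr isOpen_OmF
      fun p x hx => ?_
    have : fld B j κ δ l p = fun y => y l := by funext y; simp [fld, hl]
    have hp : HasFDerivAt (fun x : Fin n → ℝ => x l)
      (ContinuousLinearMap.proj (R := ℝ) (φ := fun _ : Fin n => ℝ) l) x :=
      (ContinuousLinearMap.proj (R := ℝ) (φ := fun _ : Fin n => ℝ) l).hasFDerivAt
    rw [this, hp.fderiv]
    simp

/-- The coefficients of the frame are bounded symbols. -/
lemma symb_fld (hκ : 0 < κ) (hδ : 0 < δ) (hB1 : ∃ β ∈ B, β j = 1) (m : ℕ) (l : Fin n) :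
    Symb (OmF δ j) (fld B j κ δ) m (fun _ _ => 1) (fld B j κ δ l) := by
  by_cases hl : l = j
  · subst hl
    refine ((symb_rr hκ hδ hB1 m).2.mono_w (C := 2 * δ) (by positivity) fun p x hx => ?_).congr
      isOpen_OmF fun p x hx => by simp [fld]
    rw [mul_one]; exact (rr_lt hκ hδ hB1 p hx).le
  · have hp : ∀ x, HasFDerivAt (fun x : Fin n → ℝ => x l)
      (ContinuousLinearMap.proj (R := ℝ) (φ := fun _ : Fin n => ℝ) l) x := fun x =>
      (ContinuousLinearMap.proj (R := ℝ) (φ := fun _ : Fin n => ℝ) l).hasFDerivAt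
    have h0 : Symb (OmF δ j) (fld B j κ δ) 0 (fun _ _ => 1) (fun _ x => x l) :=
      ⟨fun p x _ => (hp x).differentiableAt, δ, hδ.le, fun p x hx => by
        rw [mul_one]; exact (hx l).1.le⟩
    have : ∀ m, Symb (OmF δ j) (fld B j κ δ) m (fun _ _ => 1) (fun _ x => x l) := by
      intro m
      induction m with
      | zero => exact h0
      | succ m ih =>
        refine ⟨h0, fun k => ?_⟩
        by_cases hk : k = l
        · subst hk
          refine ih.congr isOpen_OmF fun p x hx => ?_
          rw [vf_of_ne hl, (hp x).fderiv]
          simp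
        · refine Symb.congr isOpen_OmF (h := fun _ _ => 0) Symb.zero fun p x hx => ?_
          simp [vf, (hp x).fderiv, Pi.single_eq_of_ne' hk]
    exact (this m).congr isOpen_OmF fun p x _ => by simp [fld, hl]

/-- Fixed smooth functions with compact support are bounded symbols. -/
lemma symb_smooth (hκ : 0 < κ) (hδ : 0 < δ) (hB1 : ∃ β ∈ B, β j = 1) (m : ℕ)
    {φ : (Fin n → ℝ) → ℝ} (hφ : ContDiff ℝ (⊤ : ℕ∞) φ) (hc : HasCompactSupport φ) :
    Symb (OmF δ j) (fld B j κ δ) m (fun _ _ => 1) (fun _ => φ) := by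
  have key : ∀ φ : (Fin n → ℝ) → ℝ, ContDiff ℝ (⊤ : ℕ∞) φ → HasCompactSupport φ →
      Symb (OmF δ j) (fld B j κ δ) 0 (fun _ _ => 1) (fun _ => φ) := by
    intro φ hφ hc
    obtain ⟨C, hC⟩ := hφ.continuous.bounded_above_of_compact_support hc
    refine ⟨fun p x _ => (hφ.differentiable (by simp)).differentiableAt, |C|, abs_nonneg _,
      fun p x _ => ?_⟩
    rw [mul_one]; exact (hC x).trans (le_abs_self _)
  induction m generalizing φ with
  | zero => exact key φ hφ hc
  | succ m ih =>
    refine ⟨key φ hφ hc, fun l => ?_⟩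
    have h1 : ContDiff ℝ (⊤ : ℕ∞) fun x => fderiv ℝ φ x (Pi.single l 1) :=
      (hφ.fderiv_right (by simp)).clm_apply contDiff_const
    have h2 : HasCompactSupport fun x => fderiv ℝ φ x (Pi.single l 1) := hc.fderiv_apply ℝ _
    refine ((symb_fld hκ hδ hB1 m l).mul isOpen_OmF (fun _ _ _ => zero_le_one)
      (ih h1 h2)).mono_w' fun p x _ => by simp

/-- Cutoffs `g (x_l / eps)` are bounded symbols, uniformly in `eps`. -/
lemma symb_cutoff (m : ℕ) {l : Fin n} (hl : l ≠ j)
    {g : ℝ → ℝ} (hg : ContDiff ℝ (⊤ : ℕ∞) g) (hc : HasCompactSupport g) :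
    Symb (OmF δ j) (fld B j κ δ) m (fun _ _ => 1) (fun p x => g (x l / p.eps)) := by
  have hd : ∀ g : ℝ → ℝ, ContDiff ℝ (⊤ : ℕ∞) g → ∀ (p : Par) (x : Fin n → ℝ),
      HasFDerivAt (fun x : Fin n → ℝ => g (x l / p.eps)) ((deriv g (x l / p.eps)) •
        ((p.eps)⁻¹ • ContinuousLinearMap.proj (R := ℝ) (φ := fun _ : Fin n => ℝ) l)) x := by
    intro g hg p x
    have hp : HasFDerivAt (fun x : Fin n → ℝ => x l / p.eps)
      ((p.eps)⁻¹ • ContinuousLinearMap.proj (R := ℝ) (φ := fun _ : Fin n => ℝ) l) x := by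
      simp only [div_eq_inv_mul]
      exact ((ContinuousLinearMap.proj (R := ℝ) (φ := fun _ : Fin n => ℝ) l).hasFDerivAt).const_mul
        (p.eps)⁻¹
    exact ((hg.differentiable (by simp)).differentiableAt.hasDerivAt).comp_hasFDerivAt x hp
  have key : ∀ g : ℝ → ℝ, ContDiff ℝ (⊤ : ℕ∞) g → HasCompactSupport g →
      Symb (OmF δ j) (fld B j κ δ) 0 (fun _ _ => 1) (fun p x => g (x l / p.eps)) := by
    intro g hg hc
    obtain ⟨C, hC⟩ := hg.continuous.bounded_above_of_compact_support hc
    refine ⟨fun p x _ => (hd g hg p x).differentiableAt, |C|, abs_nonneg _,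
      fun p x _ => ?_⟩
    rw [mul_one]; exact (hC _).trans (le_abs_self _)
  induction m generalizing g with
  | zero => exact key g hg hc
  | succ m ih =>
    refine ⟨key g hg hc, fun k => ?_⟩
    by_cases hk : k = l
    · subst hk
      have h1 : ContDiff ℝ (⊤ : ℕ∞) fun s => s * deriv g s :=
        contDiff_id.mul (contDiff_infty_iff_deriv.1 hg).2
      have h2 : HasCompactSupport fun s => s * deriv g s := hc.deriv.mul_left
      refine (ih h1 h2).congr isOpen_OmF fun p x _ => ?_
      rw [vf_of_ne hl, (hd g hg p x).fderiv]
      simp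
      ring
    · refine Symb.congr isOpen_OmF (h := fun _ _ => 0) Symb.zero fun p x hx => ?_
      simp [vf, (hd g hg p x).fderiv, Pi.single_eq_of_ne' hk]

/-- Derivatives of `f` are symbols; a derivative in `x_j` costs `rr⁻¹`. -/
lemma symb_PS {a : (Fin n → ℕ) → ℝ} {R : ℝ} (hB : IsMinGen {α | a α ≠ 0} B) (hR : 0 < R)
    (hs : Summable fun γ => |a γ| * R ^ deg γ)
    (hκ : 0 < κ) (hδ : 0 < δ) (hδR : δ ≤ R / 4) (hB1 : ∃ β ∈ B, β j = 1) (m : ℕ)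
    {b : ℕ} {c : (Fin n → ℕ) → ℝ} (h : Cls a j b c) :
    Symb (OmF δ j) (fld B j κ δ) m
      (fun p x => MB B (xh B j κ δ p x) * (rr B j κ δ p x ^ b)⁻¹) (fun _ => PS c) := by
  have hpos : ∀ p, ∀ x ∈ OmF δ j p, 0 < rr B j κ δ p x := fun p x hx =>
    rr_pos hκ hδ hB1 p fun l hl => (hx l).2 hl
  have hder : ∀ (b : ℕ) (c : (Fin n → ℕ) → ℝ), Cls a j b c → ∀ x ∈ Om δ j,
      DifferentiableAt ℝ (PS c) x ∧ ∀ l, fderiv ℝ (PS c) x (Pi.single l 1) = PS (Dc l c) x := by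
    intro b c h x hx
    have := hasFDerivAt_PS (half_pos hR) (h.summable hR hs) (x := x) fun i => by
      linarith [(hx i).1]
    exact ⟨this.1.differentiableAt, this.2⟩
  have key : ∀ (b : ℕ) (c : (Fin n → ℕ) → ℝ), Cls a j b c → Symb (OmF δ j) (fld B j κ δ) 0
      (fun p x => MB B (xh B j κ δ p x) * (rr B j κ δ p x ^ b)⁻¹) (fun _ => PS c) := by
    intro b c h
    obtain ⟨C, hC, hle⟩ := Cls.le hB hR hs h
    refine ⟨fun p x hx => (hder b c h x hx).1, C, hC, fun p x hx => ?_⟩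
    have h1 := hle x (xh B j κ δ p x) (abs_le_xh p x) fun i => by
      linarith [(xh_mem hκ hδ hB1 p hx i).2]
    have h2 := hpos p x hx
    rw [xh_j, abs_of_pos h2] at h1
    rw [← mul_assoc, ← div_eq_mul_inv, le_div_iff₀ (by positivity)]
    exact h1
  induction m generalizing b c with
  | zero => exact key b c h
  | succ m ih =>
    refine ⟨key b c h, fun l => ?_⟩
    by_cases hl : l = j
    · subst hl
      refine ((((symb_rr hκ hδ hB1 m).2).mul isOpen_OmF (fun p x hx => (hpos p x hx).le)
        (ih h.D)).mono_w' fun p x hx => ?_).congr isOpen_OmF fun p x hx => ?_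
      · have := (hpos p x hx).ne'
        rw [pow_succ]
        apply le_of_eq
        field_simp
      · simp [vf, fld, (hder b c h x hx).2]
    · refine (ih (h.E l)).congr isOpen_OmF fun p x hx => ?_
      rw [vf_of_ne hl, (hder b c h x hx).2, smul_eq_mul, euler]

/-- The frame derivatives of the phase `t f` are symbols of weight `t M`. -/
lemma symb_phase {a : (Fin n → ℕ) → ℝ} {R : ℝ} (hB : IsMinGen {α | a α ≠ 0} B) (hR : 0 < R)
    (hs : Summable fun γ => |a γ| * R ^ deg γ)
    (hκ : 0 < κ) (hδ : 0 < δ) (hδR : δ ≤ R / 4) (hB1 : ∃ β ∈ B, β j = 1) (m : ℕ) :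
    Symb (OmF δ j) (fld B j κ δ) m (fun p x => p.t * MB B (xh B j κ δ p x))
      (fun p x => p.t * PS a x) := by
  refine ((((HomS.param Par.ht).sym m).mul isOpen_OmF (fun p _ _ => p.ht.le)
    (symb_PS hB hR hs hκ hδ hδR hB1 m Cls.base)).mono_w' fun p x _ => ?_)
  simp
end

/-! ### The lower bound along the frame -/

section
variable {n : ℕ} {B : Finset (Fin n → ℕ)} {a : (Fin n → ℕ) → ℝ} {R : ℝ} {j : Fin n}

/-- The bound of `gradient_lower` extends by continuity to the points with `x_j = 0`. -/
lemma gradient_lower_Om (hR : 0 < R) (hs : Summable fun γ => |a γ| * R ^ deg γ) {c δ : ℝ}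
    (hδ : 0 < δ) (hδR : δ ≤ R / 4)
    (h : ∀ x ∈ PBox n δ, c * MB B x ^ 2 ≤ ∑ l, (x l * fderiv ℝ (PS a) x (Pi.single l 1)) ^ 2)
    {x : Fin n → ℝ} (hx : x ∈ Om δ j) :
    c * MB B x ^ 2 ≤ ∑ l, (x l * fderiv ℝ (PS a) x (Pi.single l 1)) ^ 2 := by
  have hE : ∀ y ∈ Cube n δ, ∀ l, y l * fderiv ℝ (PS a) y (Pi.single l 1) = PS (Ec l a) y := by
    intro y hy l
    rw [(hasFDerivAt_PS hR hs fun i => (hy i).trans_le (by linarith)).2 l, euler]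
  have hxc : x ∈ Cube n δ := fun i => (hx i).1
  have hcont : ∀ l, ContinuousAt (PS (Ec l a)) x := fun l =>
    (hasFDerivAt_PS (half_pos hR) (((Cls.base (j := j)).E l).summable hR hs)
      fun i => (hxc i).trans_le (by linarith)).1.continuousAt
  have hu : ContinuousAt (fun s : ℝ => Function.update x j s) (x j) := by fun_prop
  have hux : Function.update x j (x j) = x := Function.update_eq_self j x
  have hA : ContinuousAt (fun s : ℝ => c * MB B (Function.update x j s) ^ 2) (x j) := by fun_prop
  have hD : ContinuousAt (fun s : ℝ => ∑ l, PS (Ec l a) (Function.update x j s) ^ 2) (x j) := by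
    refine tendsto_finsetSum _ fun l _ => ?_
    have h1 : ContinuousAt (PS (Ec l a)) (Function.update x j (x j)) := by rw [hux]; exact hcont l
    exact (h1.comp hu).pow 2
  have hev : ∀ᶠ s in 𝓝[≠] (x j), s ≠ 0 := by
    by_cases h0 : x j = 0
    · rw [h0]; exact eventually_mem_nhdsWithin
    · exact (eventually_ne_nhds h0).filter_mono nhdsWithin_le_nhds
  have hcu : ∀ᶠ s in 𝓝[≠] (x j), Function.update x j s ∈ Cube n δ := by
    refine Filter.Eventually.filter_mono nhdsWithin_le_nhds (hu.eventually ?_)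
    simp only [hux]; exact (isOpen_Cube δ).mem_nhds hxc
  have key := le_of_tendsto_of_tendsto (hA.tendsto.mono_left nhdsWithin_le_nhds)
    (hD.tendsto.mono_left (nhdsWithin_le_nhds (s := {x j}ᶜ))) (by
      filter_upwards [hev, hcu] with s h0 hc
      refine (h _ fun i => ⟨?_, hc i⟩).trans (le_of_eq ?_)
      · by_cases hi : i = j
        · subst hi; simpa using h0
        · rw [Function.update_of_ne hi]; exact (hx i).2 hi
      · exact Finset.sum_congr rfl fun l _ => by rw [hE _ hc])
  simp only [hux] at key
  refine key.trans (le_of_eq ?_)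
  exact Finset.sum_congr rfl fun l _ => by rw [hE _ hxc]

/-- For `β_j = 1` the derivative `∂_j x^β` does not depend on `x_j`; times `rr` it is the monomial
at `xh`. -/
lemma sum_linear_eq (a : (Fin n → ℕ) → ℝ) (κ δ : ℝ) (p : Par) (x : Fin n → ℝ) :
    xh B j κ δ p x j * ∑ β ∈ B with β j = 1, a β * mono (β - Pi.single j 1) x =
      ∑ β ∈ B with β j = 1, a β * mono β (xh B j κ δ p x) := by
  rw [Finset.mul_sum]
  refine Finset.sum_congr rfl fun β hβ => ?_
  have h1 := (Finset.mem_filter.1 hβ).2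
  have e : mono β (xh B j κ δ p x) = xh B j κ δ p x j * mono (β - Pi.single j 1) x := by
    simp only [mono, Pi.sub_apply]
    rw [← Finset.mul_prod_erase _ _ (Finset.mem_univ j),
      ← Finset.mul_prod_erase Finset.univ (fun i => x i ^ (β i - (Pi.single j 1 : Fin n → ℕ) i))
        (Finset.mem_univ j)]
    simp only [Pi.single_eq_same, h1, Nat.sub_self, pow_zero, pow_one, one_mul]
    congr 1
    refine Finset.prod_congr rfl fun l hl => ?_
    have hl' := Finset.ne_of_mem_erase hl
    rw [xh, Function.update_of_ne hl']
    simp [hl']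
  rw [e]; ring

set_option maxHeartbeats 1000000 in
/-- Lower bound for the derivatives of the phase along the frame. Where replacing `x_j` by `rr`
does not increase `MB B` much, this is the bound for the logarithmic gradient. Elsewhere the
terms of `f` linear in `x_j` dominate all others at the point `xh`; by the instability
hypothesis they do not cancel, so that `rr ∂_j f` is large. -/
theorem combined_lower (hB : IsMinGen {α | a α ≠ 0} B) (hBne : B.Nonempty) (hR : 0 < R)
    (hs : Summable fun γ => |a γ| * R ^ deg γ)
    (hnd : NonDegenerateR a (newtonPolyhedron {α | a α ≠ 0})) (hB1 : ∃ β ∈ B, β j = 1)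
    (hun : ∀ γ : Set (Fin n → ℝ), IsFaceOf (newtonPolyhedron {α | a α ≠ 0}) γ → IsCompact γ →
      (∀ y ∈ γ, y j = 1) → ∀ x : Fin n → ℝ, (∀ i, x i ≠ 0) → facePoly a γ x ≠ 0)
    {δm : ℝ} (hδm : 0 < δm) :
    ∃ κ δ c : ℝ, 0 < κ ∧ 0 < δ ∧ 0 < c ∧ δ ≤ δm ∧ δ ≤ R / 4 ∧ ∀ p : Par, ∀ x ∈ Om δ j,
      c * MB B (xh B j κ δ p x) ^ 2 ≤
        ∑ l, (fld B j κ δ l p x * fderiv ℝ (PS a) x (Pi.single l 1)) ^ 2 := by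
  obtain ⟨cg, δg, hcg, hδg, hg⟩ := gradient_lower hB hBne hR hs hnd
  obtain ⟨cl, δl, G, hcl, hδl, hG, hl⟩ := linear_lower hB hBne j hun
  obtain ⟨C, hC, hexp⟩ := expandD hB hR hs j
  set D := B.sup fun β => β j with hD
  have hDle : ∀ β ∈ B, β j ≤ D := fun β hβ => Finset.le_sup (f := fun β => β j) hβ
  set b : ℝ := (B.card : ℝ) with hb
  have hb0 : 0 < b := Nat.cast_pos.2 hBne.card_pos
  -- the admissible ratio of the nonlinear to the linear terms at `xh`
  obtain ⟨ε, hε0, hε1, hεG, hεC⟩ : ∃ ε : ℝ, 0 < ε ∧ ε ≤ 1 ∧ G * ε ≤ 1 ∧ C * ε ≤ cl / 4 := by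
    refine ⟨min 1 (min (1 / G) (cl / (4 * (C + 1)))), by positivity, min_le_left _ _, ?_, ?_⟩
    · have := (min_le_right (1 : ℝ) _).trans (min_le_left (1 / G) (cl / (4 * (C + 1))))
      calc _ ≤ G * (1 / G) := by gcongr
        _ = 1 := by field_simp
    · have := (min_le_right (1 : ℝ) _).trans (min_le_right (1 / G) (cl / (4 * (C + 1))))
      calc _ ≤ C * (cl / (4 * (C + 1))) := by gcongr
        _ ≤ (C + 1) * (cl / (4 * (C + 1))) := by gcongr; linarith
        _ = cl / 4 := by field_simp
  obtain ⟨δ, hδ, h1, h2, h3, h4, h5⟩ : ∃ δ : ℝ, 0 < δ ∧ δ ≤ δm ∧ δ ≤ R / 4 ∧ δ ≤ δg ∧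
      2 * δ ≤ δl ∧ C * (4 * δ) ≤ cl / 4 := by
    refine ⟨min δm (min (R / 4) (min δg (min (δl / 2) (cl / (16 * (C + 1)))))), by positivity,
      min_le_left _ _, ?_, ?_, ?_, ?_⟩
    · exact (min_le_right _ _).trans (min_le_left _ _)
    · exact (min_le_right _ _).trans ((min_le_right _ _).trans (min_le_left _ _))
    · have : min δm (min (R / 4) (min δg (min (δl / 2) (cl / (16 * (C + 1)))))) ≤ δl / 2 :=
        (min_le_right _ _).trans ((min_le_right _ _).trans ((min_le_right _ _).trans
          (min_le_left _ _)))
      linarith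
    · have : min δm (min (R / 4) (min δg (min (δl / 2) (cl / (16 * (C + 1)))))) ≤
          cl / (16 * (C + 1)) := (min_le_right _ _).trans ((min_le_right _ _).trans
          ((min_le_right _ _).trans (min_le_right _ _)))
      calc _ ≤ C * (4 * (cl / (16 * (C + 1)))) := by gcongr
        _ ≤ (C + 1) * (4 * (cl / (16 * (C + 1)))) := by gcongr; linarith
        _ = cl / 4 := by field_simp; norm_num
  set κ : ℝ := ε / (4 * b * 2 ^ D) with hκdef
  have hκ : 0 < κ := by positivity
  have hκε : b * (2 ^ D * κ) = ε / 4 := by rw [hκdef]; field_simp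
  set K : ℝ := max (2 ^ D) (4 * b / ε) with hK
  have hKD : (2 : ℝ) ^ D ≤ K := le_max_left _ _
  have hK0 : 0 < K := lt_of_lt_of_le (by positivity) hKD
  have hKb : b ≤ ε / 4 * K := by
    calc b = ε / 4 * (4 * b / ε) := by field_simp
      _ ≤ _ := by gcongr; exact le_max_right _ _
  refine ⟨κ, δ, min (cg / K ^ 2) (cl ^ 2 / 16), hκ, hδ, by positivity, h1, h2, fun p x hx => ?_⟩
  have hx' : ∀ l, l ≠ j → x l ≠ 0 := fun l hl => (hx l).2 hl
  set z := xh B j κ δ p x with hz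
  set r := rr B j κ δ p x with hr
  have hr0 : 0 < r := rr_pos hκ hδ hB1 p hx'
  have hM1 := M1_pos hB1 hx'
  have hMz := MB_nonneg B z
  have hMx := MB_nonneg B x
  by_cases hcase : MB B z ≤ K * MB B x
  · have hgx := gradient_lower_Om (B := B) (j := j) hR hs hδ h2
      (fun y hy => hg y fun i => ⟨(hy i).1, (hy i).2.trans_le h3⟩) hx
    calc _ ≤ cg / K ^ 2 * MB B z ^ 2 := by gcongr; exact min_le_left _ _
      _ ≤ cg / K ^ 2 * (K * MB B x) ^ 2 := by gcongr
      _ = cg * MB B x ^ 2 := by field_simp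
      _ ≤ _ := hgx
      _ ≤ _ := Finset.sum_le_sum fun l _ => by
          rw [mul_pow, mul_pow]
          refine mul_le_mul_of_nonneg_right ?_ (sq_nonneg _)
          by_cases hlj : l = j
          · subst hlj
            simp only [fld, if_true]
            rw [← sq_abs (x l)]
            have := abs_le_rr (B := B) (κ := κ) (δ := δ) (j := l) p x
            gcongr
          · simp [fld, hlj]
  · push Not at hcase
    have hrad0 := rad_pos hκ hδ hB1 p hx'
    -- if `|x_j| ≥ rad`, then `xh` and `x` are comparable
    have hlt : |x j| < rad B j κ δ p x := by
      by_contra hge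
      push Not at hge
      have hr2 : r ≤ 2 * |x j| := by
        rw [hr, rr, Real.sqrt_le_left (by positivity)]
        nlinarith [sq_abs (x j)]
      refine absurd hcase (not_lt.2 ?_)
      calc MB B z ≤ ∑ β ∈ B, 2 ^ D * |mono β x| := by
            refine Finset.sum_le_sum fun β hβ => ?_
            rw [hz, abs_mono_xh, abs_mono_eq j β x, ← mul_assoc]
            refine mul_le_mul_of_nonneg_right ?_ (mo_nonneg β x)
            calc r ^ β j ≤ (2 * |x j|) ^ β j := by gcongr
              _ = 2 ^ β j * |x j| ^ β j := mul_pow _ _ _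
              _ ≤ _ := by
                  gcongr
                  · norm_num
                  · exact hDle β hβ
        _ = 2 ^ D * MB B x := by rw [← Finset.mul_sum, MB]
        _ ≤ _ := by gcongr
    have hr2 : r ≤ 2 * rad B j κ δ p x := by
      rw [hr, rr, Real.sqrt_le_left (by positivity)]
      nlinarith [sq_abs (x j), abs_nonneg (x j)]
    set L := ∑ β ∈ B with β j = 1, |mono β z| with hL
    have hLeq : L = r * M1 B j x := sum_linear_xh p x
    set Nn := ∑ β ∈ B with β j ≠ 1, |mono β z| with hNn
    have hsum : MB B z = L + Nn := (Finset.sum_filter_add_sum_filter_not B _ _).symm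
    have hL0 : 0 < L := by rw [hLeq]; positivity
    have hNn0 : 0 ≤ Nn := Finset.sum_nonneg fun _ _ => abs_nonneg _
    have hterm : ∀ β ∈ B.filter (fun β => β j ≠ 1), |mono β z| ≤ 2 ^ D * κ * L + MB B z / K := by
      intro β hβ
      obtain ⟨hβB, hβ1⟩ := Finset.mem_filter.1 hβ
      rw [hz, abs_mono_xh]
      rcases Nat.lt_or_ge (β j) 2 with h | h
      · have h0 : β j = 0 := by omega
        have e : r ^ β j * mo j β x = |mono β x| := by rw [abs_mono_eq j, h0]; simp
        rw [e]
        have : |mono β x| ≤ MB B z / K := by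
          rw [le_div_iff₀ hK0, mul_comm]
          exact (mul_le_mul_of_nonneg_left (le_MB hβB x) hK0.le).trans hcase.le
        have h' : 0 ≤ 2 ^ D * κ * L := by positivity
        linarith
      · have h' : 0 ≤ MB B z / K := by positivity
        refine le_trans ?_ (le_add_of_nonneg_right h')
        have hmo := mo_nonneg (j := j) β x
        calc r ^ β j * mo j β x ≤ (2 * rad B j κ δ p x) ^ β j * mo j β x := by gcongr
          _ = 2 ^ β j * (rad B j κ δ p x ^ β j * mo j β x) := by rw [mul_pow]; ring
          _ ≤ 2 ^ D * (κ * (rad B j κ δ p x * M1 B j x)) := by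
              refine mul_le_mul ?_ (rad_pow_le hκ hδ hB1 p hx' hβB h) (by positivity)
                (by positivity)
              exact pow_le_pow_right₀ (by norm_num) (hDle β hβB)
          _ ≤ 2 ^ D * (κ * (r * M1 B j x)) := by
              gcongr; exact rad_le_rr p x
          _ = _ := by rw [hLeq]; ring
    have hNle : Nn ≤ b * (2 ^ D * κ * L + MB B z / K) := by
      refine (Finset.sum_le_card_nsmul _ _ _ hterm).trans ?_
      rw [nsmul_eq_mul]
      have h' : 0 ≤ 2 ^ D * κ * L + MB B z / K := by positivity
      refine mul_le_mul_of_nonneg_right ?_ h'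
      exact Nat.cast_le.2 (Finset.card_filter_le _ _)
    have hNε : Nn ≤ ε * L := by
      have e1 : b * (2 ^ D * κ * L) = ε / 4 * L := by rw [← hκε]; ring
      have e2 : b * (MB B z / K) ≤ ε / 4 * MB B z := by
        rw [mul_div_assoc', div_le_iff₀ hK0]
        calc b * MB B z ≤ ε / 4 * K * MB B z := by gcongr
          _ = _ := by ring
      rw [mul_add, e1] at hNle
      rw [hsum] at e2 hNle
      have e3 : ε / 4 * Nn ≤ 1 / 4 * Nn := by gcongr
      have e4 : 0 ≤ ε * L := by positivity
      linarith
    have hML : MB B z ≤ 2 * L := by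
      have e3 : ε * L ≤ 1 * L := by gcongr
      rw [hsum]; linarith
    have hlin := hl z (fun i => ⟨(xh_mem hκ hδ hB1 p hx i).1,
      (xh_mem hκ hδ hB1 p hx i).2.trans_le h4⟩) (fun β hβ hβ1 => by
        have : |mono β z| ≤ Nn := Finset.single_le_sum (s := B.filter fun β => β j ≠ 1)
          (f := fun β => |mono β z|) (fun _ _ => abs_nonneg _) (Finset.mem_filter.2 ⟨hβ, hβ1⟩)
        calc G * |mono β z| ≤ G * (ε * L) := by gcongr; exact this.trans hNε
          _ = G * ε * L := by ring
          _ ≤ 1 * L := by gcongr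
          _ = L := one_mul L)
    have hex := hexp x z (abs_le_xh p x) (2 * δ) (by positivity)
      (fun i => (xh_mem hκ hδ hB1 p hx i).2.le)
      (fun i => (xh_mem hκ hδ hB1 p hx i).2.trans_le (by linarith))
    rw [sum_linear_eq, hz, xh_j, ← hz, ← hr] at hex
    set P := ∑ β ∈ B with β j = 1, a β * mono β z with hP
    set d := r * fderiv ℝ (PS a) x (Pi.single j 1) with hd
    have herr : C * Nn + C * (2 * δ * MB B z) ≤ cl / 2 * L := by
      have e1 : C * Nn ≤ cl / 4 * L := by
        calc C * Nn ≤ C * (ε * L) := by gcongr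
          _ = C * ε * L := by ring
          _ ≤ _ := by gcongr
      have e2 : C * (2 * δ * MB B z) ≤ cl / 4 * L := by
        calc C * (2 * δ * MB B z) ≤ C * (2 * δ * (2 * L)) := by gcongr
          _ = C * (4 * δ) * L := by ring
          _ ≤ _ := by gcongr
      linarith
    have hdl : cl / 4 * MB B z ≤ |d| := by
      have h' := abs_sub_abs_le_abs_sub P d
      rw [abs_sub_comm] at h'
      have hlin' : cl * L ≤ |P| := hlin
      have : cl / 4 * MB B z ≤ cl / 2 * L := by
        calc cl / 4 * MB B z ≤ cl / 4 * (2 * L) := by gcongr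
          _ = _ := by ring
      linarith
    calc _ ≤ cl ^ 2 / 16 * MB B z ^ 2 := by gcongr; exact min_le_right _ _
      _ = (cl / 4 * MB B z) ^ 2 := by ring
      _ ≤ |d| ^ 2 := by gcongr
      _ = (fld B j κ δ j p x * fderiv ℝ (PS a) x (Pi.single j 1)) ^ 2 := by
          rw [sq_abs, hd]; simp [fld, hr]
      _ ≤ _ := Finset.single_le_sum
          (f := fun l => (fld B j κ δ l p x * fderiv ℝ (PS a) x (Pi.single l 1)) ^ 2)
          (fun _ _ => sq_nonneg _) (Finset.mem_univ j)

end

/-! ### The oscillating integral -/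

section
variable {n : ℕ} {B : Finset (Fin n → ℕ)} {a : (Fin n → ℕ) → ℝ} {R : ℝ} {j : Fin n} {κ δ : ℝ}

/-- Coordinate hyperplanes are null sets. -/
lemma ae_coord_ne (l : Fin n) : ∀ᵐ x : Fin n → ℝ, x l ≠ 0 := by
  have h : (volume : Measure (Fin n → ℝ)) (Function.eval l ⁻¹' {(0 : ℝ)}) = 0 := by
    rw [volume_pi]
    exact Measure.pi_hyperplane (fun _ : Fin n => (volume : Measure ℝ)) l 0
  exact measure_eq_zero_iff_ae_notMem.1 h

lemma ae_coords_ne : ∀ᵐ x : Fin n → ℝ, ∀ l, x l ≠ 0 := ae_all_iff.2 ae_coord_ne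

lemma vf_phase (hR : 0 < R) (hs : Summable fun γ => |a γ| * R ^ deg γ) (hδR : δ ≤ R / 4)
    (l : Fin n) (p : Par) {x : Fin n → ℝ} (hx : x ∈ Om δ j) :
    DifferentiableAt ℝ (fun x => p.t * PS a x) x ∧
    vf (fld B j κ δ) l (fun p x => p.t * PS a x) p x =
      p.t * (fld B j κ δ l p x * fderiv ℝ (PS a) x (Pi.single l 1)) := by
  have hd : DifferentiableAt ℝ (PS a) x :=
    (hasFDerivAt_PS hR hs fun i => (hx i).1.trans_le (by linarith)).1.differentiableAt
  refine ⟨hd.const_mul _, ?_⟩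
  rw [vf, fderiv_const_mul hd]
  simp only [smul_apply, smul_eq_mul]
  ring

/-- Nonstationary phase for the oscillating integral: it is bounded by the integral of a power
of `1 + t MB B xh`, uniformly in the parameters. -/
theorem phase_bound (hB : IsMinGen {α | a α ≠ 0} B) (hR : 0 < R)
    (hs : Summable fun γ => |a γ| * R ^ deg γ) (hB1 : ∃ β ∈ B, β j = 1)
    (hκ : 0 < κ) (hδ : 0 < δ) (hδR : δ ≤ R / 4) {c : ℝ} (hc : 0 < c)
    (hlow : ∀ p : Par, ∀ x ∈ Om δ j, c * MB B (xh B j κ δ p x) ^ 2 ≤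
        ∑ l, (fld B j κ δ l p x * fderiv ℝ (PS a) x (Pi.single l 1)) ^ 2)
    {φ : (Fin n → ℝ) → ℝ} (hφ : ContDiff ℝ (⊤ : ℕ∞) φ) (hφc : HasCompactSupport φ)
    (hφs : tsupport φ ⊆ Cube n δ) (N : ℕ) :
    ∃ C : ℝ, 0 ≤ C ∧ ∀ p : Par, ‖∫ x, cexp (I * ((p.t * PS a x : ℝ) : ℂ)) * (φ x : ℂ)‖ₑ ≤
      ENNReal.ofReal C * ∫⁻ x in PBox n δ,
        ENNReal.ofReal (((1 + p.t * MB B (xh B j κ δ p x))⁻¹) ^ N) := by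
  obtain ⟨g, hg, hgc, hg1, hg2, hg01⟩ : ∃ g : ℝ → ℝ, ContDiff ℝ (⊤ : ℕ∞) g ∧
      HasCompactSupport g ∧ (∀ u, |u| ≤ 1 → g u = 1) ∧ (∀ u, 2 ≤ |u| → g u = 0) ∧
      ∀ u, 0 ≤ g u ∧ g u ≤ 1 := by
    let g : ContDiffBump (0 : ℝ) := ⟨1, 2, one_pos, by norm_num⟩
    refine ⟨g, g.contDiff, g.hasCompactSupport, fun u hu => g.one_of_mem_closedBall ?_,
      fun u hu => g.zero_of_le_dist ?_, fun u => ⟨g.nonneg, g.le_one⟩⟩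
    · simpa [g] using hu
    · simpa [g] using hu
  -- the amplitude cut off away from the hyperplanes `x_l = 0`, `l ≠ j`
  set ψ : Par → (Fin n → ℝ) → ℝ := fun p x =>
    φ x * ∏ l ∈ Finset.univ.erase j, (1 - g (x l / p.eps)) with hψ
  set K : Par → Set (Fin n → ℝ) := fun p =>
    tsupport φ ∩ {x | ∀ l, l ≠ j → p.eps ≤ |x l|} with hK
  have hKc : ∀ p, IsCompact (K p) := fun p => by
    refine hφc.isCompact.inter_right ?_
    have : {x : Fin n → ℝ | ∀ l, l ≠ j → p.eps ≤ |x l|} = ⋂ l, {x | l ≠ j → p.eps ≤ |x l|} := by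
      ext; simp
    rw [this]
    refine isClosed_iInter fun l => ?_
    by_cases h : l = j
    · simp [h]
    · simpa [h] using isClosed_le continuous_const (continuous_abs.comp (continuous_apply l))
  have hKΩ : ∀ p, K p ⊆ OmF δ j p := fun p x hx l =>
    ⟨hφs hx.1 l, fun hl h0 => by
      have := hx.2 l hl
      rw [h0, abs_zero] at this
      exact absurd p.heps (not_lt.2 this)⟩
  have hψ0 : ∀ p, ∀ x, x ∉ K p → ψ p x = 0 := by
    intro p x hx
    by_cases h1 : x ∈ tsupport φ
    · have : ¬ ∀ l, l ≠ j → p.eps ≤ |x l| := fun h => hx ⟨h1, h⟩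
      push Not at this
      obtain ⟨l, hl, hlt⟩ := this
      have h2 : g (x l / p.eps) = 1 := hg1 _ (by
        rw [abs_div, abs_of_pos p.heps, div_le_one p.heps]; exact hlt.le)
      simp only [hψ]
      rw [Finset.prod_eq_zero (Finset.mem_erase.2 ⟨hl, Finset.mem_univ l⟩) (by rw [h2, sub_self]),
        mul_zero]
    · simp [hψ, image_eq_zero_of_notMem_tsupport h1]
  have hψs : ∀ m, Symb (OmF δ j) (fld B j κ δ) m (fun _ _ => 1) ψ := by
    intro m
    have h1 : ∀ p : Par, ∀ x ∈ OmF δ j p, (0 : ℝ) ≤ 1 := fun _ _ _ => zero_le_one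
    have hone : Symb (OmF δ j) (fld B j κ δ) m (fun _ _ => 1) (fun _ _ => (1 : ℝ)) :=
      Symb.const 1 ⟨1, zero_le_one, fun _ _ _ => by simp⟩
    have hprod : ∀ s : Finset (Fin n), j ∉ s → Symb (OmF δ j) (fld B j κ δ) m (fun _ _ => 1)
        (fun p x => ∏ l ∈ s, (1 - g (x l / p.eps))) := by
      intro s
      induction s using Finset.induction_on with
      | empty => intro _; simpa using hone
      | insert l s hl ih =>
        intro hj
        have hlj : l ≠ j := fun h => hj (by simp [h])
        have hgl := hone.add isOpen_OmF
          ((symb_cutoff (B := B) (κ := κ) (δ := δ) m hlj hg hgc).neg isOpen_OmF)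
        refine ((hgl.mul isOpen_OmF h1 (ih fun h => hj (Finset.mem_insert_of_mem h))).mono_w'
          fun p x _ => by simp).congr isOpen_OmF fun p x _ => ?_
        rw [Finset.prod_insert hl, sub_eq_add_neg]
    exact ((symb_smooth hκ hδ hB1 m hφ hφc).mul isOpen_OmF h1
      (hprod _ (Finset.notMem_erase j _))).mono_w' fun p x _ => by simp
  have hψs' : ∀ m, Symb (OmF δ j) (fld B j κ δ) m (fun _ _ => 1) (fun p x => (ψ p x : ℂ)) :=
    fun m => (hψs m).clm Complex.ofRealCLM isOpen_OmF
  obtain ⟨C, hC, hmain⟩ := nonstationary (Ω := OmF δ j) (K := K) (ρ := fld B j κ δ)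
    isOpen_OmF hKc hKΩ (fun l p x hx => diff_fld hκ hδ hB1 l p hx) (symb_div hκ hδ hB1)
    (Φ := fun p x => p.t * PS a x) (W := fun p x => p.t * MB B (xh B j κ δ p x))
    (fun p x _ => mul_nonneg p.ht.le (MB_nonneg B _))
    (fun p x hx => (vf_phase (B := B) (κ := κ) hR hs hδR j p hx).1)
    (fun m l => (symb_phase hB hR hs hκ hδ hδR hB1 (m + 1)).2 l) hc
    (fun p x hx => by
      have := mul_le_mul_of_nonneg_left (hlow p x hx) (sq_nonneg p.t)
      rw [Finset.mul_sum] at this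
      calc _ = p.t ^ 2 * (c * MB B (xh B j κ δ p x) ^ 2) := by ring
        _ ≤ _ := this
        _ = _ := Finset.sum_congr rfl fun l _ => by
            rw [(vf_phase (B := B) (κ := κ) hR hs hδR l p hx).2]; ring) N
    (fun _ _ => 1) (fun p x => (ψ p x : ℂ)) (fun _ _ _ => zero_le_one) hψs'
    (fun p x hx => by simp [hψ0 p x hx])
  refine ⟨C, hC, fun p => ?_⟩
  set J := ∫⁻ x in PBox n δ, ENNReal.ofReal (((1 + p.t * MB B (xh B j κ δ p x))⁻¹) ^ N) with hJ
  have hnull : (Om δ j : Set (Fin n → ℝ)) ≤ᵐ[volume] PBox n δ := by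
    filter_upwards [ae_coord_ne j] with x hx h i
    by_cases hi : i = j
    · exact ⟨by rw [hi]; exact hx, (h i).1⟩
    · exact ⟨(h i).2 hi, (h i).1⟩
  let pk : ℕ → Par := fun k => ⟨p.t, p.lam, 1 / (k + 1), p.ht, p.hlam, by positivity⟩
  have hk : ∀ k, ‖∫ x, cexp (I * ((p.t * PS a x : ℝ) : ℂ)) * (ψ (pk k) x : ℂ)‖ₑ ≤
      ENNReal.ofReal C * J := by
    intro k
    refine (hmain (pk k)).trans ?_
    gcongr
    refine (lintegral_mono_set (hKΩ (pk k))).trans ((lintegral_mono_set' hnull).trans (le_of_eq ?_))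
    simp only [one_mul]
    rfl
  -- `1 / (k + 1)` is the width of the removed neighbourhoods, which shrink to null sets
  have hcφ : Continuous φ := hφ.continuous
  have hcont : ContinuousOn (PS a) (Cube n δ) := fun x hx =>
    (hasFDerivAt_PS hR hs fun i => (hx i).trans_le (by linarith)).1.continuousAt.continuousWithinAt
  have hψle : ∀ k x, |ψ (pk k) x| ≤ |φ x| := by
    intro k x
    simp only [hψ]
    rw [abs_mul]
    refine mul_le_of_le_one_right (abs_nonneg _) ?_
    rw [Finset.abs_prod]
    refine Finset.prod_le_one (fun _ _ => abs_nonneg _) fun l _ => ?_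
    have := hg01 (x l / (pk k).eps)
    rw [abs_le]; constructor <;> linarith [this.1, this.2]
  have hmeas : ∀ k, AEStronglyMeasurable
      (fun x => cexp (I * ((p.t * PS a x : ℝ) : ℂ)) * (ψ (pk k) x : ℂ)) volume := by
    intro k
    have h1 : AEStronglyMeasurable (fun x => cexp (I * ((p.t * PS a x : ℝ) : ℂ)) * (ψ (pk k) x : ℂ))
        (volume.restrict (Cube n δ)) := by
      refine ContinuousOn.aestronglyMeasurable ?_ (isOpen_Cube δ).measurableSet
      refine ContinuousOn.mul ?_ ?_
      · refine Complex.continuous_exp.comp_continuousOn (continuousOn_const.mul ?_)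
        exact Complex.continuous_ofReal.comp_continuousOn (continuousOn_const.mul hcont)
      · refine (Complex.continuous_ofReal.comp (hcφ.mul ?_)).continuousOn
        refine continuous_finsetProd _ fun l _ => ?_
        exact continuous_const.sub (hg.continuous.comp (by fun_prop))
    have h2 := (aestronglyMeasurable_indicator_iff (isOpen_Cube δ).measurableSet).2 h1
    refine h2.congr (Filter.Eventually.of_forall fun x => ?_)
    by_cases hx : x ∈ Cube n δ
    · simp [hx]
    · have : φ x = 0 := image_eq_zero_of_notMem_tsupport fun h => hx (hφs h)
      simp [hx, hψ, this]
  have hlim := tendsto_integral_of_dominated_convergence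
    (F := fun k x => cexp (I * ((p.t * PS a x : ℝ) : ℂ)) * (ψ (pk k) x : ℂ))
    (f := fun x => cexp (I * ((p.t * PS a x : ℝ) : ℂ)) * (φ x : ℂ)) (μ := volume)
    (fun x => |φ x|) hmeas (hcφ.integrable_of_hasCompactSupport hφc).abs
    (fun k => Filter.Eventually.of_forall fun x => by
      rw [norm_mul, norm_cexp_I, one_mul, Complex.norm_real, Real.norm_eq_abs]
      exact hψle k x)
    (by
      filter_upwards [ae_coords_ne] with x hx
      refine Tendsto.const_mul _ ((Complex.continuous_ofReal.tendsto _).comp ?_)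
      refine tendsto_const_nhds.congr' ?_
      have h1 : ∀ l, ∀ᶠ k : ℕ in atTop, g (x l / (pk k).eps) = 0 := by
        intro l
        obtain ⟨k₀, hk₀⟩ := exists_nat_ge (2 / |x l|)
        have hxl := abs_pos.2 (hx l)
        filter_upwards [eventually_ge_atTop k₀] with k hk
        refine hg2 _ ?_
        have : (pk k).eps = 1 / (k + 1) := rfl
        rw [this, abs_div, abs_of_pos (by positivity : (0 : ℝ) < 1 / (k + 1)), div_div_eq_mul_div,
          div_one]
        have h2 : (k₀ : ℝ) ≤ k := by exact_mod_cast hk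
        rw [div_le_iff₀ hxl] at hk₀
        nlinarith
      filter_upwards [eventually_all.2 h1] with k hk
      simp [hψ, hk])
  exact le_of_tendsto' (hlim.enorm) hk

end

/-! ### Volume of the region controlled by the frame -/

section
variable {n : ℕ} {B : Finset (Fin n → ℕ)} {j : Fin n} {κ δ : ℝ}

/-- Dilating one coordinate scales volumes. -/
lemma volume_scale (T : Set (Fin n → ℝ)) {s : ℝ} (hs : 0 < s) :
    volume {x : Fin n → ℝ | Function.update x j (s * x j) ∈ T} =
      ENNReal.ofReal s⁻¹ * volume T := by
  set f := Matrix.toLin' (Matrix.diagonal (Function.update (1 : Fin n → ℝ) j s)) with hf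
  have hdet : LinearMap.det f = s := by
    rw [hf, LinearMap.det_toLin', Matrix.det_diagonal, Finset.prod_update_of_mem (Finset.mem_univ j)]
    simp
  have h := Measure.addHaar_preimage_linearMap (volume : Measure (Fin n → ℝ)) (f := f)
    (by rw [hdet]; exact hs.ne') T
  rw [hdet, abs_of_pos (inv_pos.2 hs)] at h
  rw [← h]
  congr 1
  ext x
  have : f x = Function.update x j (s * x j) := by
    ext i
    rw [hf, Matrix.toLin'_apply, Matrix.mulVec_diagonal]
    by_cases hi : i = j
    · subst hi; simp
    · simp [hi]
  simp [this]

lemma abs_mono_update (β : Fin n → ℕ) (x : Fin n → ℝ) (u : ℝ) :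
    |mono β (Function.update x j u)| = |u| ^ β j * mo j β x := by
  rw [abs_mono_eq j, Function.update_self,
    mo_congr (y := x) β fun l hl => Function.update_of_ne hl _ _]

/-- Where `t` times the linear terms of `MB B` stays below `lam` although `rad` is much smaller
than `Rt`, dilating `x_j` by a power of two leads to a point of `Geo.BadSet`. -/
lemma exists_dilate (hκ : 0 < κ) (hδ : 0 < δ) (hδ1 : δ ≤ 1 / 2) (hB1 : ∃ β ∈ B, β j = 1)
    {lam : ℝ} (hlam : 0 < lam) :
    ∃ c : ℝ, 0 < c ∧ ∀ p : Par, p.lam = lam → ∀ x ∈ PBox n δ, p.t * MB B x ≤ lam →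
      (δ ≤ Rt B j p x ∨ ∃ β ∈ B, 2 ≤ β j ∧ κ * lam ≤ p.t * (Rt B j p x ^ β j * mo j β x)) →
      ∃ k : ℕ, Function.update x j (2 ^ k * x j) ∈ Geo.BadSet B j (4 * lam) c p.t := by
  set D := B.sup fun β => β j with hD
  have hDle : ∀ β ∈ B, β j ≤ D := fun β hβ => Finset.le_sup (f := fun β => β j) hβ
  set b : ℝ := (B.card : ℝ) with hb
  have hb0 : 0 < b := by
    obtain ⟨β, hβ, -⟩ := hB1
    exact Nat.cast_pos.2 (Finset.card_pos.2 ⟨β, hβ⟩)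
  set c := min (δ / 2) (min (lam / (b * 2 ^ D)) (κ * lam / 2 ^ D)) with hc
  have hc1 : c ≤ δ / 2 := min_le_left _ _
  have hc2 : c ≤ lam / (b * 2 ^ D) := (min_le_right _ _).trans (min_le_left _ _)
  have hc3 : c ≤ κ * lam / 2 ^ D := (min_le_right _ _).trans (min_le_right _ _)
  refine ⟨c, by positivity, ?_⟩
  rintro p rfl x hx hM hbad
  have ht := p.ht
  have hx' : ∀ l, l ≠ j → x l ≠ 0 := fun l _ => (hx l).1
  have hxj : 0 < |x j| := abs_pos.2 (hx j).1
  have hR := Rt_pos hB1 p hx'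
  have hRM := Rt_mul hB1 p hx'
  have hM1 := M1_pos hB1 hx'
  set r := Rt B j p x with hr
  have hlin : ∀ u : ℝ, ∑ β ∈ B with β j = 1, |u| ^ β j * mo j β x = |u| * M1 B j x := by
    intro u
    rw [M1, Finset.mul_sum]
    refine Finset.sum_congr rfl fun β hβ => ?_
    rw [(Finset.mem_filter.1 hβ).2, pow_one]
  have hMeq : ∀ u : ℝ, MB B (Function.update x j u) = ∑ β ∈ B, |u| ^ β j * mo j β x := fun u =>
    Finset.sum_congr rfl fun β _ => abs_mono_update β x u
  have hxR : |x j| ≤ r := by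
    have h1 : |x j| * M1 B j x ≤ MB B x := by
      rw [← hlin, ← Function.update_eq_self j x, hMeq, Function.update_eq_self]
      exact Finset.sum_le_sum_of_subset_of_nonneg (Finset.filter_subset _ _) fun β _ _ => by
        have := mo_nonneg (j := j) β x
        positivity
    have h2 : p.t * (|x j| * M1 B j x) ≤ p.t * (r * M1 B j x) := by
      rw [hRM]; exact (mul_le_mul_of_nonneg_left h1 ht.le).trans hM
    exact le_of_mul_le_mul_right (le_of_mul_le_mul_left h2 ht) hM1
  -- the last dilation which neither exceeds `min Rt δ` nor makes `t MB B` exceed `4 lam`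
  let P : ℕ → Prop := fun k => 2 ^ k * |x j| ≤ min r δ ∧
    p.t * MB B (Function.update x j (2 ^ k * x j)) ≤ 4 * p.lam
  have hP0 : P 0 := by
    refine ⟨?_, ?_⟩
    · simpa using ⟨hxR, (hx j).2.le⟩
    · simp only [pow_zero, one_mul, Function.update_eq_self]
      linarith [p.hlam]
  obtain ⟨k, hk, hk1⟩ : ∃ k, P k ∧ ¬ P (k + 1) := by
    by_contra hcon
    push Not at hcon
    have hall : ∀ k, P k := fun k => Nat.rec hP0 (fun k ih => hcon k ih) k
    obtain ⟨k, hk⟩ := pow_unbounded_of_one_lt (δ / |x j|) (one_lt_two (α := ℝ))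
    rw [div_lt_iff₀ hxj] at hk
    linarith [(hall k).1.trans (min_le_right _ _)]
  have habs : ∀ k : ℕ, |2 ^ k * x j| = 2 ^ k * |x j| := fun k => by
    rw [abs_mul, abs_of_pos (by positivity)]
  have hpow : ∀ β ∈ B, ∀ u v : ℝ, 0 ≤ u → 0 ≤ v → u ≤ 2 * v → u ^ β j ≤ 2 ^ D * v ^ β j := by
    intro β hβ u v hu hv h
    calc u ^ β j ≤ (2 * v) ^ β j := by gcongr
      _ = 2 ^ β j * v ^ β j := mul_pow _ _ _
      _ ≤ _ := by
          gcongr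
          · norm_num
          · exact hDle β hβ
  refine ⟨k, fun i => ?_, hk.2, ?_⟩
  · by_cases hi : i = j
    · subst hi
      rw [Function.update_self, habs]
      refine ⟨mul_ne_zero (by positivity) (hx i).1, ?_⟩
      linarith [hk.1.trans (min_le_right _ _)]
    · rw [Function.update_of_ne hi]
      exact ⟨(hx i).1, by linarith [(hx i).2]⟩
  rw [Function.update_self, habs]
  by_cases h1 : 2 ^ (k + 1) * |x j| ≤ min r δ
  · -- here a term of degree at least two in `x_j` has become large
    have h2 : 4 * p.lam < p.t * MB B (Function.update x j (2 ^ (k + 1) * x j)) := by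
      by_contra h; exact hk1 ⟨h1, not_lt.1 h⟩
    right
    by_contra hno
    push Not at hno
    refine absurd h2 (not_lt.2 ?_)
    have hk' := h1.trans (min_le_left _ _)
    set u := 2 ^ (k + 1) * x j with hu
    have hau : |u| = 2 ^ (k + 1) * |x j| := habs _
    have huk : |u| ≤ 2 * |2 ^ k * x j| := by rw [hau, habs, pow_succ]; linarith
    have hterm : ∀ β ∈ B, p.t * (|u| ^ β j * mo j β x) ≤
        p.t * |mono β x| + p.t * (if β j = 1 then |u| ^ β j * mo j β x else 0) + p.lam / b := by
      intro β hβ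
      have hmo := mo_nonneg (j := j) β x
      have a1 : 0 ≤ p.t * |mono β x| := by positivity
      have a3 : 0 ≤ p.lam / b := div_nonneg p.hlam.le hb0.le
      by_cases e1 : β j = 1
      · rw [if_pos e1]; linarith
      rw [if_neg e1]
      rcases Nat.lt_or_ge (β j) 2 with e2 | e2
      · have e0 : β j = 0 := by omega
        rw [abs_mono_eq j, e0, pow_zero, pow_zero]
        linarith
      · have h3 := hno β hβ e2
        rw [abs_mono_update] at h3
        have h4 := hpow β hβ _ _ (abs_nonneg u) (abs_nonneg _) huk
        have h5 : p.t * (|u| ^ β j * mo j β x) ≤ p.lam / b := by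
          calc _ ≤ p.t * (2 ^ D * |2 ^ k * x j| ^ β j * mo j β x) := by gcongr
            _ = 2 ^ D * (p.t * (|2 ^ k * x j| ^ β j * mo j β x)) := by ring
            _ ≤ 2 ^ D * (p.lam / (b * 2 ^ D)) := by gcongr; exact h3.le.trans hc2
            _ = _ := by field_simp
        linarith
    rw [hMeq, Finset.mul_sum]
    refine (Finset.sum_le_sum hterm).trans ?_
    rw [Finset.sum_add_distrib, Finset.sum_add_distrib, ← Finset.mul_sum, ← Finset.mul_sum,
      ← Finset.sum_filter, hlin, Finset.sum_const, nsmul_eq_mul, ← hb, mul_div_cancel₀ _ hb0.ne']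
    have h6 : p.t * (|u| * M1 B j x) ≤ p.lam := by
      rw [← hRM, hau]; gcongr
    have h7 : p.t * ∑ β ∈ B, |mono β x| ≤ p.lam := hM
    linarith [p.hlam]
  · push Not at h1
    have hhalf : min r δ / 2 ≤ 2 ^ k * |x j| := by
      rw [pow_succ] at h1; linarith
    by_cases h2 : δ ≤ r
    · left
      rw [min_eq_right h2] at hhalf
      linarith
    · obtain ⟨β, hβ, hβ2, hβk⟩ := hbad.resolve_left h2
      right
      refine ⟨β, hβ, hβ2, hc3.trans ?_⟩
      push Not at h2
      rw [min_eq_left h2.le] at hhalf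
      have hmo := mo_nonneg (j := j) β x
      rw [abs_mono_update, habs, div_le_iff₀ (by positivity)]
      have := hpow β hβ r (2 ^ k * |x j|) hR.le (by positivity) (by linarith)
      calc _ ≤ p.t * (r ^ β j * mo j β x) := hβk
        _ ≤ p.t * (2 ^ D * (2 ^ k * |x j|) ^ β j * mo j β x) := by gcongr
        _ = _ := by ring

end

section
variable {n ρ : ℕ} {B : Finset (Fin n → ℕ)} {j : Fin n} {κ δ t₀ : ℝ}
  {V : Submodule ℝ (Fin n → ℝ)} {u₀ : Fin n → ℝ}

/-- Either `t MB B (xh x)` is at least `lam / (|B| + 2)`, or the denominator of `rad` is larger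
than `|B| + 2`, so that one of its terms exceeds `1` as in the hypothesis of `exists_dilate`. -/
lemma xh_dichotomy (hκ : 0 < κ) (hδ : 0 < δ) (hB1 : ∃ β ∈ B, β j = 1) (p : Par)
    {x : Fin n → ℝ} (hx : x ∈ PBox n δ) :
    p.lam / (B.card + 2) ≤ p.t * MB B (xh B j κ δ p x) ∨
      (δ ≤ Rt B j p x ∨ ∃ β ∈ B, 2 ≤ β j ∧ κ * p.lam ≤ p.t * (Rt B j p x ^ β j * mo j β x)) := by
  have hx' : ∀ l, l ≠ j → x l ≠ 0 := fun l _ => (hx l).1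
  obtain ⟨q, hq1, hrad, -, -, hq⟩ := rad_spec hκ hδ hB1 p hx'
  have hR := Rt_pos hB1 p hx'
  have hlam := p.hlam
  have ht := p.ht
  by_contra hcon
  push Not at hcon
  obtain ⟨h1, h2, h3⟩ := hcon
  have hqb : q ≤ B.card + 2 := by
    have hs : ∑ β ∈ B with 2 ≤ β j, Rt B j p x ^ β j * mo j β x * (p.t * (κ * p.lam)⁻¹) ≤
        B.card := by
      refine (Finset.sum_le_card_nsmul _ _ 1 fun β hβ => ?_).trans ?_
      · obtain ⟨hβ, hβ2⟩ := Finset.mem_filter.1 hβ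
        have := h3 β hβ hβ2
        rw [← mul_assoc, ← div_eq_mul_inv, div_le_one (by positivity)]
        linarith
      · rw [nsmul_eq_mul, mul_one]
        exact Nat.cast_le.2 (Finset.card_filter_le _ _)
    have hs' : Rt B j p x * δ⁻¹ ≤ 1 := by
      rw [← div_eq_mul_inv, div_le_one hδ]; exact h2.le
    linarith
  refine absurd h1 (not_lt.2 ?_)
  have hM1 := M1_pos hB1 hx'
  have hlinle : rr B j κ δ p x * M1 B j x ≤ MB B (xh B j κ δ p x) := by
    rw [← sum_linear_xh]
    exact Finset.sum_le_sum_of_subset_of_nonneg (Finset.filter_subset _ _)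
      fun β _ _ => abs_nonneg _
  calc p.lam / (B.card + 2) ≤ p.lam / q := by gcongr
    _ = p.t * (rad B j κ δ p x * M1 B j x) := by
        rw [hrad, ← Rt_mul hB1 p hx']; field_simp
    _ ≤ p.t * (rr B j κ δ p x * M1 B j x) := by gcongr; exact rad_le_rr p x
    _ ≤ _ := by gcongr

lemma measurable_MBpow (t : ℝ) (N : ℕ) :
    Measurable fun x : Fin n → ℝ => ENNReal.ofReal (((1 + t * MB B x)⁻¹) ^ N) := by
  have := (continuous_MB B).measurable
  fun_prop

/-- The integral which bounds the oscillating integral is, up to a factor tending to zero as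
`lam → ∞`, of the order `t^(-1/t₀) (log t)^(ρ-1)`, with an error which is smaller by a
logarithm. -/
lemma volume_frame (G : Geo n ρ j t₀ B V u₀) (hκ : 0 < κ) (hδ : 0 < δ) (hδ1 : δ ≤ 1 / 2)
    (hB1 : ∃ β ∈ B, β j = 1) {N : ℕ} (hN : 2 / t₀ ≤ N) :
    ∃ C₀ : ℝ, 0 ≤ C₀ ∧ ∀ lam : ℝ, 0 < lam → ∃ C₁ : ℝ, 0 ≤ C₁ ∧ ∀ p : Par, p.lam = lam →
      Real.exp 1 ≤ p.t →
      ∫⁻ x in PBox n δ, ENNReal.ofReal (((1 + p.t * MB B (xh B j κ δ p x))⁻¹) ^ (N + 1)) ≤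
        ENNReal.ofReal (C₀ * ((1 + lam / (B.card + 2))⁻¹ + (1 + lam)⁻¹) *
          (p.t ^ (-1 / t₀) * Real.log p.t ^ (ρ - 1)) +
          C₁ * (p.t ^ (-1 / t₀) * (Real.log p.t ^ (ρ - 1) / Real.log p.t))) := by
  obtain ⟨C₀, hC₀, hmain⟩ := G.volume_main hN
  refine ⟨C₀, hC₀, fun lam hlam => ?_⟩
  obtain ⟨c, hc, hdil⟩ := exists_dilate hκ hδ hδ1 hB1 hlam
  obtain ⟨C, hC, hbad⟩ := G.volume_bad (A := 4 * lam) (c := c) (by positivity) hc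
  refine ⟨2 * C, by positivity, ?_⟩
  rintro p rfl hpt
  have ht := p.ht
  have hlog : 0 < Real.log p.t := Real.log_pos (by
    have := Real.add_one_lt_exp (x := 1) one_ne_zero
    linarith)
  set W : Set (Fin n → ℝ) := ⋃ k : ℕ,
    {x | Function.update x j (2 ^ k * x j) ∈ Geo.BadSet B j (4 * p.lam) c p.t} with hW
  set K : ℝ := (1 + p.lam / (B.card + 2))⁻¹ + (1 + p.lam)⁻¹ with hK
  have hK0 : 0 ≤ K := by positivity
  have hWvol : volume W ≤ ENNReal.ofReal
      (2 * C * (p.t ^ (-1 / t₀) * (Real.log p.t ^ (ρ - 1) / Real.log p.t))) := by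
    calc volume W ≤ ∑' k : ℕ, volume {x : Fin n → ℝ |
          Function.update x j (2 ^ k * x j) ∈ Geo.BadSet B j (4 * p.lam) c p.t} :=
          measure_iUnion_le _
      _ = ∑' k : ℕ, (2⁻¹ : ENNReal) ^ k * volume (Geo.BadSet B j (4 * p.lam) c p.t) := by
          refine tsum_congr fun k => ?_
          rw [volume_scale _ (by positivity), ← inv_pow, ENNReal.ofReal_pow (by norm_num),
            ENNReal.ofReal_inv_of_pos (by norm_num)]
          norm_num
      _ = 2 * volume (Geo.BadSet B j (4 * p.lam) c p.t) := by
          rw [ENNReal.tsum_mul_right, ENNReal.tsum_geometric, ENNReal.one_sub_inv_two, inv_inv]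
      _ ≤ 2 * ENNReal.ofReal _ := by gcongr; exact hbad p.t hpt
      _ = _ := by
          rw [mul_assoc 2 C, ENNReal.ofReal_mul (p := 2) (by norm_num)]
          norm_num
  have hpoint : ∀ x ∈ PBox n δ,
      ENNReal.ofReal (((1 + p.t * MB B (xh B j κ δ p x))⁻¹) ^ (N + 1)) ≤
        ENNReal.ofReal K * ENNReal.ofReal (((1 + p.t * MB B x)⁻¹) ^ N) +
          W.indicator (fun _ => 1) x := by
    intro x hx
    have hM := MB_nonneg B x
    have hMx := M_le_xh (B := B) (j := j) (κ := κ) (δ := δ) p x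
    have hMh : 0 ≤ MB B (xh B j κ δ p x) := hM.trans hMx
    have gain : ∀ g : ℝ, 0 ≤ g → g ≤ p.t * MB B (xh B j κ δ p x) → (1 + g)⁻¹ ≤ K →
        ENNReal.ofReal (((1 + p.t * MB B (xh B j κ δ p x))⁻¹) ^ (N + 1)) ≤
        ENNReal.ofReal K * ENNReal.ofReal (((1 + p.t * MB B x)⁻¹) ^ N) := by
      intro g hg hgM hgK
      rw [← ENNReal.ofReal_mul hK0, pow_succ, mul_comm K]
      refine ENNReal.ofReal_le_ofReal ?_
      refine mul_le_mul (pow_le_pow_left₀ (by positivity) ?_ _) (le_trans ?_ hgK)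
        (by positivity) (by positivity)
      · gcongr
      · gcongr
    have hpl := p.hlam
    rcases xh_dichotomy hκ hδ hB1 p hx with h | h
    · exact (gain _ (by positivity) h (le_add_of_nonneg_right (by positivity))).trans le_self_add
    · by_cases hle : p.t * MB B x ≤ p.lam
      · have hxW : x ∈ W := Set.mem_iUnion.2 (hdil p rfl x hx hle h)
        rw [Set.indicator_of_mem hxW]
        refine le_trans ?_ le_add_self
        rw [ENNReal.ofReal_le_one]
        refine pow_le_one₀ (by positivity) (inv_le_one_of_one_le₀ ?_)
        linarith [mul_nonneg ht.le hMh]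
      · push Not at hle
        exact (gain p.lam hpl.le (hle.le.trans (by gcongr))
          (le_add_of_nonneg_left (by positivity))).trans le_self_add
  have hsub : PBox n δ ⊆ PBox n 1 := fun x hx l => ⟨(hx l).1, by linarith [(hx l).2]⟩
  have hS : 0 ≤ p.t ^ (-1 / t₀) * Real.log p.t ^ (ρ - 1) := by positivity
  calc _ ≤ ∫⁻ x in PBox n δ, (ENNReal.ofReal K * ENNReal.ofReal (((1 + p.t * MB B x)⁻¹) ^ N) +
          W.indicator (fun _ => 1) x) := setLIntegral_mono' (isOpen_PBox δ).measurableSet hpoint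
    _ = ENNReal.ofReal K * (∫⁻ x in PBox n δ, ENNReal.ofReal (((1 + p.t * MB B x)⁻¹) ^ N)) +
          ∫⁻ x in PBox n δ, W.indicator (fun _ => 1) x := by
        rw [lintegral_add_left ((measurable_MBpow p.t N).const_mul _),
          lintegral_const_mul _ (measurable_MBpow p.t N)]
    _ ≤ ENNReal.ofReal K * ENNReal.ofReal (C₀ * (p.t ^ (-1 / t₀) * Real.log p.t ^ (ρ - 1))) +
          volume W := by
        gcongr
        · exact (lintegral_mono_set hsub).trans (hmain p.t hpt)
        · refine (setLIntegral_le_lintegral _ _).trans ?_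
          simpa using lintegral_indicator_const_le W (1 : ENNReal)
    _ ≤ ENNReal.ofReal K * ENNReal.ofReal (C₀ * (p.t ^ (-1 / t₀) * Real.log p.t ^ (ρ - 1))) +
          ENNReal.ofReal
            (2 * C * (p.t ^ (-1 / t₀) * (Real.log p.t ^ (ρ - 1) / Real.log p.t))) := by gcongr
    _ = _ := by
        rw [← ENNReal.ofReal_mul hK0, ← ENNReal.ofReal_add (by positivity) (by positivity)]
        congr 2
        ring

end

open Asymptotics in
/-- If `τ₀` is unstable, then the oscillating integral is
`o(t^{s₀} (log t)^{ρ-1})` as `t → +∞`, i.e. `μ(φ) = 0`. -/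
theorem real_instability_kills_leading_term
    {n ρ : ℕ} (hn : 1 ≤ n)
    (f : (Fin n → ℝ) → ℝ) (a : (Fin n → ℕ) → ℝ)
    (hfa : ∀ᶠ x in 𝓝 (0 : Fin n → ℝ), HasSum (fun α => a α * ∏ i, x i ^ α i) (f x))
    (hf0 : f 0 = 0) (hcrit : fderiv ℝ f 0 = 0)
    (hnc : ∃ α : Fin n → ℕ, α ≠ 0 ∧ a α ≠ 0)
    (Γ : Set (Fin n → ℝ)) (hΓ : Γ = newtonPolyhedron {α | a α ≠ 0})
    (hnd : NonDegenerateR a Γ)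
    (t₀ s₀ : ℝ) (ht₀pos : 0 < t₀)
    (ht₀mem : (fun _ => t₀) ∈ Γ)
    (ht₀min : ∀ t : ℝ, 0 < t → (fun _ => t) ∈ Γ → t₀ ≤ t)
    (hs₀ : s₀ = -1 / t₀)
    (τ₀ : Set (Fin n → ℝ)) (hτface : IsFaceOf Γ τ₀)
    (hτmem : (fun _ => t₀) ∈ τ₀)
    (hτmin : ∀ τ : Set (Fin n → ℝ), IsFaceOf Γ τ → (fun _ => t₀) ∈ τ → τ₀ ⊆ τ)
    (hρ : ρ = n - faceDim τ₀)
    (j : Fin n)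
    (hunst : (∀ y ∈ τ₀, 0 ≤ y j ∧ y j ≤ 1) ∧ (¬ ∀ y ∈ τ₀, y j = 0) ∧
      ∀ γ : Set (Fin n → ℝ), IsFaceOf Γ γ → IsCompact γ → (∀ y ∈ γ, y j = 1) →
        ∀ x : Fin n → ℝ, (∀ i, x i ≠ 0) → facePoly a γ x ≠ 0) :
    ∃ U : Set (Fin n → ℝ), IsOpen U ∧ (0 : Fin n → ℝ) ∈ U ∧
      ∀ φ : (Fin n → ℝ) → ℝ, ContDiff ℝ (⊤ : ℕ∞) φ → HasCompactSupport φ → tsupport φ ⊆ U →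
        (fun t : ℝ => ∫ x : Fin n → ℝ, Complex.exp (Complex.I * (t : ℂ) * (f x : ℂ)) * (φ x : ℂ))
          =o[atTop] fun t : ℝ => t ^ s₀ * Real.log t ^ (ρ - 1) := by
  subst hΓ
  obtain ⟨B, hB1, hB2, hB3⟩ := exists_finset_minimal {α | a α ≠ 0}
  have hB : IsMinGen {α | a α ≠ 0} B := ⟨hB1, hB2, hB3⟩
  obtain ⟨u₀, G⟩ := geo_of hB ht₀pos ht₀mem τ₀ hτface hτmem hτmin hρ j hunst.1
  have hBj := G.exists_one
  have hBne : B.Nonempty := ⟨_, hBj.choose_spec.1⟩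
  -- the power series converges on a cube
  obtain ⟨ε, hε, hball⟩ := Metric.eventually_nhds_iff.1 hfa
  have hcube : ∀ x ∈ Cube n ε, HasSum (fun α => a α * ∏ i, x i ^ α i) (f x) := fun x hx =>
    hball (by
      rw [dist_zero_right, pi_norm_lt_iff hε]
      exact hx)
  have hR : 0 < ε / 2 := by positivity
  have hs : Summable fun γ => |a γ| * (ε / 2) ^ deg γ := by
    have h := (hcube (fun _ => ε / 2) fun i => by rw [abs_of_pos hR]; linarith).summable.abs
    refine h.congr fun γ => ?_
    rw [abs_mul, Finset.prod_pow_eq_pow_sum, abs_of_pos (pow_pos hR _)]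
    rfl
  have hfPS : ∀ x ∈ Cube n ε, f x = PS a x := fun x hx => (hcube x hx).tsum_eq.symm
  obtain ⟨κ, δ, c, hκ, hδ, hc, hδm, hδR, hlow⟩ :=
    combined_lower hB hBne hR hs hnd hBj hunst.2.2 (δm := min (1 / 2) ε) (by positivity)
  refine ⟨Cube n δ, isOpen_Cube δ, fun i => by simpa using hδ, fun φ hφ hφc hφs => ?_⟩
  obtain ⟨N, hN⟩ := exists_nat_ge (2 / t₀)
  obtain ⟨C, hC, hphase⟩ := phase_bound hB hR hs hBj hκ hδ hδR hc hlow hφ hφc hφs (N + 1)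
  obtain ⟨C₀, hC₀, hvol⟩ := volume_frame G hκ hδ (hδm.trans (min_le_left _ _)) hBj hN
  have hI : ∀ t : ℝ, ∫ x : Fin n → ℝ, cexp (I * (t : ℂ) * (f x : ℂ)) * (φ x : ℂ) =
      ∫ x, cexp (I * ((t * PS a x : ℝ) : ℂ)) * (φ x : ℂ) := fun t => by
    refine integral_congr_ae (Filter.Eventually.of_forall fun x => ?_)
    by_cases hx : φ x = 0
    · simp [hx]
    · have hx' : x ∈ Cube n δ := hφs (subset_tsupport _ hx)
      simp only [hfPS x fun i => (hx' i).trans_le (hδm.trans (min_le_right _ _))]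
      push_cast
      rw [mul_assoc]
  rw [Asymptotics.isLittleO_iff]
  intro η hη
  -- `lam` makes the contribution of order `t^(-1/t₀) (log t)^(ρ-1)` small
  have hlim : Tendsto (fun lam : ℝ => C * (C₀ * ((1 + lam / (B.card + 2))⁻¹ + (1 + lam)⁻¹)))
      atTop (𝓝 0) := by
    have h1 : Tendsto (fun lam : ℝ => (1 + lam / ((B.card : ℝ) + 2))⁻¹) atTop (𝓝 0) :=
      tendsto_inv_atTop_zero.comp (tendsto_atTop_add_const_left _ _
        (tendsto_id.atTop_div_const (by positivity)))
    have h2 : Tendsto (fun lam : ℝ => (1 + lam)⁻¹) atTop (𝓝 0) :=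
      tendsto_inv_atTop_zero.comp (tendsto_atTop_add_const_left _ _ tendsto_id)
    simpa using ((h1.add h2).const_mul C₀).const_mul C
  obtain ⟨lam, hlamη, hlam⟩ := ((hlim.eventually_lt_const (half_pos hη)).and
    (eventually_gt_atTop 0)).exists
  obtain ⟨C₁, hC₁, hvol⟩ := hvol lam hlam
  have hlim2 : Tendsto (fun t : ℝ => C * C₁ / Real.log t) atTop (𝓝 0) :=
    Real.tendsto_log_atTop.const_div_atTop _
  filter_upwards [hlim2.eventually_lt_const (half_pos hη), eventually_ge_atTop (Real.exp 1)]
    with t hlog ht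
  have ht0 : 0 < t := (Real.exp_pos 1).trans_le ht
  have hl0 : 0 < Real.log t := Real.log_pos (by
    have := Real.add_one_lt_exp (x := 1) one_ne_zero
    linarith)
  let p : Par := ⟨t, lam, 1, ht0, hlam, one_pos⟩
  have h1 := (hphase p).trans (mul_le_mul_right (hvol p rfl ht) _)
  rw [hI, hs₀]
  set S : ℝ := t ^ (-1 / t₀) * Real.log t ^ (ρ - 1) with hS
  have hS0 : 0 ≤ S := by positivity
  have h2 : ‖∫ x, cexp (I * ((t * PS a x : ℝ) : ℂ)) * (φ x : ℂ)‖ ≤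
      C * (C₀ * ((1 + lam / (B.card + 2))⁻¹ + (1 + lam)⁻¹) * S +
        C₁ * (t ^ (-1 / t₀) * (Real.log t ^ (ρ - 1) / Real.log t))) := by
    rw [← ENNReal.ofReal_mul hC, ← ofReal_norm, ENNReal.ofReal_le_ofReal_iff (by positivity)] at h1
    exact h1
  rw [Real.norm_of_nonneg hS0]
  calc _ ≤ _ := h2
    _ = (C * (C₀ * ((1 + lam / (B.card + 2))⁻¹ + (1 + lam)⁻¹)) + C * C₁ / Real.log t) * S := by
        rw [hS]; field_simp
    _ ≤ (η / 2 + η / 2) * S := by gcongr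
    _ = η * S := by ring
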